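/- Let n ≥ 9 be an integer and ε > 0, and set e(n) = 2/binom(n, ⌊n/2⌋), where ⌊n/2⌋ is the largest integer not exceeding n/2. Then there exists a constant C, depending only on n and ε, such that for every real H ≥ 1 the number of tuples (a_1, …, a_n) ∈ ℤ^n with |a_i| ≤ H for 1 ≤ i ≤ n such that the Galois group of the splitting field of X^n + a_1X^{n-1} + ⋯ + a_n over ℚ is isomorphic neither to S_n nor to the alternating group A_n is at most C·H^{n-1+e(n)+ε}. -/

import Mathlib

open Polynomial

namespace GaloisCount

lemma evalEval_eq_eval (F : ℤ[X][X]) (t w : ℤ) :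
    F.evalEval t w = (F.map (evalRingHom t)).eval w := by
  rw [evalEval, ← coe_evalRingHom, ← eval₂_id, hom_eval₂, eval₂_eq_eval_map]
  simp

/-- Polynomial Taylor expansion to second order in the outer variable. -/
lemma evalEval_sub_expand (F : ℤ[X][X]) (t z e : ℤ) :
    ∃ q : ℤ, F.evalEval t (z - e) = F.evalEval t z - e * (derivative F).evalEval t z + e ^ 2 * q := by
  rw [evalEval_eq_eval, evalEval_eq_eval, evalEval_eq_eval, ← derivative_map]
  obtain ⟨k, hk⟩ := (F.map (evalRingHom t)).binomExpansion z (-e)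
  refine ⟨k, ?_⟩
  rw [sub_eq_add_neg, hk]; ring

lemma dvd_evalEval_sub (F : ℤ[X][X]) {p t t0 z z0 : ℤ} (ht : p ∣ t - t0) (hz : p ∣ z - z0) :
    p ∣ F.evalEval t z - F.evalEval t0 z0 := by
  have h1 : p ∣ F.evalEval t z - F.evalEval t z0 := by
    rw [evalEval_eq_eval, evalEval_eq_eval]
    exact hz.trans (sub_dvd_eval_sub _ _ _)
  have h2 : p ∣ F.evalEval t z0 - F.evalEval t0 z0 := by
    rw [evalEval, evalEval]
    exact ht.trans (sub_dvd_eval_sub _ _ _)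
  have := dvd_add h1 h2
  simpa using this

lemma eval_evalComp (F : ℤ[X][X]) (φ : ℤ[X]) (t : ℤ) :
    (F.eval φ).eval t = F.evalEval t (φ.eval t) := by
  rw [evalEval_eq_eval, ← coe_evalRingHom, ← eval₂_id, ← coe_evalRingHom, hom_eval₂, eval₂_eq_eval_map]
  simp

/-- Hensel: integral points near a nonsingular point mod `p` lie on a polynomial graph mod `p^N`. -/
lemma hensel_graph (F : ℤ[X][X]) (p : ℕ) (hp : p.Prime) (t0 z0 : ℤ)
    (hns : ¬ (p : ℤ) ∣ (derivative F).evalEval t0 z0) (N : ℕ) :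
    ∃ φ : ℤ[X], ∀ t z : ℤ, (p : ℤ) ∣ t - t0 → (p : ℤ) ∣ z - z0 → F.evalEval t z = 0 →
      (p : ℤ) ^ (N + 1) ∣ z - φ.eval t := by
  have hpi : Prime (p : ℤ) := Nat.prime_iff_prime_int.mp hp
  have hcop : IsCoprime (p : ℤ) ((derivative F).evalEval t0 z0) :=
    (hpi.coprime_iff_not_dvd).2 hns
  obtain ⟨a, c, hac⟩ := hcop
  induction N with
  | zero =>
    refine ⟨C z0, fun t z _ hz _ => by simpa using hz⟩
  | succ N ih =>
    obtain ⟨φ, hφ⟩ := ih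
    refine ⟨φ - C c * F.eval φ, fun t z ht hz hF => ?_⟩
    have he := hφ t z ht hz hF
    obtain ⟨q, hq⟩ := evalEval_sub_expand F t z (z - φ.eval t)
    have h1 : z - (φ - C c * F.eval φ).eval t =
        (z - φ.eval t) * (1 - c * (derivative F).evalEval t z) + c * ((z - φ.eval t) ^ 2 * q) := by
      rw [eval_sub, eval_mul, eval_C, eval_evalComp]
      have : z - (z - φ.eval t) = φ.eval t := by ring
      rw [this, hF] at hq
      rw [hq]; ring
    rw [h1]
    apply dvd_add
    · rw [pow_succ]
      apply mul_dvd_mul he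
      have h3 := dvd_evalEval_sub (derivative F) ht hz
      have : 1 - c * (derivative F).evalEval t z = a * p - c *
        ((derivative F).evalEval t z - (derivative F).evalEval t0 z0) := by
        rw [← hac]; ring
      rw [this]
      exact dvd_sub (Dvd.intro_left _ rfl) (h3.mul_left _)
    · apply Dvd.dvd.mul_left
      apply Dvd.dvd.mul_right
      calc (p : ℤ) ^ (N + 1 + 1) ∣ ((p : ℤ) ^ (N + 1)) ^ 2 := by
            rw [← pow_mul]; exact pow_dvd_pow _ (by omega)
        _ ∣ _ := pow_dvd_pow_of_dvd he 2

/-- The bivariate polynomial with given coefficient table. -/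
noncomputable def tablePoly {M d : ℕ} (g : Fin M × Fin d → ℤ) : ℤ[X][X] :=
  ∑ ij : Fin M × Fin d, C (C (g ij) * X ^ (ij.1 : ℕ)) * X ^ (ij.2 : ℕ)

lemma tablePoly_evalEval {M d : ℕ} (g : Fin M × Fin d → ℤ) (t z : ℤ) :
    (tablePoly g).evalEval t z = ∑ ij : Fin M × Fin d, g ij * t ^ (ij.1 : ℕ) * z ^ (ij.2 : ℕ) := by
  simp [tablePoly, evalEval, eval_finsetSum]

lemma tablePoly_coeff_coeff {M d : ℕ} (g : Fin M × Fin d → ℤ) (i : Fin M) (j : Fin d) :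
    ((tablePoly g).coeff j).coeff i = g (i, j) := by
  simp only [tablePoly, finsetSum_coeff, coeff_C_mul, coeff_X_pow]
  rw [Finset.sum_eq_single (i, j)]
  · simp
  · rintro ⟨i', j'⟩ _ hne
    by_cases hj : (j : ℕ) = j'
    · have : (i : ℕ) ≠ i' := by
        intro hi; apply hne; ext <;> simp [hi, hj]
      simp only
      rw [if_pos hj, mul_one, coeff_C_mul_X_pow, if_neg this]
    · simp [hj]
  · simp

lemma tablePoly_natDegree_lt {M d : ℕ} (hd : 0 < d) (g : Fin M × Fin d → ℤ) :
    (tablePoly g).natDegree < d := by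
  apply lt_of_le_of_lt (natDegree_sum_le_of_forall_le (n := d - 1) _ _ ?_) (by omega)
  rintro ⟨i, j⟩ _
  exact (natDegree_C_mul_X_pow_le _ _).trans (by have := j.2; simp only; omega)

lemma tablePoly_coeff_natDegree_le {M d : ℕ} (g : Fin M × Fin d → ℤ) (k : ℕ) :
    ((tablePoly g).coeff k).natDegree ≤ M := by
  simp only [tablePoly, finsetSum_coeff, coeff_C_mul, coeff_X_pow]
  apply natDegree_sum_le_of_forall_le
  rintro ⟨i, j⟩ _
  have := i.2
  split_ifs
  · rw [mul_one]
    exact (natDegree_C_mul_X_pow_le _ _).trans (by simp only; omega)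
  · simp

/-- Auxiliary polynomial from the pigeonhole principle. -/
lemma exists_aux (F : ℤ[X][X]) (p : ℕ) (hp : p.Prime) (t0 z0 : ℤ)
    (hns : ¬ (p : ℤ) ∣ (derivative F).evalEval t0 z0) (d M : ℕ) (hd : 0 < d) (hM : 0 < M)
    (H B : ℝ) (hH : 1 ≤ H) (hB : 1 ≤ B)
    (hsize : (2 * (d * M : ℕ)) ^ 2 * H ^ (M - 1) * B ^ (d - 1) ≤ (p : ℝ) ^ (d * M - 1)) :
    ∃ G : ℤ[X][X], G ≠ 0 ∧ G.natDegree < d ∧ (∀ k, (G.coeff k).natDegree ≤ M) ∧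
      ∀ t z : ℤ, |(t : ℝ)| ≤ H → |(z : ℝ)| ≤ B → (p : ℤ) ∣ t - t0 → (p : ℤ) ∣ z - z0 →
        F.evalEval t z = 0 → G.evalEval t z = 0 := by
  classical
  set N := d * M with hN
  have hN0 : 0 < N := Nat.mul_pos hd hM
  obtain ⟨φ, hφ⟩ := hensel_graph F p hp t0 z0 hns (N - 1)
  rw [Nat.sub_add_cancel hN0] at hφ
  have hp0 : (0 : ℝ) < p := by exact_mod_cast hp.pos
  have hN0' : (0 : ℝ) < N := by exact_mod_cast hN0
  let A : Fin M × Fin d → ℝ := fun ij => (p : ℝ) ^ N / (2 * N * H ^ (ij.1 : ℕ) * B ^ (ij.2 : ℕ))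
  have hA0 : ∀ ij, 0 < A ij := fun ij => by positivity
  let Box := ∀ ij : Fin M × Fin d, Fin (⌊A ij⌋₊ + 1)
  let Tgt := ∀ k : Fin N, ZMod (p ^ (N - (k : ℕ)))
  haveI : ∀ k : Fin N, NeZero (p ^ (N - (k : ℕ))) := fun k => ⟨(pow_pos hp.pos _).ne'⟩
  let hpol : (Fin M × Fin d → ℤ) → ℤ[X] := fun g => (tablePoly g).eval φ
  let f : Box → Tgt := fun g k => (((taylor t0 (hpol fun ij => ((g ij : ℕ) : ℤ))).coeff k : ℤ) : ZMod _)
  have hcard : Fintype.card Tgt < Fintype.card Box := by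
    have h1 : Fintype.card Tgt = ∏ k : Fin N, p ^ (N - (k : ℕ)) := by
      simp [Tgt, ZMod.card]
    have h2 : Fintype.card Box = ∏ ij : Fin M × Fin d, (⌊A ij⌋₊ + 1) := by
      simp [Box]
    rw [h1, h2]
    have h3 : (∏ ij : Fin M × Fin d, A ij) < ((∏ ij : Fin M × Fin d, (⌊A ij⌋₊ + 1) : ℕ) : ℝ) := by
      push_cast
      apply Finset.prod_lt_prod_of_nonempty
      · intro i _; exact hA0 i
      · intro i _; exact Nat.lt_floor_add_one _
      · exact ⟨(⟨0, hM⟩, ⟨0, hd⟩), Finset.mem_univ _⟩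
    have h4 : ((∏ k : Fin N, p ^ (N - (k : ℕ)) : ℕ) : ℝ) ≤ ∏ ij : Fin M × Fin d, A ij := by
      -- compare squares
      have e1 : (∏ k : Fin N, p ^ (N - (k : ℕ))) ^ 2 = p ^ (N * (N + 1)) := by
        rw [Finset.prod_pow_eq_pow_sum, ← pow_mul]
        congr 1
        rw [Fin.sum_univ_eq_sum_range (fun k => N - k)]
        have := Finset.sum_range_reflect (fun k => k + 1) N
        have e : ∑ k ∈ Finset.range N, (N - k) = ∑ k ∈ Finset.range N, (k + 1) := by
          rw [← this]; apply Finset.sum_congr rfl; intro k hk; rw [Finset.mem_range] at hk; omega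
        have e' := Finset.sum_range_id_mul_two (N + 1)
        rw [Finset.sum_range_succ'] at e'
        rw [e]
        simp only [add_zero, Nat.add_sub_cancel] at e'
        rw [e', mul_comm]
      have e2 : (∏ ij : Fin M × Fin d, A ij) ^ 2 =
          (p : ℝ) ^ (N * (2 * N)) / ((2 * N) ^ 2 * H ^ (M - 1) * B ^ (d - 1)) ^ N := by
        have hprod : (∏ ij : Fin M × Fin d, A ij) =
          ((p : ℝ) ^ N) ^ N / ((2 * N) ^ N * (∏ ij : Fin M × Fin d, H ^ (ij.1 : ℕ)) *
            (∏ ij : Fin M × Fin d, B ^ (ij.2 : ℕ))) := by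
          simp only [A]
          rw [Finset.prod_div_distrib, Finset.prod_mul_distrib, Finset.prod_mul_distrib]
          simp [hN, mul_comm]
        have hHp : (∏ ij : Fin M × Fin d, H ^ (ij.1 : ℕ)) ^ 2 = (H ^ (M - 1)) ^ N := by
          rw [Fintype.prod_prod_type]
          simp only [Finset.prod_const, Finset.card_univ, Fintype.card_fin]
          rw [Finset.prod_pow, Finset.prod_pow_eq_pow_sum, ← pow_mul, ← pow_mul, ← pow_mul]
          congr 1
          rw [Fin.sum_univ_eq_sum_range (fun k => k), mul_comm d 2, ← mul_assoc,
            Finset.sum_range_id_mul_two, hN]; ring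
        have hBp : (∏ ij : Fin M × Fin d, B ^ (ij.2 : ℕ)) ^ 2 = (B ^ (d - 1)) ^ N := by
          rw [Fintype.prod_prod_type]
          simp only [Finset.prod_const, Finset.card_univ, Fintype.card_fin]
          rw [Finset.prod_pow_eq_pow_sum, ← pow_mul, ← pow_mul, ← pow_mul]
          congr 1
          rw [Fin.sum_univ_eq_sum_range (fun k => k), mul_comm M 2, ← mul_assoc,
            Finset.sum_range_id_mul_two, hN]; ring
        rw [hprod, div_pow, mul_pow, mul_pow, hHp, hBp]
        congr 1
        · rw [← pow_mul, ← pow_mul]; congr 1; ring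
        · rw [pow_right_comm (2 * (N : ℝ)) N 2, ← mul_pow, ← mul_pow]
      apply le_of_sq_le_sq _ (Finset.prod_nonneg fun i _ => (hA0 i).le)
      have e1' : (((∏ k : Fin N, p ^ (N - (k : ℕ))) : ℕ) : ℝ) ^ 2 = (p : ℝ) ^ (N * (N + 1)) := by
        exact_mod_cast e1
      rw [e1', e2, le_div_iff₀ (by positivity)]
      calc (p : ℝ) ^ (N * (N + 1)) * ((2 * N) ^ 2 * H ^ (M - 1) * B ^ (d - 1)) ^ N
          ≤ (p : ℝ) ^ (N * (N + 1)) * ((p : ℝ) ^ (N - 1)) ^ N := by gcongr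
        _ = (p : ℝ) ^ (N * (2 * N)) := by
          rw [← pow_mul, ← pow_add]; congr 1
          obtain ⟨N', hN'⟩ : ∃ N', N = N' + 1 := ⟨N - 1, by omega⟩
          rw [hN']; simp; ring
    exact_mod_cast h4.trans_lt h3
  obtain ⟨g1, g2, hne, heq⟩ := Fintype.exists_ne_map_eq_of_card_lt f hcard
  let g : Fin M × Fin d → ℤ := fun ij => ((g1 ij : ℕ) : ℤ) - ((g2 ij : ℕ) : ℤ)
  have hgb : ∀ ij, |(g ij : ℝ)| ≤ A ij := by
    intro ij
    have a1 : ((g1 ij : ℕ) : ℝ) ≤ A ij :=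
      (Nat.cast_le.2 (Nat.lt_succ_iff.1 (g1 ij).2)).trans (Nat.floor_le (hA0 ij).le)
    have a2 : ((g2 ij : ℕ) : ℝ) ≤ A ij :=
      (Nat.cast_le.2 (Nat.lt_succ_iff.1 (g2 ij).2)).trans (Nat.floor_le (hA0 ij).le)
    have b1 : (0 : ℝ) ≤ ((g1 ij : ℕ) : ℝ) := Nat.cast_nonneg _
    have b2 : (0 : ℝ) ≤ ((g2 ij : ℕ) : ℝ) := Nat.cast_nonneg _
    simp only [g]; push_cast
    rw [abs_le]; constructor <;> linarith
  have hlin : hpol g = hpol (fun ij => ((g1 ij : ℕ) : ℤ)) - hpol (fun ij => ((g2 ij : ℕ) : ℤ)) := by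
    simp only [hpol, tablePoly, g, eval_finsetSum]
    rw [← Finset.sum_sub_distrib]
    apply Finset.sum_congr rfl; intro ij _
    simp; ring
  have hco : ∀ k : Fin N, ((p ^ (N - (k : ℕ)) : ℕ) : ℤ) ∣ (taylor t0 (hpol g)).coeff k := by
    intro k
    have := congrFun heq k
    simp only [f] at this
    rw [hlin, map_sub, coeff_sub]
    rw [← ZMod.intCast_zmod_eq_zero_iff_dvd]
    push_cast
    exact sub_eq_zero.2 this
  refine ⟨tablePoly g, ?_, tablePoly_natDegree_lt hd g, tablePoly_coeff_natDegree_le g, ?_⟩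
  · intro h0
    apply hne
    funext ij
    have := tablePoly_coeff_coeff g ij.1 ij.2
    rw [h0] at this
    simp only [coeff_zero, g] at this
    apply Fin.ext
    have : ((g1 ij : ℕ) : ℤ) = ((g2 ij : ℕ) : ℤ) := by linarith
    exact_mod_cast this
  · intro t z ht hz hpt hpz hF
    have d1 : (p : ℤ) ^ N ∣ (hpol g).eval t := by
      have hdt : (hpol g).eval t = (taylor t0 (hpol g)).eval (t - t0) := by
        rw [taylor_eval]; simp
      rw [hdt, eval_eq_sum_range]
      apply Finset.dvd_sum
      intro k _
      by_cases hk : k < N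
      · have h1 := hco ⟨k, hk⟩
        have h2 : (p : ℤ) ^ k ∣ (t - t0) ^ k := pow_dvd_pow_of_dvd hpt k
        have h3 := mul_dvd_mul h1 h2
        push_cast at h3
        rw [← pow_add, Nat.sub_add_cancel hk.le] at h3
        exact h3
      · exact ((pow_dvd_pow _ (not_lt.1 hk)).trans (pow_dvd_pow_of_dvd hpt k)).mul_left _
    have d2 : (p : ℤ) ^ N ∣ (tablePoly g).evalEval t z - (hpol g).eval t := by
      simp only [hpol]
      rw [eval_evalComp, evalEval_eq_eval, evalEval_eq_eval]
      exact (hφ t z hpt hpz hF).trans (sub_dvd_eval_sub _ _ _)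
    have d3 : (p : ℤ) ^ N ∣ (tablePoly g).evalEval t z := by
      have := dvd_add d2 d1; simpa using this
    apply Int.eq_zero_of_abs_lt_dvd d3
    have : |(((tablePoly g).evalEval t z : ℤ) : ℝ)| < (p : ℝ) ^ N := by
      rw [tablePoly_evalEval]
      push_cast
      calc |∑ ij : Fin M × Fin d, (g ij : ℝ) * (t : ℝ) ^ (ij.1 : ℕ) * (z : ℝ) ^ (ij.2 : ℕ)|
          ≤ ∑ ij : Fin M × Fin d, |(g ij : ℝ) * (t : ℝ) ^ (ij.1 : ℕ) * (z : ℝ) ^ (ij.2 : ℕ)| :=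
            Finset.abs_sum_le_sum_abs _ _
        _ ≤ ∑ ij : Fin M × Fin d, A ij * H ^ (ij.1 : ℕ) * B ^ (ij.2 : ℕ) := by
            apply Finset.sum_le_sum
            intro ij _
            rw [abs_mul, abs_mul, abs_pow, abs_pow]
            have := hgb ij
            have := (hA0 ij).le
            gcongr
        _ = ∑ ij : Fin M × Fin d, (p : ℝ) ^ N / (2 * N) := by
            apply Finset.sum_congr rfl
            intro ij _
            simp only [A]
            field_simp
        _ = (p : ℝ) ^ N / 2 := by
            simp [← Nat.cast_mul, mul_comm M d, ← hN]
            field_simp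
        _ < (p : ℝ) ^ N := by
            have : 0 < (p : ℝ) ^ N := by positivity
            linarith
    exact_mod_cast this

end GaloisCount

namespace GaloisCount

lemma natDegree_det_le_mul {n : ℕ} (A : Matrix (Fin n) (Fin n) ℤ[X]) (E : ℕ)
    (h : ∀ i j, (A i j).natDegree ≤ E) : A.det.natDegree ≤ n * E := by
  rw [Matrix.det_apply]
  apply natDegree_sum_le_of_forall_le
  intro σ _
  refine (natDegree_smul_le _ _).trans ((natDegree_prod_le _ _).trans ?_)
  refine (Finset.sum_le_sum (fun i _ => h _ _)).trans ?_
  simp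

/-- Number of common zeros of two coprime bivariate polynomials, projected to the first axis. -/
lemma common_zeros (F G : ℤ[X][X]) (d E : ℕ) (hd : 1 ≤ d) (hFd : F.natDegree = d)
    (hirr : Irreducible (F.map (algebraMap ℤ[X] (FractionRing ℤ[X]))))
    (hG0 : G ≠ 0) (hGd : G.natDegree < d)
    (hFE : ∀ k, (F.coeff k).natDegree ≤ E) (hGE : ∀ k, (G.coeff k).natDegree ≤ E)
    (S : Finset ℤ) (hS : ∀ t ∈ S, ∃ z : ℤ, F.evalEval t z = 0 ∧ G.evalEval t z = 0) :
    S.card ≤ 2 * d * E := by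
  have hinj : Function.Injective (algebraMap ℤ[X] (FractionRing ℤ[X])) :=
    IsFractionRing.injective _ _
  set r : ℤ[X] := resultant F G with hr
  have hr0 : r ≠ 0 := by
    intro h0
    have h1 := resultant_map_map F G F.natDegree G.natDegree
      (algebraMap ℤ[X] (FractionRing ℤ[X]))
    rw [← hr, h0, map_zero] at h1
    have h2 : resultant (F.map (algebraMap ℤ[X] (FractionRing ℤ[X])))
      (G.map (algebraMap ℤ[X] (FractionRing ℤ[X]))) = 0 := by
      rw [← h1, natDegree_map_eq_of_injective hinj, natDegree_map_eq_of_injective hinj]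
    rw [resultant_eq_zero_iff] at h2
    apply h2.2
    rw [hirr.coprime_iff_not_dvd]
    intro hdvd
    have hne : G.map (algebraMap ℤ[X] (FractionRing ℤ[X])) ≠ 0 :=
      (Polynomial.map_ne_zero_iff hinj).2 hG0
    have := natDegree_le_of_dvd hdvd hne
    rw [natDegree_map_eq_of_injective hinj, natDegree_map_eq_of_injective hinj] at this
    omega
  have hrdeg : r.natDegree ≤ 2 * d * E := by
    have : r.natDegree ≤ (F.natDegree + G.natDegree) * E := by
      apply natDegree_det_le_mul
      intro i j
      simp only [sylvester, Matrix.of_apply]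
      refine Fin.addCases (fun j => ?_) (fun j => ?_) j
      · simp only [Fin.addCases_left]; split_ifs
        · exact hGE _
        · simp
      · simp only [Fin.addCases_right]; split_ifs
        · exact hFE _
        · simp
    refine this.trans (Nat.mul_le_mul_right _ (by omega))
  obtain ⟨p, q, -, -, hpq⟩ := exists_mul_add_mul_eq_C_resultant F G le_rfl le_rfl
    (Or.inl (by omega : F.natDegree ≠ 0))
  have hsub : S ⊆ r.roots.toFinset := by
    intro t ht
    obtain ⟨z, h1, h2⟩ := hS t ht
    rw [Multiset.mem_toFinset, mem_roots hr0, IsRoot.def]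
    have := congrArg (evalEval t z) hpq
    rw [evalEval_add, evalEval_mul, evalEval_mul, h1, h2, evalEval_C] at this
    rw [← hr] at this
    rw [← this]; ring
  calc S.card ≤ r.roots.toFinset.card := Finset.card_le_card hsub
    _ ≤ r.roots.card := Multiset.toFinset_card_le _
    _ ≤ r.natDegree := card_roots' _
    _ ≤ _ := hrdeg

lemma cast_evalEval (F : ℤ[X][X]) (p : ℕ) (t z : ℤ) :
    ((F.evalEval t z : ℤ) : ZMod p) =
      (F.map (eval₂RingHom (Int.castRingHom (ZMod p)) (t : ZMod p))).eval (z : ZMod p) := by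
  rw [evalEval_eq_eval]
  change Int.castRingHom (ZMod p) _ = _
  rw [← eval₂_id, hom_eval₂, eval₂_eq_eval_map, RingHom.comp_id,
    Polynomial.map_map]
  congr 2
  ext <;> simp

/-- Count of points in nonsingular residue classes modulo one prime. -/
lemma count_one_prime (F : ℤ[X][X]) (hF : F.Monic) (d D M : ℕ) (hd : 1 ≤ d) (hM : 1 ≤ M)
    (hFd : F.natDegree = d)
    (hirr : Irreducible (F.map (algebraMap ℤ[X] (FractionRing ℤ[X]))))
    (hFD : ∀ k, (F.coeff k).natDegree ≤ D)
    (p : ℕ) (hp : p.Prime) (H B : ℝ) (hH : 1 ≤ H) (hB : 1 ≤ B)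
    (hsize : (2 * (d * M : ℕ)) ^ 2 * H ^ (M - 1) * B ^ (d - 1) ≤ (p : ℝ) ^ (d * M - 1))
    (S : Finset ℤ) (z : ℤ → ℤ)
    (hS : ∀ t ∈ S, |(t : ℝ)| ≤ H ∧ |(z t : ℝ)| ≤ B ∧ F.evalEval t (z t) = 0 ∧
      ¬ (p : ℤ) ∣ (derivative F).evalEval t (z t)) :
    S.card ≤ 2 * d * (D + M) * (p * d) := by
  classical
  haveI : Fact p.Prime := ⟨hp⟩
  let Fα : ZMod p → (ZMod p)[X] := fun α =>
    F.map (eval₂RingHom (Int.castRingHom (ZMod p)) α)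
  let Cs : Finset (Σ _ : ZMod p, ZMod p) := Finset.univ.sigma (fun α => (Fα α).roots.toFinset)
  let f : ℤ → (Σ _ : ZMod p, ZMod p) := fun t => ⟨(t : ZMod p), (z t : ZMod p)⟩
  have hCs : Cs.card ≤ p * d := by
    rw [Finset.card_sigma]
    calc ∑ α : ZMod p, (Fα α).roots.toFinset.card ≤ ∑ α : ZMod p, d := by
          apply Finset.sum_le_sum
          intro α _
          refine (Multiset.toFinset_card_le _).trans ((card_roots' _).trans ?_)
          rw [← hFd]; exact natDegree_map_le
      _ = p * d := by simp [ZMod.card]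
  have hmaps : ∀ t ∈ S, f t ∈ Cs := by
    intro t ht
    simp only [Cs, f, Finset.mem_sigma, Finset.mem_univ, true_and, Multiset.mem_toFinset]
    rw [mem_roots (hF.map _).ne_zero, IsRoot.def, ← cast_evalEval, (hS t ht).2.2.1]
    simp
  have hfib : ∀ c ∈ Cs, (S.filter (fun t => f t = c)).card ≤ 2 * d * (D + M) := by
    intro c _
    rcases (S.filter (fun t => f t = c)).eq_empty_or_nonempty with he | ⟨t0, ht0⟩
    · rw [he]; simp
    · rw [Finset.mem_filter] at ht0
      obtain ⟨G, hG0, hGd, hGM, hGv⟩ := exists_aux F p hp t0 (z t0) (hS t0 ht0.1).2.2.2 d M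
        hd hM H B hH hB hsize
      apply common_zeros F G d (D + M) hd hFd hirr hG0 hGd
        (fun k => (hFD k).trans (by omega)) (fun k => (hGM k).trans (by omega))
      intro t ht
      rw [Finset.mem_filter] at ht
      have hs := hS t ht.1
      have hft : f t = f t0 := ht.2.trans ht0.2.symm
      simp only [f, Sigma.mk.injEq, heq_eq_eq] at hft
      refine ⟨z t, hs.2.2.1, hGv t (z t) hs.1 hs.2.1 ?_ ?_ hs.2.2.1⟩
      · rw [← ZMod.intCast_eq_intCast_iff_dvd_sub]; exact hft.1.symm
      · rw [← ZMod.intCast_eq_intCast_iff_dvd_sub]; exact hft.2.symm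
  calc S.card ≤ 2 * d * (D + M) * Cs.card :=
        Finset.card_le_mul_card_image_of_maps_to hmaps _ hfib
    _ ≤ _ := Nat.mul_le_mul_left _ hCs

/-- Bertrand: many primes of comparable size. -/
lemma exists_primes (N : ℕ) (hN : 1 ≤ N) (k : ℕ) :
    ∃ p : ℕ → ℕ, StrictMono p ∧ (∀ i, (p i).Prime ∧ N ≤ p i) ∧ ∀ i < k, p i ≤ 2 ^ k * N := by
  have key : ∀ i : ℕ, ∃ q : ℕ, q.Prime ∧ 2 ^ i * N < q ∧ q ≤ 2 * (2 ^ i * N) := fun i =>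
    Nat.exists_prime_lt_and_le_two_mul _ (by positivity)
  choose p hp1 hp2 hp3 using key
  refine ⟨p, strictMono_nat_of_lt_succ fun i => (hp3 i).trans_lt ?_, fun i => ⟨hp1 i, ?_⟩, fun i hi => ?_⟩
  · have := hp2 (i + 1); rw [pow_succ] at this; linarith
  · exact (Nat.le_mul_of_pos_left _ (by positivity)).trans (hp2 i).le
  · refine (hp3 i).trans ?_
    rw [← mul_assoc, ← pow_succ']
    exact Nat.mul_le_mul_right _ (Nat.pow_le_pow_right (by norm_num) hi)

theorem curve_count (d D c : ℕ) (hd : 1 ≤ d) (hc : 1 ≤ c) (ε : ℝ) (hε : 0 < ε) :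
    ∃ K : ℝ, ∀ H : ℝ, 1 ≤ H → ∀ F : ℤ[X][X], F.Monic → F.natDegree = d →
      (∀ k, (F.coeff k).natDegree ≤ D) →
      Irreducible (F.map (algebraMap ℤ[X] (FractionRing ℤ[X]))) →
      ∀ S : Finset ℤ, (∀ t ∈ S, |(t : ℝ)| ≤ H ∧ ∃ z : ℤ, |(z : ℝ)| ≤ c * H ^ c ∧
        F.evalEval t z = 0 ∧ |(((derivative F).evalEval t z : ℤ) : ℝ)| ≤ c * H ^ c) →
      (S.card : ℝ) ≤ K * H ^ ((1 : ℝ) / d + ε) := by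
  classical
  obtain ⟨M, hM⟩ : ∃ M : ℕ, 2 ≤ M ∧ (c : ℝ) / ε ≤ M - 1 := by
    obtain ⟨m, hm⟩ := exists_nat_ge ((c : ℝ) / ε)
    exact ⟨m + 2, by omega, by push_cast; linarith⟩
  obtain ⟨hM2, hMc⟩ := hM
  set K1 : ℝ := (2 * (d * M : ℕ)) ^ 2 * (c : ℝ) ^ d with hK1
  have hc1 : (1 : ℝ) ≤ c := by exact_mod_cast hc
  have hd1 : (1 : ℝ) ≤ d := by exact_mod_cast hd
  have hdM1 : 1 ≤ d * M := Nat.mul_pos hd (by omega)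
  have hdM : (1 : ℝ) ≤ (d * M : ℕ) := by exact_mod_cast hdM1
  have hK1c : (c : ℝ) < K1 := by
    have h1 : (c : ℝ) ≤ c ^ d := le_self_pow₀ hc1 (by omega)
    have h2 : (4 : ℝ) ≤ (2 * (d * M : ℕ)) ^ 2 := by nlinarith
    rw [hK1]; nlinarith
  have hK11 : 1 ≤ K1 := hc1.trans hK1c.le
  set k := d * c with hk
  have hk1 : 1 ≤ k := Nat.mul_pos hd hc
  set Q : ℝ := 2 * d * (D + M) with hQ
  have hQ0 : 0 ≤ Q := by positivity
  refine ⟨Q + k * (Q * (2 ^ k * (2 * K1) * d)), fun H hH F hF hFd hFD hirr S hS => ?_⟩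
  have hH0 : 0 < H := by linarith
  set T : ℝ := H ^ ((1 : ℝ) / d + ε) with hT
  have hT1 : 1 ≤ T := Real.one_le_rpow hH (by positivity)
  set N : ℕ := ⌈K1 * T⌉₊ with hN
  have hN0 : K1 * T ≤ N := Nat.le_ceil _
  have hKT : 1 ≤ K1 * T := by nlinarith
  have hNle : (N : ℝ) ≤ 2 * K1 * T := by
    have := Nat.ceil_lt_add_one (by linarith : 0 ≤ K1 * T); linarith
  have hN1 : 1 ≤ N := by
    have : (1 : ℝ) ≤ N := by linarith
    exact_mod_cast this
  obtain ⟨p, hpm, hpp, hple⟩ := exists_primes N hN1 k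
  choose! z hz using fun t ht => (hS t ht).2
  have hB : 1 ≤ c * H ^ c := by
    have := one_le_pow₀ hH (n := c); nlinarith
  -- size condition
  have hsize : ∀ i, (2 * (d * M : ℕ)) ^ 2 * H ^ (M - 1) * (c * H ^ c) ^ (d - 1)
      ≤ (p i : ℝ) ^ (d * M - 1) := by
    intro i
    have h1 : K1 * T ≤ p i := hN0.trans (by exact_mod_cast (hpp i).2)
    have hdM2 : 2 ≤ d * M := hM2.trans (Nat.le_mul_of_pos_left _ hd)
    calc (2 * (d * M : ℕ) : ℝ) ^ 2 * H ^ (M - 1) * (c * H ^ c) ^ (d - 1)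
        = ((2 * (d * M : ℕ) : ℝ) ^ 2 * c ^ (d - 1)) * H ^ ((M - 1) + c * (d - 1)) := by
          rw [mul_pow (c : ℝ), ← pow_mul, pow_add]; ring
      _ ≤ K1 * T ^ (d * M - 1) := by
          apply mul_le_mul _ _ (by positivity) (by linarith)
          · rw [hK1]; gcongr
            omega
          · rw [hT, ← Real.rpow_natCast, ← Real.rpow_natCast, ← Real.rpow_mul hH0.le]
            apply Real.rpow_le_rpow_of_exponent_le hH
            have hcM : (c : ℝ) ≤ (M - 1) * ε := by rwa [div_le_iff₀ hε] at hMc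
            rw [Nat.cast_sub hdM1]
            push_cast [Nat.cast_sub hd, Nat.cast_sub (by omega : 1 ≤ M)]
            have e1 : ((1 : ℝ) / d + ε) * (d * M - 1) = M - 1 / d + ε * (d * M - 1) := by
              field_simp
            rw [e1]
            have e2 : (1 : ℝ) / d ≤ 1 := by rw [div_le_one (by linarith)]; exact hd1
            have e3 : (c : ℝ) * (d - 1) ≤ (M - 1) * ε * (d - 1) :=
              mul_le_mul_of_nonneg_right hcM (by linarith)
            have hM' : (2 : ℝ) ≤ M := by exact_mod_cast hM2
            have e4 : (M - 1) * ε * (d - 1) ≤ ε * (d * M - 1) := by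
              have : ((M : ℝ) - 1) * (d - 1) ≤ d * M - 1 := by nlinarith
              nlinarith
            linarith
      _ ≤ K1 ^ (d * M - 1) * T ^ (d * M - 1) := by
          gcongr
          exact le_self_pow₀ hK11 (by omega)
      _ = (K1 * T) ^ (d * M - 1) := (mul_pow _ _ _).symm
      _ ≤ _ := pow_le_pow_left₀ (by linarith) h1 _
  -- cover
  let S0 := S.filter (fun t => (derivative F).evalEval t (z t) = 0)
  let Si : ℕ → Finset ℤ := fun i => S.filter (fun t => ¬ (p i : ℤ) ∣ (derivative F).evalEval t (z t))
  have hcover : S ⊆ S0 ∪ (Finset.range k).biUnion Si := by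
    intro t ht
    rw [Finset.mem_union]
    by_contra hcon
    push Not at hcon
    obtain ⟨h1, h2⟩ := hcon
    simp only [S0, Finset.mem_filter, ht, true_and] at h1
    simp only [Si, Finset.mem_biUnion, Finset.mem_filter, ht, true_and, not_exists, not_and,
      not_not, Finset.mem_range] at h2
    have hdvd : (∏ i ∈ Finset.range k, (p i : ℤ)) ∣ (derivative F).evalEval t (z t) := by
      apply Finset.prod_dvd_of_coprime
      · intro i _ j _ hij
        have := (Nat.coprime_primes (hpp i).1 (hpp j).1).2 (fun h => hij (hpm.injective h))
        exact Nat.isCoprime_iff_coprime.2 this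
      · intro i hi; exact h2 i (Finset.mem_range.1 hi)
    have hle := Int.le_of_dvd (abs_pos.2 h1) ((dvd_abs _ _).2 hdvd)
    have hle' : (∏ i ∈ Finset.range k, (p i : ℝ)) ≤ c * H ^ c := by
      refine le_trans ?_ (hz t ht).2.2
      have := (Int.cast_le (R := ℝ)).2 hle
      push_cast at this; exact this
    have hge : K1 * H ^ c ≤ ∏ i ∈ Finset.range k, (p i : ℝ) := by
      calc K1 * H ^ c ≤ K1 ^ k * T ^ k := by
            apply mul_le_mul (le_self_pow₀ hK11 (by omega)) _ (by positivity) (by positivity)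
            rw [hT, ← Real.rpow_natCast, ← Real.rpow_natCast, ← Real.rpow_mul hH0.le]
            apply Real.rpow_le_rpow_of_exponent_le hH
            rw [hk]; push_cast
            have : ((1 : ℝ) / d + ε) * (d * c) = c + ε * (d * c) := by field_simp
            rw [this]; have : 0 ≤ ε * (d * c) := by positivity
            linarith
        _ = ∏ i ∈ Finset.range k, (K1 * T) := by simp [mul_pow]
        _ ≤ _ := by
            apply Finset.prod_le_prod
            · intro i _; linarith
            · intro i _; exact hN0.trans (by exact_mod_cast (hpp i).2)
    have : c * H ^ c < K1 * H ^ c := by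
      have : 0 < H ^ c := by positivity
      nlinarith
    linarith
  have h0 : (S0.card : ℝ) ≤ Q := by
    have : S0.card ≤ 2 * d * (D + M) := by
      apply common_zeros F (derivative F) d (D + M) hd hFd hirr
      · intro h
        have := natDegree_eq_zero_of_derivative_eq_zero h
        omega
      · have := natDegree_derivative_lt (p := F) (by omega); omega
      · intro k; exact (hFD k).trans (by omega)
      · intro k
        rw [coeff_derivative]
        refine (natDegree_mul_le).trans ?_
        have := hFD (k + 1)
        have h2 : ((k : ℤ[X]) + 1).natDegree = 0 := by
          rw [← Nat.cast_succ]; exact natDegree_natCast _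
        rw [h2]; omega
      · intro t ht
        rw [Finset.mem_filter] at ht
        exact ⟨z t, (hz t ht.1).2.1, ht.2⟩
    rw [hQ]; exact_mod_cast this
  have hi : ∀ i ∈ Finset.range k, ((Si i).card : ℝ) ≤ Q * (2 ^ k * (2 * K1) * d) * T := by
    intro i hi
    have h1 : (Si i).card ≤ 2 * d * (D + M) * (p i * d) := by
      apply count_one_prime F hF d D M hd (by omega) hFd hirr hFD (p i) (hpp i).1 H (c * H ^ c) hH hB
        (hsize i) _ z
      intro t ht
      rw [Finset.mem_filter] at ht
      exact ⟨(hS t ht.1).1, (hz t ht.1).1, (hz t ht.1).2.1, ht.2⟩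
    have h2 : ((Si i).card : ℝ) ≤ Q * (p i * d) := by rw [hQ]; exact_mod_cast h1
    have h3 : (p i : ℝ) ≤ 2 ^ k * N := by exact_mod_cast hple i (Finset.mem_range.1 hi)
    calc ((Si i).card : ℝ) ≤ Q * (p i * d) := h2
      _ ≤ Q * ((2 ^ k * (2 * K1 * T)) * d) := by
        have : (2 : ℝ) ^ k * N ≤ 2 ^ k * (2 * K1 * T) := by gcongr
        gcongr
        exact h3.trans this
      _ = _ := by ring
  calc (S.card : ℝ) ≤ ((S0 ∪ (Finset.range k).biUnion Si).card : ℝ) := by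
        exact_mod_cast Finset.card_le_card hcover
    _ ≤ S0.card + ∑ i ∈ Finset.range k, ((Si i).card : ℝ) := by
        exact_mod_cast (Finset.card_union_le _ _).trans
          (Nat.add_le_add_left Finset.card_biUnion_le _)
    _ ≤ Q * T + ∑ i ∈ Finset.range k, Q * (2 ^ k * (2 * K1) * d) * T := by
        apply add_le_add
        · nlinarith
        · exact Finset.sum_le_sum hi
    _ = _ := by simp; ring

end GaloisCount

namespace GaloisCount

/-- The monic integer polynomial `X^n + a_1 X^{n-1} + ... + a_n`. -/
noncomputable def fpoly (n : ℕ) (a : Fin n → ℤ) : ℤ[X] :=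
  X ^ n + ∑ i : Fin n, C (a i) * X ^ (n - 1 - (i : ℕ))

lemma fpoly_sum_degree_lt (n : ℕ) (a : Fin n → ℤ) :
    (∑ i : Fin n, C (a i) * X ^ (n - 1 - (i : ℕ)) : ℤ[X]).degree < (n : WithBot ℕ) := by
  rw [← mem_degreeLT]
  apply Submodule.sum_mem
  intro i _
  rw [mem_degreeLT]
  refine (degree_C_mul_X_pow_le _ _).trans_lt ?_
  have := i.2
  exact_mod_cast (by omega : n - 1 - (i : ℕ) < n)

lemma fpoly_monic (n : ℕ) (a : Fin n → ℤ) : (fpoly n a).Monic :=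
  monic_X_pow_add (fpoly_sum_degree_lt n a)

lemma fpoly_natDegree (n : ℕ) (a : Fin n → ℤ) : (fpoly n a).natDegree = n := by
  rw [fpoly, natDegree_eq_of_degree_eq_some (n := n)]
  rw [degree_add_eq_left_of_degree_lt]
  · exact degree_X_pow _
  · rw [degree_X_pow]; exact fpoly_sum_degree_lt n a

lemma fpoly_coeff (n : ℕ) (a : Fin n → ℤ) (i : Fin n) :
    (fpoly n a).coeff (n - 1 - (i : ℕ)) = a i := by
  have hi := i.2
  rw [fpoly, coeff_add, coeff_X_pow, if_neg (by omega), zero_add, finsetSum_coeff,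
    Finset.sum_eq_single i]
  · simp
  · intro j _ hj
    have hj2 := j.2
    rw [coeff_C_mul_X_pow, if_neg]
    intro h; apply hj; apply Fin.ext; omega
  · simp

lemma fpoly_injective (n : ℕ) : Function.Injective (fpoly n) := by
  intro a b h
  funext i
  rw [← fpoly_coeff n a i, h, fpoly_coeff]

lemma fpoly_map (n : ℕ) (a : Fin n → ℤ) : (fpoly n a).map (Int.castRingHom ℚ) =
    X ^ n + ∑ i : Fin n, C ((a i : ℚ)) * X ^ (n - 1 - (i : ℕ)) := by
  simp [fpoly, Polynomial.map_sum]

lemma fpoly_coeff_le (n : ℕ) (a : Fin n → ℤ) (H : ℝ) (hH : 1 ≤ H) (ha : ∀ i, |(a i : ℝ)| ≤ H)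
    (j : ℕ) : |((fpoly n a).coeff j : ℝ)| ≤ H := by
  rcases lt_trichotomy j n with h | h | h
  · have := fpoly_coeff n a ⟨n - 1 - j, by omega⟩
    have e : n - 1 - (n - 1 - j) = j := by omega
    simp only [e] at this
    rw [this]; exact ha _
  · have h1 := (fpoly_monic n a).coeff_natDegree
    rw [fpoly_natDegree] at h1
    rw [h, h1]; simpa using hH
  · rw [coeff_eq_zero_of_natDegree_lt (by rw [fpoly_natDegree]; exact h)]
    simp; linarith

/-- Monic polynomials of degree `k` with coefficients bounded by `R`. -/
def polyBox (k : ℕ) (R : ℝ) : Set ℤ[X] :=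
  {g | g.Monic ∧ g.natDegree = k ∧ ∀ j, |(g.coeff j : ℝ)| ≤ R}

lemma polyBox_card (k : ℕ) (R : ℝ) (hR : 1 ≤ R) :
    (polyBox k R).Finite ∧ ((polyBox k R).ncard : ℝ) ≤ (3 * R) ^ k := by
  let T : Finset (Fin k → ℤ) := Fintype.piFinset (fun _ => Finset.Icc (-⌊R⌋) ⌊R⌋)
  let φ : ℤ[X] → (Fin k → ℤ) := fun g i => g.coeff i
  have hmap : ∀ g ∈ polyBox k R, φ g ∈ (T : Set (Fin k → ℤ)) := by
    intro g hg
    simp only [T, Finset.mem_coe, Fintype.mem_piFinset, Finset.mem_Icc, φ]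
    intro i
    have := hg.2.2 i
    rw [abs_le] at this
    constructor
    · rw [neg_le, Int.le_floor]; push_cast; linarith
    · rw [Int.le_floor]; linarith
  have hinj : Set.InjOn φ (polyBox k R) := by
    intro g hg h hh hgh
    ext j
    rcases lt_trichotomy j k with hj | hj | hj
    · exact congrFun hgh ⟨j, hj⟩
    · have h1 := hg.1.coeff_natDegree
      have h2 := hh.1.coeff_natDegree
      rw [hg.2.1] at h1; rw [hh.2.1] at h2
      rw [hj, h1, h2]
    · rw [coeff_eq_zero_of_natDegree_lt (by rw [hg.2.1]; exact hj),
        coeff_eq_zero_of_natDegree_lt (by rw [hh.2.1]; exact hj)]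
  refine ⟨Set.Finite.of_injOn hmap hinj T.finite_toSet, ?_⟩
  have h1 := Set.ncard_le_ncard_of_injOn φ hmap hinj T.finite_toSet
  rw [Set.ncard_coe_finset] at h1
  have h2 : (T.card : ℝ) ≤ (3 * R) ^ k := by
    simp only [T, Fintype.card_piFinset, Int.card_Icc, Finset.prod_const, Finset.card_univ,
      Fintype.card_fin]
    push_cast
    apply pow_le_pow_left₀ (by positivity)
    have hf : (⌊R⌋ : ℝ) ≤ R := Int.floor_le R
    have h0 : 0 ≤ ⌊R⌋ := Int.floor_nonneg.2 (by linarith)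
    have : (((⌊R⌋ + 1 - -⌊R⌋).toNat : ℤ) : ℝ) = 2 * ⌊R⌋ + 1 := by
      rw [Int.toNat_of_nonneg (by omega)]; push_cast; ring
    have h3 : (((⌊R⌋ + 1 - -⌊R⌋).toNat : ℕ) : ℝ) = 2 * ⌊R⌋ + 1 := by exact_mod_cast this
    rw [h3]; linarith
  exact le_trans (by exact_mod_cast h1) h2

lemma mahler_le (n : ℕ) (f : ℤ[X]) (hf : f.natDegree = n) (H : ℝ)
    (hb : ∀ j, |(f.coeff j : ℝ)| ≤ H) :
    (f.map (Int.castRingHom ℂ)).mahlerMeasure ≤ (n + 1) * H := by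
  refine (mahlerMeasure_le_sum_norm_coeff _).trans ?_
  rw [sum_over_range _ (by simp)]
  have hd : (f.map (Int.castRingHom ℂ)).natDegree = n := by
    rw [natDegree_map_eq_of_injective (RingHom.injective_int _), hf]
  rw [hd]
  calc ∑ j ∈ Finset.range (n + 1), ‖(f.map (Int.castRingHom ℂ)).coeff j‖
      ≤ ∑ j ∈ Finset.range (n + 1), H := by
        apply Finset.sum_le_sum; intro j _
        rw [coeff_map]; simpa using hb j
    _ = _ := by simp

lemma coeff_le_mahler (n : ℕ) (g : ℤ[X]) (hg : g.natDegree ≤ n) (j : ℕ) :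
    |(g.coeff j : ℝ)| ≤ 2 ^ n * (g.map (Int.castRingHom ℂ)).mahlerMeasure := by
  have h := norm_coeff_le_choose_mul_mahlerMeasure j (g.map (Int.castRingHom ℂ))
  rw [coeff_map, natDegree_map_eq_of_injective (RingHom.injective_int _)] at h
  have h2 : ‖(Int.castRingHom ℂ) (g.coeff j)‖ = |(g.coeff j : ℝ)| := by simp
  rw [h2] at h
  refine h.trans ?_
  apply mul_le_mul_of_nonneg_right _ (mahlerMeasure_nonneg _)
  have : g.natDegree.choose j ≤ 2 ^ n :=
    (Nat.choose_le_two_pow _ _).trans (Nat.pow_le_pow_right (by norm_num) hg)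
  exact_mod_cast this

lemma one_le_mahler (g : ℤ[X]) (hg : g.Monic) :
    1 ≤ (g.map (Int.castRingHom ℂ)).mahlerMeasure := by
  apply one_le_mahlerMeasure_of_one_le_norm_leadingCoeff
  rw [(hg.map _).leadingCoeff]; simp

/-- The number of reducible polynomials of height at most `H`. -/
theorem reducible_count (n : ℕ) (hn : 1 ≤ n) (ε : ℝ) (hε : 0 < ε) :
    ∃ K : ℝ, ∀ H : ℝ, 1 ≤ H →
      ((Set.ncard {a : Fin n → ℤ | (∀ i, |(a i : ℝ)| ≤ H) ∧ ¬ Irreducible (fpoly n a)} : ℕ) : ℝ)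
        ≤ K * H ^ ((n : ℝ) - 1 + ε) := by
  classical
  set A : ℝ := 3 * 2 ^ (n + 1) with hA
  have hA1 : 1 ≤ A := by
    have : (1 : ℝ) ≤ 2 ^ (n + 1) := one_le_pow₀ (by norm_num)
    linarith
  have hn0 : (0 : ℝ) < (n : ℝ) + 1 := by positivity
  have hl2 : 0 < Real.log 2 := Real.log_pos (by norm_num)
  refine ⟨n * (1 + (n + 1 : ℝ) ^ ε / ε / Real.log 2) * (A ^ n * (n + 1) ^ (n - 1)), fun H hH => ?_⟩
  have hH0 : 0 < H := by linarith
  set x : ℝ := (n + 1) * H with hx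
  have hx1 : 1 ≤ x := by
    have : (0 : ℝ) ≤ n := Nat.cast_nonneg _
    rw [hx]; nlinarith
  set L : ℕ := Nat.log 2 ⌊x⌋₊ + 1 with hL
  let P : ℕ → ℕ → Set ℤ[X] := fun k i =>
    Set.image2 (· * ·) (polyBox k (2 ^ (n + 1) * 2 ^ i)) (polyBox (n - k) (2 ^ (n + 1) * (x / 2 ^ i)))
  let J : Finset (ℕ × ℕ) := Finset.Ico 1 n ×ˢ Finset.range L
  let U : Set ℤ[X] := ⋃ q ∈ J, P q.1 q.2
  have h2i : ∀ i < L, (2 : ℝ) ^ i ≤ x := by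
    intro i hi
    have h1 : 2 ^ i ≤ ⌊x⌋₊ := by
      apply (Nat.pow_le_pow_right (by norm_num) (by omega : i ≤ Nat.log 2 ⌊x⌋₊)).trans
      apply Nat.pow_log_le_self
      exact (Nat.floor_pos.2 hx1).ne'
    calc (2 : ℝ) ^ i ≤ (⌊x⌋₊ : ℝ) := by exact_mod_cast h1
      _ ≤ x := Nat.floor_le (by linarith)
  have hPb : ∀ q ∈ J, (P q.1 q.2).Finite ∧
      ((P q.1 q.2).ncard : ℝ) ≤ A ^ n * x ^ (n - 1) := by
    rintro ⟨k, i⟩ hq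
    simp only [J, Finset.mem_product, Finset.mem_Ico, Finset.mem_range] at hq
    obtain ⟨⟨hk1, hkn⟩, hiL⟩ := hq
    have hY : (1 : ℝ) ≤ 2 ^ i := one_le_pow₀ (by norm_num)
    have hZ : (1 : ℝ) ≤ x / 2 ^ i := by rw [le_div_iff₀ (by positivity)]; simpa using h2i i hiL
    have h2n : (1 : ℝ) ≤ 2 ^ (n + 1) := one_le_pow₀ (by norm_num)
    obtain ⟨f1, c1⟩ := polyBox_card k (2 ^ (n + 1) * 2 ^ i) (by nlinarith)
    obtain ⟨f2, c2⟩ := polyBox_card (n - k) (2 ^ (n + 1) * (x / 2 ^ i)) (by nlinarith)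
    refine ⟨f1.image2 _ f2, ?_⟩
    have h1 : (P k i).ncard ≤ (polyBox k (2 ^ (n + 1) * 2 ^ i)).ncard *
        (polyBox (n - k) (2 ^ (n + 1) * (x / 2 ^ i))).ncard := by
      simp only [P]
      rw [← Set.image_uncurry_prod, ← Set.ncard_prod]
      exact Set.ncard_image_le (f1.prod f2)
    calc ((P k i).ncard : ℝ) ≤ (polyBox k (2 ^ (n + 1) * 2 ^ i)).ncard *
        (polyBox (n - k) (2 ^ (n + 1) * (x / 2 ^ i))).ncard := by exact_mod_cast h1
      _ ≤ (3 * (2 ^ (n + 1) * 2 ^ i)) ^ k * (3 * (2 ^ (n + 1) * (x / 2 ^ i))) ^ (n - k) := by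
        gcongr
      _ = (A ^ k * A ^ (n - k)) * ((2 ^ i) ^ k * (x / 2 ^ i) ^ (n - k)) := by
        rw [hA, ← mul_assoc, ← mul_assoc, mul_pow _ ((2 : ℝ) ^ i), mul_pow _ (x / 2 ^ i)]; ring
      _ ≤ A ^ n * ((2 ^ i) ^ (n - 1) * (x / 2 ^ i) ^ (n - 1)) := by
        rw [← pow_add, Nat.add_sub_cancel' hkn.le]
        have e1 : ((2 : ℝ) ^ i) ^ k ≤ (2 ^ i) ^ (n - 1) := pow_le_pow_right₀ hY (by omega)
        have e2 : (x / 2 ^ i) ^ (n - k) ≤ (x / 2 ^ i) ^ (n - 1) := pow_le_pow_right₀ hZ (by omega)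
        gcongr
      _ = A ^ n * x ^ (n - 1) := by
        rw [← mul_pow, mul_div_cancel₀ _ (by positivity)]
  have hUfin : U.Finite := Set.Finite.biUnion J.finite_toSet (fun q hq => (hPb q hq).1)
  have hmap : ∀ a ∈ {a : Fin n → ℤ | (∀ i, |(a i : ℝ)| ≤ H) ∧ ¬ Irreducible (fpoly n a)},
      fpoly n a ∈ U := by
    rintro a ⟨ha, hred⟩
    rw [(fpoly_monic n a).irreducible_iff_natDegree'] at hred
    have hne1 : fpoly n a ≠ 1 := by
      intro h; have := fpoly_natDegree n a; rw [h, natDegree_one] at this; omega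
    push Not at hred
    obtain ⟨g, h, hg, hh, hgh, hdeg⟩ := hred hne1
    rw [fpoly_natDegree, Finset.mem_Ioc] at hdeg
    have hsum : g.natDegree + h.natDegree = n := by
      rw [← hg.natDegree_mul hh, hgh, fpoly_natDegree]
    have hMf := mahler_le n (fpoly n a) (fpoly_natDegree n a) H (fpoly_coeff_le n a H hH ha)
    rw [← hgh, Polynomial.map_mul, mahlerMeasure_mul] at hMf
    have hg1 := one_le_mahler g hg
    have hh1 := one_le_mahler h hh
    set μ := (g.map (Int.castRingHom ℂ)).mahlerMeasure with hμ
    set ν := (h.map (Int.castRingHom ℂ)).mahlerMeasure with hν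
    obtain ⟨i, hi1, hi2⟩ := exists_nat_pow_near hg1 (by norm_num : (1 : ℝ) < 2)
    have hμx : μ ≤ x := by rw [hx]; nlinarith
    have hiL : i < L := by
      rw [hL, Nat.lt_succ_iff]
      apply Nat.le_log_of_pow_le (by norm_num)
      apply Nat.le_floor
      push_cast; linarith
    simp only [U, Set.mem_iUnion]
    refine ⟨(g.natDegree, i), ?_, ?_⟩
    · simp only [J, Finset.mem_product, Finset.mem_Ico, Finset.mem_range]
      exact ⟨⟨by omega, by omega⟩, hiL⟩
    · refine ⟨g, ⟨hg, rfl, fun j => ?_⟩, h, ⟨hh, by simp only; omega, fun j => ?_⟩, hgh⟩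
      · refine (coeff_le_mahler n g (by omega) j).trans ?_
        rw [← hμ]
        calc (2 : ℝ) ^ n * μ ≤ 2 ^ n * 2 ^ (i + 1) := by gcongr
          _ = _ := by ring
      · refine (coeff_le_mahler n h (by omega) j).trans ?_
        rw [← hν]
        have : ν ≤ x / 2 ^ i := by
          rw [le_div_iff₀ (by positivity)]
          nlinarith
        calc (2 : ℝ) ^ n * ν ≤ 2 ^ (n + 1) * (x / 2 ^ i) := by
              gcongr
              · norm_num
              · omega
          _ = _ := by ring
  have hc1 := Set.ncard_le_ncard_of_injOn (fpoly n) hmap (fpoly_injective n).injOn hUfin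
  have hc2 : (U.ncard : ℝ) ≤ (J.card : ℝ) * (A ^ n * x ^ (n - 1)) := by
    have h1 : U.ncard ≤ ∑ q ∈ J, (P q.1 q.2).ncard := by
      simp only [U]
      exact Finset.set_ncard_biUnion_le J (fun q => P q.1 q.2)
    calc (U.ncard : ℝ) ≤ ∑ q ∈ J, ((P q.1 q.2).ncard : ℝ) := by exact_mod_cast h1
      _ ≤ ∑ q ∈ J, (A ^ n * x ^ (n - 1)) := Finset.sum_le_sum (fun q hq => (hPb q hq).2)
      _ = _ := by simp
  have hLb : (L : ℝ) ≤ (1 + (n + 1 : ℝ) ^ ε / ε / Real.log 2) * H ^ ε := by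
    have h1 := h2i (L - 1) (by omega)
    have h2 := Real.log_le_log (by positivity) h1
    rw [Real.log_pow] at h2
    have h3 := Real.log_le_rpow_div (by linarith : 0 ≤ x) hε
    have h4 : ((L - 1 : ℕ) : ℝ) ≤ x ^ ε / ε / Real.log 2 := by
      rw [le_div_iff₀ hl2]; linarith
    have h5 : (L : ℝ) = 1 + ((L - 1 : ℕ) : ℝ) := by
      rw [hL]; push_cast [Nat.add_sub_cancel]; ring
    rw [hx, Real.mul_rpow (by positivity) hH0.le] at h4
    have h6 : 1 ≤ H ^ ε := Real.one_le_rpow hH hε.le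
    have h7 : (n + 1 : ℝ) ^ ε * H ^ ε / ε / Real.log 2 = (n + 1 : ℝ) ^ ε / ε / Real.log 2 * H ^ ε := by
      ring
    rw [h5, add_mul, one_mul]
    linarith
  have hJ : (J.card : ℝ) ≤ n * ((1 + (n + 1 : ℝ) ^ ε / ε / Real.log 2) * H ^ ε) := by
    have : J.card ≤ n * L := by
      simp only [J, Finset.card_product, Nat.card_Ico, Finset.card_range]
      exact Nat.mul_le_mul_right _ (by omega)
    calc (J.card : ℝ) ≤ n * L := by exact_mod_cast this
      _ ≤ _ := by gcongr
  have hpow : H ^ ((n : ℝ) - 1 + ε) = H ^ (n - 1) * H ^ ε := by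
    rw [Real.rpow_add hH0, ← Real.rpow_natCast, Nat.cast_sub hn]; simp
  calc _ ≤ (U.ncard : ℝ) := by exact_mod_cast hc1
    _ ≤ (J.card : ℝ) * (A ^ n * x ^ (n - 1)) := hc2
    _ ≤ (n * ((1 + (n + 1 : ℝ) ^ ε / ε / Real.log 2) * H ^ ε)) * (A ^ n * x ^ (n - 1)) := by
      have : 0 ≤ A ^ n * x ^ (n - 1) := by positivity
      gcongr
    _ = _ := by rw [hpow, hx, mul_pow (n + 1 : ℝ) H]; ring

end GaloisCount

namespace GaloisCount
open MulAction Pointwise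
open scoped Nat

lemma choose_half_succ_le (m : ℕ) : (m + 1).choose ((m + 1) / 2) ≤ 2 * m.choose (m / 2) := by
  rcases Nat.eq_zero_or_pos ((m + 1) / 2) with h | h
  · obtain rfl : m = 0 := by omega
    simp
  · obtain ⟨k, hk⟩ : ∃ k, (m + 1) / 2 = k + 1 := ⟨(m + 1) / 2 - 1, by omega⟩
    rw [hk, Nat.choose_succ_succ]
    have h1 := Nat.choose_le_middle k m
    have h2 := Nat.choose_le_middle (k + 1) m
    simp only [Nat.succ_eq_add_one]
    omega

lemma choose_half_add_le (m a : ℕ) : (m + a).choose ((m + a) / 2) ≤ 2 ^ a * m.choose (m / 2) := by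
  induction a with
  | zero => simp
  | succ a ih =>
    have := choose_half_succ_le (m + a)
    rw [← add_assoc, pow_succ]
    linarith

lemma fact_aux (m k : ℕ) (hm : 3 ≤ m) (hk : 1 ≤ k) (hkm : k ≤ m) :
    2 ^ (k + 1) * k ! * m ! ≤ (m + k)! := by
  induction k, hk using Nat.le_induction with
  | base =>
    rw [Nat.factorial_succ m]
    simp
    have := Nat.factorial_pos m
    nlinarith
  | succ k hk ih =>
    have h := ih (by omega)
    rw [← add_assoc, Nat.factorial_succ (m + k), Nat.factorial_succ k, pow_succ]
    calc 2 ^ (k + 1) * 2 * ((k + 1) * k !) * m ! = (2 * (k + 1)) * (2 ^ (k + 1) * k ! * m !) := by ring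
      _ ≤ (m + k + 1) * (m + k)! := Nat.mul_le_mul (by omega) h

lemma imprim_ineq (a b : ℕ) (ha : 2 ≤ a) (hb : 2 ≤ b) :
    (a * b).choose (a * b / 2) * ((a !) ^ b * b !) ≤ 2 * (a * b)! := by
  induction b, hb using Nat.le_induction with
  | base =>
    have h := Nat.choose_mul_factorial_mul_factorial (n := a * 2) (k := a) (by omega)
    have e : a * 2 - a = a := by omega
    have e2 : a * 2 / 2 = a := by omega
    rw [e] at h
    rw [e2, ← h]
    apply le_of_eq
    simp [Nat.factorial]; ring
  | succ b hb ih =>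
    have h1 := choose_half_add_le (a * b) a
    have hab : 4 ≤ a * b := by nlinarith
    have h2 := fact_aux (a * b) (a - 1) (by omega) (by omega) (by nlinarith [Nat.sub_le a 1])
    have h3 : 2 ^ a * ((b + 1) * a !) * (a * b)! ≤ (a * b + a)! := by
      obtain ⟨c, rfl⟩ : ∃ c, a = c + 1 := ⟨a - 1, by omega⟩
      simp only [Nat.add_sub_cancel] at h2
      rw [← add_assoc, Nat.factorial_succ ((c + 1) * b + c), Nat.factorial_succ c]
      calc 2 ^ (c + 1) * ((b + 1) * ((c + 1) * c !)) * ((c + 1) * b)! =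
          ((c + 1) * b + c + 1) * (2 ^ (c + 1) * c ! * ((c + 1) * b)!) := by ring
        _ ≤ _ := Nat.mul_le_mul_left _ h2
    rw [mul_add, mul_one, pow_succ, Nat.factorial_succ]
    calc (a * b + a).choose ((a * b + a) / 2) * (a ! ^ b * a ! * ((b + 1) * b !))
        ≤ (2 ^ a * (a * b).choose (a * b / 2)) * (a ! ^ b * a ! * ((b + 1) * b !)) :=
          Nat.mul_le_mul_right _ h1
      _ = (2 ^ a * ((b + 1) * a !)) * ((a * b).choose (a * b / 2) * ((a !) ^ b * b !)) := by ring
      _ ≤ (2 ^ a * ((b + 1) * a !)) * (2 * (a * b)!) := Nat.mul_le_mul_left _ ih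
      _ = 2 * (2 ^ a * ((b + 1) * a !) * (a * b)!) := by ring
      _ ≤ _ := Nat.mul_le_mul_left _ h3

lemma imprim_card {n : ℕ} (G : Subgroup (Equiv.Perm (Fin n))) [IsPretransitive G (Fin n)]
    (B : Set (Fin n)) (hB : IsBlock G B) (hne : B.Nonempty) :
    Nat.card G ≤ (B.ncard)! ^ (orbit G B).ncard * ((orbit G B).ncard)! := by
  classical
  obtain ⟨x0, hx0⟩ := hne
  have htr : ∀ x : Fin n, ∃ g : G, g • x0 = x := fun x => exists_smul_eq G x0 x
  choose γ hγ using htr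
  let f : Fin n → orbit G B := fun x => ⟨γ x • B, mem_orbit _ _⟩
  have hfx : ∀ x, x ∈ (f x : Set (Fin n)) := fun x => by
    have := Set.smul_mem_smul_set (a := γ x) hx0
    rw [hγ] at this
    exact this
  have huniq : ∀ (c : orbit G B) (x : Fin n), x ∈ (c : Set (Fin n)) ↔ f x = c := by
    intro c x
    constructor
    · intro hx
      obtain ⟨_, g, rfl⟩ := c
      apply Subtype.ext
      exact hB.smul_eq_smul_of_nonempty ⟨x, hfx x, hx⟩
    · rintro rfl; exact hfx x
  have heq : ∀ (g : G) (x : Fin n), f (g • x) = g • f x := by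
    intro g x
    rw [← huniq]
    exact Set.smul_mem_smul_set (hfx x)
  haveI : Fintype (orbit G B) := Fintype.ofFinite _
  let ρ : G →* Equiv.Perm (orbit G B) := toPermHom G (orbit G B)
  have h1 : Nat.card ρ.range ≤ ((orbit G B).ncard)! := by
    calc Nat.card ρ.range ≤ Nat.card (Equiv.Perm (orbit G B)) := Subgroup.card_le_card_group _
      _ = _ := by rw [Nat.card_perm]; rfl
  have h2 : Nat.card ρ.ker ≤ (B.ncard)! ^ (orbit G B).ncard := by
    have hi : Nat.card ρ.ker ≤ Nat.card {g : Equiv.Perm (Fin n) // f ∘ g = f} := by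
      apply Nat.card_le_card_of_injective
        (fun k : ρ.ker => (⟨(k : G), by
          funext x
          have hk : ρ k = 1 := k.2
          have h3 := heq (k : G) x
          have h4 : (ρ k) (f x) = f x := by rw [hk]; rfl
          exact h3.trans h4⟩ : {g : Equiv.Perm (Fin n) // f ∘ g = f}))
      intro k k' hkk
      exact Subtype.ext (Subtype.ext (congrArg
        (fun q : {g : Equiv.Perm (Fin n) // f ∘ g = f} => (q : Equiv.Perm (Fin n))) hkk))
    refine hi.trans ?_
    rw [Nat.card_eq_fintype_card, DomMulAct.stabilizer_card]
    have h5 : ∀ c : orbit G B, Fintype.card {a // f a = c} = B.ncard := by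
      intro c
      rw [← Nat.card_eq_fintype_card]
      have : {a | f a = c} = (c : Set (Fin n)) := by
        ext x; exact (huniq c x).symm
      change Set.ncard {a | f a = c} = _
      rw [this]
      obtain ⟨_, g, rfl⟩ := c
      exact Set.ncard_smul_set g B
    simp only [h5, Finset.prod_const, Finset.card_univ]
    rw [← Nat.card_eq_fintype_card]; rfl
  calc Nat.card G = Nat.card ρ.ker * ρ.ker.index := (Subgroup.card_mul_index _).symm
    _ = Nat.card ρ.ker * Nat.card ρ.range := by rw [Subgroup.index_ker]
    _ ≤ _ := Nat.mul_le_mul h2 h1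

lemma index_of_card_le {n : ℕ} (G : Subgroup (Equiv.Perm (Fin n))) :
    Nat.card G * G.index = n ! := by
  rw [Subgroup.card_mul_index, Nat.card_perm]; simp

lemma index_imprim {n : ℕ} (G : Subgroup (Equiv.Perm (Fin n))) [IsPretransitive G (Fin n)]
    (B : Set (Fin n)) (hB : IsBlock G B) (hnt : ¬ IsTrivialBlock B) :
    n.choose (n / 2) ≤ 2 * G.index := by
  rw [IsTrivialBlock, not_or, Set.not_subsingleton_iff] at hnt
  have hne := hnt.1.nonempty
  have hab := hB.ncard_block_mul_ncard_orbit_eq hne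
  rw [Nat.card_fin] at hab
  have ha : 2 ≤ B.ncard := by
    have := (Set.one_lt_ncard_iff_nontrivial (s := B)).2 hnt.1; omega
  have hlt : B.ncard < n := by
    have := Set.ncard_lt_ncard (Set.ssubset_univ_iff.2 hnt.2) (Set.toFinite _)
    rwa [Set.ncard_univ, Nat.card_fin] at this
  have hb : 2 ≤ (orbit G B).ncard := by
    by_contra hlt2
    have : (orbit G B).ncard ≤ 1 := by omega
    have : B.ncard * (orbit G B).ncard ≤ B.ncard * 1 := Nat.mul_le_mul_left _ this
    omega
  have h1 := imprim_card G B hB hne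
  have h2 := imprim_ineq _ _ ha hb
  rw [hab] at h2
  have h3 := index_of_card_le G
  rw [← h3] at h2
  have hpos : 0 < Nat.card G := Nat.card_pos
  apply Nat.le_of_mul_le_mul_left _ hpos
  calc Nat.card G * n.choose (n / 2) ≤ _ := Nat.mul_le_mul_right _ h1
    _ = n.choose (n / 2) * _ := mul_comm _ _
    _ ≤ 2 * (Nat.card G * G.index) := h2
    _ = _ := by ring

end GaloisCount

namespace GaloisCount
open MulAction Pointwise
open scoped Nat

lemma perm_apply_inv_self {α : Type*} (x : Equiv.Perm α) (b : α) : x (x⁻¹ b) = b :=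
  Equiv.apply_symm_apply x b

lemma perm_inv_apply_self {α : Type*} (x : Equiv.Perm α) (b : α) : x⁻¹ (x b) = b :=
  Equiv.symm_apply_apply x b

lemma threeCycle_of_supports {α : Type*} [Fintype α] [DecidableEq α] (x y : Equiv.Perm α) (a : α)
    (hx : x a ≠ a) (hy : y a ≠ a) (hxy : ∀ b, x b ≠ b → y b ≠ b → b = a) :
    (x * y * x⁻¹ * y⁻¹).IsThreeCycle := by
  have hyx : ∀ b, b ≠ a → x b ≠ b → y b = b := fun b hb h => by
    by_contra h2; exact hb (hxy b h h2)
  have hyx' : ∀ b, b ≠ a → x b ≠ b → y⁻¹ b = b := fun b hb h => by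
    rw [Equiv.Perm.inv_eq_iff_eq]; exact (hyx b hb h).symm
  have hxy1 : ∀ b, b ≠ a → y b ≠ b → x b = b := fun b hb h => by
    by_contra h2; exact hb (hxy b h2 h)
  have hxy' : ∀ b, b ≠ a → y b ≠ b → x⁻¹ b = b := fun b hb h => by
    rw [Equiv.Perm.inv_eq_iff_eq]; exact (hxy1 b hb h).symm
  have mx : ∀ b, x b ≠ b → x (x b) ≠ x b := fun b h h2 => h (x.injective h2)
  have my : ∀ b, y b ≠ b → y (y b) ≠ y b := fun b h h2 => h (y.injective h2)
  have mx' : ∀ b, x b ≠ b → x (x⁻¹ b) ≠ x⁻¹ b := fun b h h2 => h (by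
    rw [perm_apply_inv_self] at h2; nth_rewrite 1 [h2]; exact perm_apply_inv_self _ _)
  have my' : ∀ b, y b ≠ b → y (y⁻¹ b) ≠ y⁻¹ b := fun b h h2 => h (by
    rw [perm_apply_inv_self] at h2; nth_rewrite 1 [h2]; exact perm_apply_inv_self _ _)
  set b := x a with hb
  set c := y a with hc
  have hbc : b ≠ c := by
    intro h
    have h1 := mx a hx
    have h2 := my a hy
    rw [← hb] at h1; rw [← hc, ← h] at h2
    exact hx (hxy b h1 h2)
  have key : x * y * x⁻¹ * y⁻¹ = Equiv.swap b a * Equiv.swap b c := by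
    ext d
    simp only [Equiv.Perm.mul_apply]
    by_cases hda : d = a
    · subst hda
      have h1 : y⁻¹ d ≠ d := by
        intro h; rw [Equiv.Perm.inv_eq_iff_eq] at h; exact hy h.symm
      rw [hxy' _ h1 (my' d hy), perm_apply_inv_self, ← hb,
        Equiv.swap_apply_of_ne_of_ne hx.symm hy.symm, Equiv.swap_apply_right]
    · by_cases hdb : d = b
      · rw [hdb, hyx' b hx (mx a hx), Equiv.swap_apply_left,
          Equiv.swap_apply_of_ne_of_ne hbc.symm hy]
        have : x⁻¹ b = a := by rw [hb]; simp
        rw [this, ← hc, hxy1 c hy (my a hy)]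
      · by_cases hdc : d = c
        · have : y⁻¹ c = a := by rw [hc]; simp
          rw [hdc, this, Equiv.swap_apply_right, Equiv.swap_apply_left]
          have h1 : x⁻¹ a ≠ a := by
            intro h; rw [Equiv.Perm.inv_eq_iff_eq] at h; exact hx h.symm
          rw [hyx _ h1 (mx' a hx), perm_apply_inv_self]
        · rw [Equiv.swap_apply_of_ne_of_ne hdb hdc, Equiv.swap_apply_of_ne_of_ne hdb hda]
          by_cases hxd : x d = d
          · by_cases hyd : y d = d
            · have e1 : y⁻¹ d = d := by rw [Equiv.Perm.inv_eq_iff_eq]; exact hyd.symm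
              have e2 : x⁻¹ d = d := by rw [Equiv.Perm.inv_eq_iff_eq]; exact hxd.symm
              rw [e1, e2, hyd, hxd]
            · have h1 : y⁻¹ d ≠ a := by
                intro h; rw [Equiv.Perm.inv_eq_iff_eq] at h; exact hdc h
              rw [hxy' _ h1 (my' d hyd), perm_apply_inv_self, hxd]
          · rw [hyx' d hda hxd]
            have h1 : x⁻¹ d ≠ a := by
              intro h; rw [Equiv.Perm.inv_eq_iff_eq] at h; exact hdb h
            rw [hyx _ h1 (mx' d hxd), perm_apply_inv_self]
  rw [key]
  exact Equiv.Perm.isThreeCycle_swap_mul_swap_same hx hbc (Ne.symm hy)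

/-- Bochert's base argument. -/
lemma exists_small_base {n : ℕ} (G : Subgroup (Equiv.Perm (Fin n)))
    (hP : IsPreprimitive G (Fin n)) (hA : ¬ alternatingGroup (Fin n) ≤ G) :
    ∃ Δ : Finset (Fin n), 2 * Δ.card ≤ n ∧ ∀ g ∈ G, (∀ x ∈ Δ, g x = x) → g = 1 := by
  classical
  let isB : Finset (Fin n) → Prop := fun Δ => ∀ g ∈ G, (∀ x ∈ Δ, g x = x) → g = 1
  have hex : ∃ k, ∃ Δ : Finset (Fin n), Δ.card = k ∧ isB Δ :=
    ⟨_, Finset.univ, rfl, fun g _ h => by ext x; simp [h x (Finset.mem_univ x)]⟩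
  obtain ⟨Δ, hΔ, hΔB⟩ := Nat.find_spec hex
  have hmin : ∀ Δ' : Finset (Fin n), Δ'.card < Δ.card → ¬ isB Δ' := by
    intro Δ' h1 h2
    rw [hΔ] at h1
    exact Nat.find_min hex h1 ⟨Δ', rfl, h2⟩
  refine ⟨Δ, ?_, hΔB⟩
  by_contra hgt
  have h1 : ¬ isB Δᶜ := by
    apply hmin
    rw [Finset.card_compl, Fintype.card_fin]; omega
  simp only [isB, not_forall] at h1
  obtain ⟨x, hxG, hx, hx1⟩ := h1
  obtain ⟨a, ha⟩ : ∃ a, x a ≠ a := by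
    by_contra h; push Not at h; exact hx1 (by ext a; simp [h a])
  have haΔ : a ∈ Δ := by
    by_contra h; exact ha (hx a (Finset.mem_compl.2 h))
  have h2 : ¬ isB (Δ.erase a) := hmin _ (Finset.card_erase_lt_of_mem haΔ)
  simp only [isB, not_forall] at h2
  obtain ⟨y, hyG, hy, hy1⟩ := h2
  have hya : y a ≠ a := by
    intro h
    apply hy1
    apply hΔB y hyG
    intro z hz
    by_cases hza : z = a
    · rw [hza, h]
    · exact hy z (Finset.mem_erase.2 ⟨hza, hz⟩)
  apply hA
  have h3 := threeCycle_of_supports x y a ha hya (by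
    intro b hb1 hb2
    by_contra hba
    have hbΔ : b ∈ Δ := by
      by_contra h; exact hb1 (hx b (Finset.mem_compl.2 h))
    exact hb2 (hy b (Finset.mem_erase.2 ⟨hba, hbΔ⟩)))
  exact Equiv.Perm.alternatingGroup_le_of_isPreprimitive_of_isThreeCycle_mem hP h3
    (G.mul_mem (G.mul_mem (G.mul_mem hxG hyG) (G.inv_mem hxG)) (G.inv_mem hyG))

/-- Evaluation of a group element on a base. -/
def baseMap {n : ℕ} (G : Subgroup (Equiv.Perm (Fin n))) (Δ : Finset (Fin n)) (g : G) :
    Δ ↪ Fin n := ⟨fun x => (g : Equiv.Perm (Fin n)) x, fun x y h => by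
      exact Subtype.ext ((g : Equiv.Perm (Fin n)).injective h)⟩

lemma baseMap_injective {n : ℕ} (G : Subgroup (Equiv.Perm (Fin n))) (Δ : Finset (Fin n))
    (hB : ∀ g ∈ G, (∀ x ∈ Δ, g x = x) → g = 1) : Function.Injective (baseMap G Δ) := by
  intro g h hgh
  have h1 : ∀ x ∈ Δ, (g : Equiv.Perm (Fin n)) x = (h : Equiv.Perm (Fin n)) x := fun x hx =>
    DFunLike.congr_fun hgh ⟨x, hx⟩
  have := hB ((h : Equiv.Perm (Fin n))⁻¹ * g) (G.mul_mem (G.inv_mem h.2) g.2) (fun x hx => by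
    rw [Equiv.Perm.mul_apply, h1 x hx, perm_inv_apply_self])
  apply Subtype.ext
  exact (inv_mul_eq_one.1 this).symm

lemma card_le_desc {n : ℕ} (G : Subgroup (Equiv.Perm (Fin n))) (Δ : Finset (Fin n))
    (hB : ∀ g ∈ G, (∀ x ∈ Δ, g x = x) → g = 1) : Nat.card G ≤ n.descFactorial Δ.card := by
  have := Nat.card_le_card_of_injective _ (baseMap_injective G Δ hB)
  rwa [Nat.card_eq_fintype_card (α := Δ ↪ Fin n), Fintype.card_embedding_eq, Fintype.card_coe,
    Fintype.card_fin] at this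

lemma index_ge_factorial {n : ℕ} (G : Subgroup (Equiv.Perm (Fin n))) (Δ : Finset (Fin n))
    (hB : ∀ g ∈ G, (∀ x ∈ Δ, g x = x) → g = 1) : (n - Δ.card)! ≤ G.index := by
  have h1 := card_le_desc G Δ hB
  have h2 := index_of_card_le G
  have h3 := Nat.factorial_mul_descFactorial (n := n) (k := Δ.card) (by
    simpa using Finset.card_le_univ Δ)
  have hpos : 0 < Nat.card G := Nat.card_pos
  by_contra hlt
  push Not at hlt
  have : Nat.card G * G.index < (n - Δ.card)! * n.descFactorial Δ.card := by
    calc Nat.card G * G.index < Nat.card G * (n - Δ.card)! := Nat.mul_lt_mul_of_pos_left hlt hpos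
      _ ≤ n.descFactorial Δ.card * (n - Δ.card)! := Nat.mul_le_mul_right _ h1
      _ = _ := mul_comm _ _
  omega

lemma choose_le_fact (n : ℕ) (hn : 9 ≤ n) (h10 : n ≠ 10) : n.choose (n / 2) ≤ 2 * (n - n / 2)! := by
  have main : ∀ k : ℕ, (11 + 2 * k).choose ((11 + 2 * k) / 2) ≤ 2 * (6 + k)! ∧
      (12 + 2 * k).choose ((12 + 2 * k) / 2) ≤ 2 * (6 + k)! := by
    intro k
    induction k with
    | zero => decide
    | succ k ih =>
      have h1 := choose_half_add_le (11 + 2 * k) 2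
      have h2 := choose_half_add_le (12 + 2 * k) 2
      have h3 : 4 * (6 + k)! ≤ (6 + (k + 1))! := by
        rw [← add_assoc, Nat.factorial_succ]
        exact Nat.mul_le_mul_right _ (by omega)
      have e1 : 11 + 2 * (k + 1) = 11 + 2 * k + 2 := by ring
      have e2 : 12 + 2 * (k + 1) = 12 + 2 * k + 2 := by ring
      rw [e1, e2]
      constructor <;> omega
  rcases Nat.lt_or_ge n 11 with h | h
  · obtain rfl : n = 9 := by omega
    decide
  · rcases Nat.even_or_odd' n with ⟨m, hm | hm⟩
    · obtain ⟨k, rfl⟩ : ∃ k, m = 6 + k := ⟨m - 6, by omega⟩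
      have := (main k).2
      have e1 : 12 + 2 * k = n := by omega
      have e2 : n - n / 2 = 6 + k := by omega
      rw [e2]; rwa [e1] at this
    · obtain ⟨k, rfl⟩ : ∃ k, m = 5 + k := ⟨m - 5, by omega⟩
      have := (main k).1
      have e1 : 11 + 2 * k = n := by omega
      have e2 : n - n / 2 = 6 + k := by omega
      rw [e2]; rwa [e1] at this

lemma vec5_inj {α : Type*} (p q r a b : α) (h1 : p ≠ q) (h2 : p ≠ r) (h3 : p ≠ a) (h4 : p ≠ b)
    (h5 : q ≠ r) (h6 : q ≠ a) (h7 : q ≠ b) (h8 : r ≠ a) (h9 : r ≠ b) (h10 : a ≠ b) :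
    Function.Injective ![p, q, r, a, b] := by
  have : List.Nodup [p, q, r, a, b] := by
    simp only [List.nodup_cons, List.mem_cons, List.not_mem_nil, or_false, not_or, List.nodup_nil,
      not_false_eq_true, and_true]
    exact ⟨⟨h1, h2, h3, h4⟩, ⟨h5, h6, h7⟩, ⟨h8, h9⟩, h10⟩
  have h := List.nodup_iff_injective_get.1 this
  intro i j hij
  apply h
  fin_cases i <;> fin_cases j <;> exact hij

/-- There is no sharply 5-transitive group of degree 10. -/
lemma no_sharp_five (G : Subgroup (Equiv.Perm (Fin 10)))
    (hex : ∀ u v : Fin 5 ↪ Fin 10, ∃ g ∈ G, ∀ i, g (u i) = v i)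
    (hun : ∀ g ∈ G, ∀ u : Fin 5 ↪ Fin 10, (∀ i, g (u i) = u i) → g = 1) : False := by
  classical
  have hun' : ∀ g ∈ G, 5 ≤ (Finset.univ.filter (fun x => g x = x)).card → g = 1 := by
    intro g hg hc
    obtain ⟨s, hs, hs5⟩ := Finset.exists_subset_card_eq hc
    apply hun g hg ((s.orderEmbOfFin hs5).toEmbedding)
    intro i
    have := hs (Finset.orderEmbOfFin_mem s hs5 i)
    exact (Finset.mem_filter.1 this).2
  let T : Equiv.Perm (Fin 10) → Prop := fun g => g ∈ G ∧ g 0 = 1 ∧ g 1 = 2 ∧ g 2 = 0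
  let Fx : Equiv.Perm (Fin 10) → Finset (Fin 10) := fun g => Finset.univ.filter (fun x => g x = x)
  let S : Finset (Fin 10) := {3, 4, 5, 6, 7, 8, 9}
  have hFS : ∀ g, T g → Fx g ⊆ S := by
    rintro g ⟨-, h0, h1, h2⟩ x hx
    have hx' : g x = x := (Finset.mem_filter.1 hx).2
    by_contra hxS
    have : x = 0 ∨ x = 1 ∨ x = 2 := by
      clear hx hx'; revert hxS; revert x; decide
    rcases this with rfl | rfl | rfl
    · rw [hx'] at h0; exact absurd h0 (by decide)
    · rw [hx'] at h1; exact absurd h1 (by decide)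
    · rw [hx'] at h2; exact absurd h2 (by decide)
  have hT : ∀ a b : Fin 10, a ∈ S → b ∈ S → a ≠ b → ∃ g, T g ∧ a ∈ Fx g ∧ b ∈ Fx g := by
    intro a b ha hb hab
    have inj : ∀ p q r : Fin 10, p ∉ S → q ∉ S → r ∉ S → p ≠ q → p ≠ r → q ≠ r →
        Function.Injective ![p, q, r, a, b] := by
      intro p q r hp hq hr hpq hpr hqr
      have e1 : p ≠ a := fun h => hp (h ▸ ha)
      have e2 : p ≠ b := fun h => hp (h ▸ hb)
      have e3 : q ≠ a := fun h => hq (h ▸ ha)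
      have e4 : q ≠ b := fun h => hq (h ▸ hb)
      have e5 : r ≠ a := fun h => hr (h ▸ ha)
      have e6 : r ≠ b := fun h => hr (h ▸ hb)
      exact vec5_inj p q r a b hpq hpr e1 e2 hqr e3 e4 e5 e6 hab
    obtain ⟨g, hgG, hg⟩ := hex ⟨![0, 1, 2, a, b], inj 0 1 2 (by decide) (by decide) (by decide)
      (by decide) (by decide) (by decide)⟩ ⟨![1, 2, 0, a, b], inj 1 2 0 (by decide) (by decide)
      (by decide) (by decide) (by decide) (by decide)⟩
    refine ⟨g, ⟨hgG, hg 0, hg 1, hg 2⟩, ?_, ?_⟩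
    · exact Finset.mem_filter.2 ⟨Finset.mem_univ _, hg 3⟩
    · exact Finset.mem_filter.2 ⟨Finset.mem_univ _, hg 4⟩
  have hcard : ∀ g, T g → 2 ≤ (Fx g).card → (Fx g).card = 4 := by
    rintro g hTg h2
    have hg3 : g ^ 3 = 1 := by
      obtain ⟨hgG, h0, h1, h2'⟩ := hTg
      apply hun' _ (G.pow_mem hgG 3)
      have hsub : ({0, 1, 2} : Finset (Fin 10)) ∪ Fx g ⊆
          Finset.univ.filter (fun x => (g ^ 3) x = x) := by
        intro x hx
        rw [Finset.mem_filter]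
        refine ⟨Finset.mem_univ _, ?_⟩
        simp only [pow_succ, pow_zero, one_mul, Equiv.Perm.mul_apply]
        simp only [Finset.mem_union, Finset.mem_insert, Finset.mem_singleton] at hx
        rcases hx with (rfl | rfl | rfl) | hx
        · rw [h0, h1, h2']
        · rw [h1, h2', h0]
        · rw [h2', h0, h1]
        · have hx' : g x = x := (Finset.mem_filter.1 hx).2
          rw [hx', hx', hx']
      refine le_trans ?_ (Finset.card_le_card hsub)
      rw [Finset.card_union_of_disjoint]
      · have : ({0, 1, 2} : Finset (Fin 10)).card = 3 := by decide
        omega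
      · have hs := hFS g ⟨hgG, h0, h1, h2'⟩
        apply Finset.disjoint_of_subset_right hs
        decide
    have hlt : (Fx g).card < 5 := by
      by_contra h
      have := hun' g hTg.1 (not_lt.1 h)
      have h0 := hTg.2.1
      rw [this] at h0
      exact absurd h0 (by decide)
    haveI : Fact (Nat.Prime 3) := ⟨Nat.prime_three⟩
    have hmod : (Finset.univ.filter (fun x => g x ≠ x)).card % 3 = 0 := by
      have := Equiv.Perm.card_compl_support_modEq (σ := g) (p := 3) (n := 1) (by simpa using hg3)
      have h5 : g.supportᶜ = Fx g := by
        ext x; simp [Fx]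
      rw [h5, Fintype.card_fin] at this
      have h6 : (Fx g).card + (Finset.univ.filter (fun x => g x ≠ x)).card = 10 := by
        have := Finset.card_filter_add_card_filter_not (s := (Finset.univ : Finset (Fin 10)))
          (fun x => g x = x)
        simpa [Fx] using this
      have h7 : (Fx g).card % 3 = 10 % 3 := this
      omega
    have h6 : (Fx g).card + (Finset.univ.filter (fun x => g x ≠ x)).card = 10 := by
      have := Finset.card_filter_add_card_filter_not (s := (Finset.univ : Finset (Fin 10)))
        (fun x => g x = x)
      simpa [Fx] using this
    omega
  have hinter : ∀ g h, T g → T h → 2 ≤ (Fx g ∩ Fx h).card → g = h := by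
    intro g h hg hh h2
    have : h⁻¹ * g = 1 := by
      apply hun' _ (G.mul_mem (G.inv_mem hh.1) hg.1)
      have hsub : ({0, 1, 2} : Finset (Fin 10)) ∪ (Fx g ∩ Fx h) ⊆
          Finset.univ.filter (fun x => (h⁻¹ * g) x = x) := by
        intro x hx
        rw [Finset.mem_filter]
        refine ⟨Finset.mem_univ _, ?_⟩
        rw [Equiv.Perm.mul_apply, Equiv.Perm.inv_eq_iff_eq]
        simp only [Finset.mem_union, Finset.mem_insert, Finset.mem_singleton, Finset.mem_inter] at hx
        rcases hx with (rfl | rfl | rfl) | hx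
        · rw [hg.2.1, hh.2.1]
        · rw [hg.2.2.1, hh.2.2.1]
        · rw [hg.2.2.2, hh.2.2.2]
        · have hx1 : g x = x := (Finset.mem_filter.1 hx.1).2
          have hx2 : h x = x := (Finset.mem_filter.1 hx.2).2
          rw [hx1, hx2]
      refine le_trans ?_ (Finset.card_le_card hsub)
      rw [Finset.card_union_of_disjoint]
      · have : ({0, 1, 2} : Finset (Fin 10)).card = 3 := by decide
        omega
      · apply Finset.disjoint_of_subset_right (Finset.inter_subset_left.trans (hFS g hg))
        decide
    exact (inv_mul_eq_one.1 this).symm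
  have htwo : ∀ (s : Finset (Fin 10)) (a b : Fin 10), a ∈ s → b ∈ s → a ≠ b → 2 ≤ s.card := by
    intro s a b ha hb hab
    exact Finset.one_lt_card.2 ⟨a, ha, b, hb, hab⟩
  have hS7 : S.card = 7 := by decide
  obtain ⟨g, hgT, hg3, hg4⟩ := hT 3 4 (by decide) (by decide) (by decide)
  have hg := hcard g hgT (htwo _ 3 4 hg3 hg4 (by decide))
  have hR : (S \ Fx g).card = 3 := by
    rw [Finset.card_sdiff_of_subset (hFS g hgT)]; omega
  obtain ⟨e, he⟩ := Finset.card_pos.1 (by omega : 0 < (S \ Fx g).card)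
  rw [Finset.mem_sdiff] at he
  have step : ∀ a ∈ Fx g, ∃ h, T h ∧ a ∈ Fx h ∧ e ∈ Fx h ∧ S \ Fx g ⊆ Fx h := by
    intro a ha
    have hae : a ≠ e := fun h => he.2 (h ▸ ha)
    obtain ⟨h, hhT, hha, hhe⟩ := hT a e (hFS g hgT ha) he.1 hae
    refine ⟨h, hhT, hha, hhe, ?_⟩
    have hh := hcard h hhT (htwo _ a e hha hhe hae)
    have h1 : (Fx g ∩ Fx h).card ≤ 1 := by
      by_contra hc
      have := hinter g h hgT hhT (by omega)
      exact he.2 (this ▸ hhe)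
    have h2 : Fx h \ Fx g ⊆ S \ Fx g := Finset.sdiff_subset_sdiff (hFS h hhT) le_rfl
    have h3 : (Fx h \ Fx g).card + (Fx h ∩ Fx g).card = (Fx h).card := Finset.card_sdiff_add_card_inter _ _
    rw [Finset.inter_comm] at h3
    have h4 : Fx h \ Fx g = S \ Fx g := Finset.eq_of_subset_of_card_le h2 (by omega)
    rw [← h4]; exact Finset.sdiff_subset
  obtain ⟨h1, h1T, h13, h1e, h1S⟩ := step 3 hg3
  obtain ⟨h2, h2T, h24, h2e, h2S⟩ := step 4 hg4
  have h12 : h1 = h2 := by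
    apply hinter h1 h2 h1T h2T
    have : S \ Fx g ⊆ Fx h1 ∩ Fx h2 := Finset.subset_inter h1S h2S
    have := Finset.card_le_card this
    omega
  have hgh : g = h1 := by
    apply hinter g h1 hgT h1T
    apply htwo _ 3 4 _ _ (by decide)
    · exact Finset.mem_inter.2 ⟨hg3, h13⟩
    · exact Finset.mem_inter.2 ⟨hg4, h12 ▸ h24⟩
  exact he.2 (hgh ▸ h1e)

lemma index_prim_ten (G : Subgroup (Equiv.Perm (Fin 10))) (Δ : Finset (Fin 10))
    (hc : 2 * Δ.card ≤ 10)
    (hB : ∀ g ∈ G, (∀ x ∈ Δ, g x = x) → g = 1) : 126 ≤ G.index := by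
  classical
  by_contra hlt
  push Not at hlt
  have h1 := index_ge_factorial G Δ hB
  have h2 := index_of_card_le G
  have hf10 : 10 ! = 3628800 := by decide
  rw [hf10] at h2
  have h5 : Δ.card = 5 := by
    by_contra h
    have h6 : 6 ! ≤ (10 - Δ.card)! := Nat.factorial_le (by omega)
    have h7 : 6 ! = 720 := by decide
    omega
  rw [h5] at h1
  have h120 : (10 - 5)! = 120 := by decide
  rw [h120] at h1
  have hdvd : G.index ∣ 3628800 := Dvd.intro_left _ h2
  have hidx : G.index = 120 := by
    generalize G.index = k at *
    interval_cases k <;> first | rfl | (exfalso; revert hdvd; decide)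
  rw [hidx] at h2
  have hcG : Nat.card G = 30240 := by omega
  have hbij : Function.Bijective (baseMap G Δ) := by
    rw [Nat.bijective_iff_injective_and_card]
    refine ⟨baseMap_injective G Δ hB, ?_⟩
    rw [hcG, Nat.card_eq_fintype_card, Fintype.card_embedding_eq, Fintype.card_coe,
      Fintype.card_fin, h5]
    decide
  let e : Fin 5 ≃ Δ := (Δ.equivFinOfCardEq h5).symm
  have hgen : ∀ u : Fin 5 ↪ Fin 10, ∃ g ∈ G, ∀ i, g (e i) = u i := by
    intro u
    obtain ⟨g, hg⟩ := hbij.2 (e.symm.toEmbedding.trans u)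
    refine ⟨g, g.2, fun i => ?_⟩
    have := DFunLike.congr_fun hg (e i)
    have h7 : (e.symm.toEmbedding.trans u) (e i) = u i := by simp
    exact (this.trans h7 : _)
  apply no_sharp_five G
  · intro u v
    obtain ⟨g, hgG, hg⟩ := hgen u
    obtain ⟨h, hhG, hh⟩ := hgen v
    refine ⟨h * g⁻¹, G.mul_mem hhG (G.inv_mem hgG), fun i => ?_⟩
    rw [← hg i, ← hh i]; simp
  · intro k hkG u hk
    obtain ⟨g, hgG, hg⟩ := hgen u
    have : g⁻¹ * k * g = 1 := by
      apply hB _ (G.mul_mem (G.mul_mem (G.inv_mem hgG) hkG) hgG)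
      intro x hx
      have hi := hg (e.symm ⟨x, hx⟩)
      have hk' := hk (e.symm ⟨x, hx⟩)
      rw [Equiv.apply_symm_apply] at hi
      simp only at hi
      rw [Equiv.Perm.mul_apply, Equiv.Perm.mul_apply, hi, hk', ← hi, perm_inv_apply_self]
    have h3 : k = g * 1 * g⁻¹ := by rw [← this]; group
    rw [h3]; simp

theorem index_bound (n : ℕ) (hn : 9 ≤ n) (G : Subgroup (Equiv.Perm (Fin n)))
    [IsPretransitive G (Fin n)] (hA : ¬ alternatingGroup (Fin n) ≤ G) :
    n.choose (n / 2) ≤ 2 * G.index := by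
  by_cases hP : IsPreprimitive G (Fin n)
  · obtain ⟨Δ, hc, hB⟩ := exists_small_base G hP hA
    by_cases h10 : n = 10
    · subst h10
      have := index_prim_ten G Δ hc hB
      have h252 : (10 : ℕ).choose (10 / 2) = 252 := by decide
      omega
    · have h1 := index_ge_factorial G Δ hB
      have h2 := choose_le_fact n hn h10
      have h3 : (n - n / 2)! ≤ (n - Δ.card)! := Nat.factorial_le (by omega)
      omega
  · have : ∃ B : Set (Fin n), IsBlock G B ∧ ¬ IsTrivialBlock B := by
      by_contra hcon
      push Not at hcon
      exact hP ⟨fun {B} hB => hcon B hB⟩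
    obtain ⟨B, hB, hnt⟩ := this
    exact index_imprim G B hB hnt

end GaloisCount

namespace GaloisCount

section hensel
variable {k : Type*} [Field k]

lemma ps_eval_constantCoeff (F : (PowerSeries k)[X]) (a : PowerSeries k) :
    PowerSeries.constantCoeff (F.eval a) =
      (F.map PowerSeries.constantCoeff).eval (PowerSeries.constantCoeff a) := by
  rw [eval_map, Polynomial.eval₂_at_apply]

lemma ps_approx (F : (PowerSeries k)[X]) (w : k)
    (h0 : (F.map PowerSeries.constantCoeff).eval w = 0)
    (h1 : (derivative (F.map PowerSeries.constantCoeff)).eval w ≠ 0) (N : ℕ) :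
    ∃ a : PowerSeries k, PowerSeries.constantCoeff a = w ∧ PowerSeries.X ^ (N + 1) ∣ F.eval a := by
  induction N with
  | zero =>
    refine ⟨PowerSeries.C w, PowerSeries.constantCoeff_C w, ?_⟩
    rw [zero_add, pow_one, PowerSeries.X_dvd_iff, ps_eval_constantCoeff, PowerSeries.constantCoeff_C,
      h0]
  | succ N ih =>
    obtain ⟨a, ha, hd⟩ := ih
    set c : k := ((derivative (F.map PowerSeries.constantCoeff)).eval w)⁻¹ with hc
    have hdX : PowerSeries.X ∣ F.eval a := (dvd_pow_self _ (Nat.succ_ne_zero N)).trans hd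
    refine ⟨a + -(PowerSeries.C c * F.eval a), ?_, ?_⟩
    · rw [map_add, map_neg, map_mul, PowerSeries.X_dvd_iff.1 hdX, mul_zero, neg_zero, add_zero, ha]
    · obtain ⟨q, hq⟩ := F.binomExpansion a (-(PowerSeries.C c * F.eval a))
      rw [hq]
      have e : F.eval a + (derivative F).eval a * -(PowerSeries.C c * F.eval a)
          + q * (-(PowerSeries.C c * F.eval a)) ^ 2
          = F.eval a * (1 - PowerSeries.C c * (derivative F).eval a)
            + F.eval a * (F.eval a * (q * PowerSeries.C c ^ 2)) := by ring
      rw [e, pow_succ]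
      refine dvd_add (mul_dvd_mul hd ?_) (mul_dvd_mul hd (hdX.mul_right _))
      rw [PowerSeries.X_dvd_iff, map_sub, map_mul, map_one, PowerSeries.constantCoeff_C,
        ps_eval_constantCoeff, ha, ← derivative_map, hc, inv_mul_cancel₀ h1, sub_self]

lemma ps_unique_mod (F : (PowerSeries k)[X]) (w : k)
    (h1 : (derivative (F.map PowerSeries.constantCoeff)).eval w ≠ 0) (N : ℕ)
    (a b : PowerSeries k) (ha : PowerSeries.constantCoeff a = w)
    (hb : PowerSeries.constantCoeff b = w)
    (ha0 : PowerSeries.X ^ N ∣ F.eval a) (hb0 : PowerSeries.X ^ N ∣ F.eval b) :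
    PowerSeries.X ^ N ∣ b - a := by
  obtain ⟨q, hq⟩ := F.binomExpansion a (b - a)
  rw [add_sub_cancel] at hq
  have hu : IsUnit ((derivative F).eval a + q * (b - a)) := by
    rw [PowerSeries.isUnit_iff_constantCoeff, map_add, map_mul, map_sub, ha, hb, sub_self, mul_zero,
      add_zero, ps_eval_constantCoeff, ha, ← derivative_map]
    exact isUnit_iff_ne_zero.2 h1
  have e : F.eval b - F.eval a = ((derivative F).eval a + q * (b - a)) * (b - a) := by
    rw [hq]; ring
  have := dvd_sub hb0 ha0
  rw [e] at this
  exact (hu.dvd_mul_left).1 this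

lemma ps_eq_zero_of_dvd (a : PowerSeries k) (h : ∀ N, PowerSeries.X ^ N ∣ a) : a = 0 := by
  ext i
  exact PowerSeries.X_pow_dvd_iff.1 (h (i + 1)) i (Nat.lt_succ_self i)

lemma ps_unique (F : (PowerSeries k)[X]) (w : k)
    (h1 : (derivative (F.map PowerSeries.constantCoeff)).eval w ≠ 0)
    (a b : PowerSeries k) (ha : PowerSeries.constantCoeff a = w)
    (hb : PowerSeries.constantCoeff b = w)
    (ha0 : F.eval a = 0) (hb0 : F.eval b = 0) : a = b := by
  have := ps_eq_zero_of_dvd (b - a) (fun N => ps_unique_mod F w h1 N a b ha hb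
    (ha0 ▸ dvd_zero _) (hb0 ▸ dvd_zero _))
  exact (sub_eq_zero.1 this).symm

lemma ps_hensel (F : (PowerSeries k)[X]) (w : k)
    (h0 : (F.map PowerSeries.constantCoeff).eval w = 0)
    (h1 : (derivative (F.map PowerSeries.constantCoeff)).eval w ≠ 0) :
    ∃ a : PowerSeries k, PowerSeries.constantCoeff a = w ∧ F.eval a = 0 := by
  choose b hb hd using ps_approx F w h0 h1
  let a : PowerSeries k := PowerSeries.mk (fun i => PowerSeries.coeff i (b i))
  have hab : ∀ N, PowerSeries.X ^ (N + 1) ∣ a - b N := by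
    intro N
    rw [PowerSeries.X_pow_dvd_iff]
    intro i hi
    have h2 := ps_unique_mod F w h1 (i + 1) (b N) (b i) (hb N) (hb i)
      ((pow_dvd_pow _ (by omega)).trans (hd N)) (hd i)
    have h3 := PowerSeries.X_pow_dvd_iff.1 h2 i (Nat.lt_succ_self i)
    rw [map_sub] at h3 ⊢
    rw [PowerSeries.coeff_mk]
    exact h3
  refine ⟨a, ?_, ?_⟩
  · rw [← hb 0, ← PowerSeries.coeff_zero_eq_constantCoeff_apply, PowerSeries.coeff_mk,
      PowerSeries.coeff_zero_eq_constantCoeff_apply]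
  · apply ps_eq_zero_of_dvd
    intro N
    have h4 : a - b N ∣ F.eval a - F.eval (b N) := sub_dvd_eval_sub _ _ _
    have h5 := dvd_add ((hab N).trans h4) (hd N)
    rw [sub_add_cancel] at h5
    exact (pow_dvd_pow _ (Nat.le_succ N)).trans h5

end hensel

section group
variable {Ω : Type*} [Fintype Ω] [DecidableEq Ω]

lemma swap_group (G : Subgroup (Equiv.Perm Ω))
    (htr : ∀ a b : Ω, ∃ g ∈ G, g a = b) (p q : Ω) (hpq : p ≠ q) (hsw : Equiv.swap p q ∈ G)
    (W₁ W₂ : Finset Ω) (hdisj : Disjoint W₁ W₂) (hp1 : p ∉ W₁) (hp2 : p ∉ W₂) (hq1 : q ∉ W₁)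
    (hq2 : q ∉ W₂) (hall : ∀ a, a = p ∨ a = q ∨ a ∈ W₁ ∨ a ∈ W₂)
    (D : Set (Equiv.Perm Ω)) (hDG : ∀ g ∈ D, g ∈ G) (hDp : ∀ g ∈ D, g p = p ∨ g p = q)
    (hD1 : ∀ g ∈ D, ∀ w ∈ W₁, g w ∈ W₁) (hD2 : ∀ g ∈ D, ∀ w ∈ W₂, g w ∈ W₂)
    (ht1 : ∀ a ∈ W₁, ∀ b ∈ W₁, ∃ g ∈ D, g a = b) (ht2 : ∀ a ∈ W₂, ∀ b ∈ W₂, ∃ g ∈ D, g a = b)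
    (hm : 0 < W₁.card) (hml : W₁.card < W₂.card)
    (h1 : ¬ (2 + W₁.card) ∣ Fintype.card Ω)
    (h2 : Even (Fintype.card Ω) → Odd W₁.card) : G = ⊤ := by
  classical
  let R : Ω → Ω → Prop := fun a b => Equiv.swap a b ∈ G
  have Rrefl : ∀ a, R a a := fun a => by simp only [R, Equiv.swap_self]; exact G.one_mem
  have Rsymm : ∀ {a b}, R a b → R b a := fun {a b} h => by
    simp only [R] at *; rwa [Equiv.swap_comm]
  have Rtrans : ∀ {a b c}, R a b → R b c → R a c := by
    intro a b c hab hbc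
    by_cases e1 : a = b
    · rwa [e1]
    by_cases e2 : a = c
    · rw [e2]; exact Rrefl c
    · have h := Equiv.swap_mul_swap_mul_swap (x := a) (y := b) (z := c) e1 e2
      apply Rsymm
      simp only [R] at *
      rw [← h]
      exact G.mul_mem (G.mul_mem hbc hab) hbc
  have Rmap : ∀ g ∈ G, ∀ {a b}, R a b → R (g a) (g b) := by
    intro g hg a b hab
    simp only [R] at *
    rw [Equiv.swap_apply_apply]
    exact G.mul_mem (G.mul_mem hg hab) (G.inv_mem hg)
  let cls : Ω → Finset Ω := fun a => Finset.univ.filter (fun b => R a b)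
  have mem_cls : ∀ {a b}, b ∈ cls a ↔ R a b := fun {a b} => by
    simp only [cls, Finset.mem_filter, Finset.mem_univ, true_and]
  have cls_eq : ∀ {a b}, cls b = cls a ↔ R a b := by
    intro a b
    constructor
    · intro h
      rw [← mem_cls, ← h, mem_cls]; exact Rrefl b
    · intro h; ext c; rw [mem_cls, mem_cls]
      exact ⟨fun h2 => Rtrans h h2, fun h2 => Rtrans (Rsymm h) h2⟩
  have cls_card : ∀ a, (cls a).card = (cls p).card := by
    have hle : ∀ a b, (cls a).card ≤ (cls b).card := by
      intro a b
      obtain ⟨g, hg, hgab⟩ := htr a b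
      apply Finset.card_le_card_of_injOn g
      · intro c hc
        have hc' : R a c := mem_cls.1 hc
        have := Rmap g hg hc'
        rw [hgab] at this
        exact mem_cls.2 this
      · exact g.injective.injOn
    exact fun a => le_antisymm (hle _ _) (hle _ _)
  have part : ∀ W : Finset Ω, (∀ a ∈ W, cls a ⊆ W) → (cls p).card ∣ W.card := by
    intro W hW
    rw [Finset.card_eq_sum_card_image cls W]
    apply Finset.dvd_sum
    intro s hs
    obtain ⟨a, ha, rfl⟩ := Finset.mem_image.1 hs
    have : W.filter (fun b => cls b = cls a) = cls a := by
      ext b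
      rw [Finset.mem_filter, cls_eq, mem_cls]
      exact ⟨fun h => h.2, fun h => ⟨hW a ha (mem_cls.2 h), h⟩⟩
    rw [this, cls_card a]
  have hdvd : (cls p).card ∣ Fintype.card Ω := part Finset.univ (fun a _ => Finset.subset_univ _)
  have hcard : Fintype.card Ω = 2 + W₁.card + W₂.card := by
    have : (Finset.univ : Finset Ω) = {p, q} ∪ W₁ ∪ W₂ := by
      ext a; simp only [Finset.mem_univ, Finset.mem_union, Finset.mem_insert, Finset.mem_singleton,
        true_iff]
      rcases hall a with h | h | h | h <;> simp [h]
    rw [← Finset.card_univ, this, Finset.card_union_of_disjoint, Finset.card_union_of_disjoint,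
      Finset.card_pair hpq]
    · rw [Finset.disjoint_left]; intro a ha
      simp only [Finset.mem_insert, Finset.mem_singleton] at ha
      rcases ha with rfl | rfl <;> assumption
    · rw [Finset.disjoint_left]; intro a ha
      simp only [Finset.mem_union, Finset.mem_insert, Finset.mem_singleton] at ha
      rcases ha with (rfl | rfl) | h
      · assumption
      · assumption
      · exact Finset.disjoint_left.1 hdisj h
  have hspread : ∀ g ∈ D, ∀ a, R p a → R p (g a) := by
    intro g hg a h
    have h3 := Rmap g (hDG g hg) h
    rcases hDp g hg with h4 | h4
    · rwa [h4] at h3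
    · rw [h4] at h3; exact Rtrans hsw h3
  have all1 : (∃ w ∈ W₁, R p w) → ∀ w ∈ W₁, R p w := by
    rintro ⟨w, hw, h⟩ w' hw'
    obtain ⟨g, hg, rfl⟩ := ht1 w hw w' hw'
    exact hspread g hg w h
  have all2 : (∃ w ∈ W₂, R p w) → ∀ w ∈ W₂, R p w := by
    rintro ⟨w, hw, h⟩ w' hw'
    obtain ⟨g, hg, rfl⟩ := ht2 w hw w' hw'
    exact hspread g hg w h
  have hdj : ∀ W : Finset Ω, p ∉ W → q ∉ W → ({p, q} ∪ W).card = 2 + W.card := by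
    intro W hp hq
    rw [Finset.card_union_of_disjoint, Finset.card_pair hpq]
    rw [Finset.disjoint_left]; intro a ha
    simp only [Finset.mem_insert, Finset.mem_singleton] at ha
    rcases ha with rfl | rfl <;> assumption
  by_cases c1 : ∃ w ∈ W₁, R p w
  · by_cases c2 : ∃ w ∈ W₂, R p w
    · have hallR : ∀ a, R p a := by
        intro a
        rcases hall a with h | h | h | h
        · rw [h]; exact Rrefl p
        · rw [h]; exact hsw
        · exact all1 c1 a h
        · exact all2 c2 a h
      rw [eq_top_iff]
      intro f _
      induction f using Equiv.Perm.swap_induction_on with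
      | one => exact G.one_mem
      | swap_mul f x y _ ih =>
        exact G.mul_mem (Rtrans (Rsymm (hallR x)) (hallR y)) (ih trivial)
    · exfalso
      apply h1
      rw [← hdj W₁ hp1 hq1]
      have : cls p = {p, q} ∪ W₁ := by
        ext a
        rw [mem_cls]
        simp only [Finset.mem_union, Finset.mem_insert, Finset.mem_singleton]
        constructor
        · intro h
          rcases hall a with h' | h' | h' | h'
          · simp [h']
          · simp [h']
          · simp [h']
          · exact absurd ⟨a, h', h⟩ c2
        · rintro ((rfl | rfl) | h)
          · exact Rrefl _
          · exact hsw
          · exact all1 c1 a h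
      rwa [← this]
  · by_cases c2 : ∃ w ∈ W₂, R p w
    · exfalso
      have : cls p = {p, q} ∪ W₂ := by
        ext a
        rw [mem_cls]
        simp only [Finset.mem_union, Finset.mem_insert, Finset.mem_singleton]
        constructor
        · intro h
          rcases hall a with h' | h' | h' | h'
          · simp [h']
          · simp [h']
          · exact absurd ⟨a, h', h⟩ c1
          · simp [h']
        · rintro ((rfl | rfl) | h)
          · exact Rrefl _
          · exact hsw
          · exact all2 c2 a h
      rw [this, hdj W₂ hp2 hq2, hcard] at hdvd
      have h5 : 2 + W₂.card ∣ W₁.card := by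
        have : 2 + W₁.card + W₂.card = (2 + W₂.card) + W₁.card := by ring
        rw [this] at hdvd
        exact (Nat.dvd_add_right (dvd_refl _)).1 hdvd
      have := Nat.le_of_dvd hm h5
      omega
    · exfalso
      have hc2 : cls p = {p, q} := by
        ext a
        rw [mem_cls]
        simp only [Finset.mem_insert, Finset.mem_singleton]
        constructor
        · intro h
          rcases hall a with h' | h' | h' | h'
          · simp [h']
          · simp [h']
          · exact absurd ⟨a, h', h⟩ c1
          · exact absurd ⟨a, h', h⟩ c2
        · rintro (rfl | rfl)
          · exact Rrefl _
          · exact hsw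
      have hc : (cls p).card = 2 := by rw [hc2, Finset.card_pair hpq]
      rw [hc] at hdvd
      have hodd := h2 (even_iff_two_dvd.2 hdvd)
      have third : ∀ a b c, R a b → R a c → a ≠ b → a ≠ c → b = c := by
        intro a b c hab hac nab nac
        by_contra hbc
        have hsub : ({a, b, c} : Finset Ω) ⊆ cls a := by
          intro d hd
          simp only [Finset.mem_insert, Finset.mem_singleton] at hd
          rw [mem_cls]
          rcases hd with rfl | rfl | rfl
          · exact Rrefl _
          · exact hab
          · exact hac
        have := Finset.card_le_card hsub
        rw [cls_card, hc, Finset.card_eq_three.2 ⟨a, b, c, nab, nac, hbc, rfl⟩] at this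
        omega
      by_cases c3 : ∃ w ∈ W₁, ∃ w' ∈ W₁, w ≠ w' ∧ R w w'
      · obtain ⟨w, hw, w', hw', hne, hR⟩ := c3
        have := part W₁ (by
          intro a ha b hb
          rw [mem_cls] at hb
          obtain ⟨g, hg, rfl⟩ := ht1 w hw a ha
          by_cases e : g w = b
          · rw [← e]; exact ha
          · have := third _ _ _ (Rmap g (hDG g hg) hR) hb (fun h => hne (g.injective h)) e
            rw [← this]; exact hD1 g hg w' hw')
        rw [hc] at this
        exact (Nat.not_even_iff_odd.2 hodd) (even_iff_two_dvd.2 this)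
      · obtain ⟨w, hw⟩ := Finset.card_pos.1 hm
        obtain ⟨w', hw'⟩ : ∃ w', w' ∈ (cls w).erase w := by
          apply Finset.card_pos.1
          rw [Finset.card_erase_of_mem (mem_cls.2 (Rrefl w)), cls_card, hc]; norm_num
        rw [Finset.mem_erase, mem_cls] at hw'
        obtain ⟨hne, hR⟩ := hw'
        have hw2 : w' ∈ W₂ := by
          rcases hall w' with h' | h' | h' | h'
          · exact absurd ⟨w, hw, Rsymm (h' ▸ hR)⟩ c1
          · exact absurd ⟨w, hw, Rtrans hsw (Rsymm (h' ▸ hR))⟩ c1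
          · exact absurd ⟨w, hw, w', h', hne.symm, hR⟩ c3
          · exact h'
        have hex : ∀ b : Ω, ∃ a, b ∈ W₂ → a ∈ W₁ ∧ R a b := by
          intro b
          by_cases hb : b ∈ W₂
          · obtain ⟨g, hg, rfl⟩ := ht2 w' hw2 b hb
            exact ⟨g w, fun _ => ⟨hD1 g hg w hw, Rmap g (hDG g hg) hR⟩⟩
          · exact ⟨b, fun h => absurd h hb⟩
        choose u hu using hex
        have : W₂.card ≤ W₁.card := by
          apply Finset.card_le_card_of_injOn u
          · intro b hb; exact (hu b hb).1
          · intro b hb b' hb' hbb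
            have e1 := hu b hb
            have e2 := hu b' hb'
            rw [← hbb] at e2
            exact third _ _ _ e1.2 e2.2
              (fun h => Finset.disjoint_left.1 hdisj e1.1 (by rw [h]; exact hb))
              (fun h => Finset.disjoint_left.1 hdisj e1.1 (by rw [h]; exact hb'))
        omega

end group
end GaloisCount

namespace GaloisCount

lemma gal_perm {K L Ω : Type*} [Field K] [Field L] [Algebra K L] [Fintype Ω] (P : K[X])
    (x : Ω → L) (hx : Function.Injective x)
    (hP : P.map (algebraMap K L) = ∏ ω, (X - C (x ω))) (γ : L ≃ₐ[K] L) :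
    ∃ π : Equiv.Perm Ω, ∀ ω, γ (x ω) = x (π ω) := by
  classical
  have key : ∀ y : L, aeval y P = 0 → ∃ ω, y = x ω := by
    intro y hy
    rw [← eval_map_algebraMap, hP, eval_prod, Finset.prod_eq_zero_iff] at hy
    obtain ⟨ω, _, hω⟩ := hy
    refine ⟨ω, ?_⟩
    simpa [sub_eq_zero] using hω
  have hroot : ∀ ω, aeval (x ω) P = 0 := by
    intro ω
    rw [← eval_map_algebraMap, hP, eval_prod]
    exact Finset.prod_eq_zero (Finset.mem_univ ω) (by simp)
  have h1 : ∀ ω, ∃ ω', γ (x ω) = x ω' := by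
    intro ω
    apply key
    rw [← AlgEquiv.coe_toAlgHom, aeval_algHom_apply, hroot, map_zero]
  choose f hf using h1
  have hfi : Function.Injective f := by
    intro a b hab
    apply hx
    apply γ.injective
    rw [hf, hf, hab]
  exact ⟨Equiv.ofBijective f (Finite.injective_iff_bijective.1 hfi), fun ω => hf ω⟩

lemma gal_transfer {K E Ω : Type*} [Field K] [CharZero K] [Field E] [Algebra K E] [Fintype Ω]
    (P : K[X]) (r : Ω → E) (hr : Function.Injective r)
    (hP : P.map (algebraMap K E) = ∏ ω, (X - C (r ω))) (hirr : Irreducible P) :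
    ∃ x : Ω → P.SplittingField, Function.Injective x ∧
      P.map (algebraMap K P.SplittingField) = ∏ ω, (X - C (x ω)) ∧
      (∀ (τ : E ≃ₐ[K] E) (π : Equiv.Perm Ω), (∀ ω, τ (r ω) = r (π ω)) →
        ∃ γ : P.SplittingField ≃ₐ[K] P.SplittingField, ∀ ω, γ (x ω) = x (π ω)) ∧
      (∀ a b, ∃ γ : P.SplittingField ≃ₐ[K] P.SplittingField, γ (x a) = x b) := by
  classical
  have hs : (P.map (algebraMap K E)).Splits := by
    rw [hP]; exact Splits.prod fun ω _ => Splits.X_sub_C _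
  let ι : P.SplittingField →ₐ[K] E := SplittingField.lift P hs
  have hsL : (P.map (algebraMap K P.SplittingField)).Splits := SplittingField.splits P
  have hcomp : (P.map (algebraMap K P.SplittingField)).map (ι : P.SplittingField →+* E) =
      P.map (algebraMap K E) := by
    rw [Polynomial.map_map, AlgHom.comp_algebraMap]
  have hrange : ∀ ω, ∃ y : P.SplittingField, ι y = r ω := by
    intro ω
    have := hsL.mem_range_of_isRoot (i := (ι : P.SplittingField →+* E)) (x := r ω)
      (Polynomial.map_ne_zero hirr.ne_zero) (by
        rw [hcomp, hP, IsRoot, eval_prod]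
        exact Finset.prod_eq_zero (Finset.mem_univ ω) (by simp))
    obtain ⟨y, hy⟩ := this
    exact ⟨y, hy⟩
  choose x hx using hrange
  have hxi : Function.Injective x := fun a b h => hr (by rw [← hx, ← hx, h])
  have hPL : P.map (algebraMap K P.SplittingField) = ∏ ω, (X - C (x ω)) := by
    apply Polynomial.map_injective (ι : P.SplittingField →+* E) ι.toRingHom.injective
    rw [hcomp, hP, Polynomial.map_prod]
    apply Finset.prod_congr rfl
    intro ω _
    simp [hx]
  refine ⟨x, hxi, hPL, ?_, ?_⟩
  · intro τ π hτ
    letI : Algebra P.SplittingField E := ι.toRingHom.toAlgebra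
    haveI : IsScalarTower K P.SplittingField E := IsScalarTower.of_algebraMap_eq'
      (AlgHom.comp_algebraMap ι).symm
    refine ⟨τ.restrictNormal P.SplittingField, fun ω => ?_⟩
    apply ι.toRingHom.injective
    have := AlgEquiv.restrictNormal_commutes τ P.SplittingField (x ω)
    refine this.trans ?_
    change τ (ι (x ω)) = ι (x (π ω))
    rw [hx, hx, hτ]
  · intro a b
    have hroot : ∀ ω, aeval (x ω) P = 0 := by
      intro ω
      rw [← eval_map_algebraMap, hPL, eval_prod]
      exact Finset.prod_eq_zero (Finset.mem_univ ω) (by simp)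
    have hc : IsConjRoot K (x a) (x b) := by
      rw [IsConjRoot, ← minpoly.eq_of_irreducible hirr (hroot a),
        ← minpoly.eq_of_irreducible hirr (hroot b)]
    obtain ⟨σ, hσ⟩ := hc.symm.exists_algEquiv
    exact ⟨σ, hσ⟩

/-- The Galois group of `P` is the full symmetric group of its `n` distinct roots. -/
def FullGal {K : Type*} [Field K] (n : ℕ) (P : K[X]) : Prop :=
  ∃ x : Fin n → P.SplittingField, Function.Injective x ∧
    P.map (algebraMap K P.SplittingField) = ∏ i, (X - C (x i)) ∧
    ∀ π : Equiv.Perm (Fin n), ∃ γ : P.SplittingField ≃ₐ[K] P.SplittingField,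
      ∀ i, γ (x i) = x (π i)

lemma fullGal_of {K E Ω : Type*} [Field K] [CharZero K] [Field E] [Algebra K E] [Fintype Ω]
    [DecidableEq Ω]
    (P : K[X]) (r : Ω → E) (hr : Function.Injective r)
    (hP : P.map (algebraMap K E) = ∏ ω, (X - C (r ω))) (hirr : Irreducible P)
    (p q : Ω) (hpq : p ≠ q) (W₁ W₂ : Finset Ω) (hdisj : Disjoint W₁ W₂)
    (hp1 : p ∉ W₁) (hp2 : p ∉ W₂) (hq1 : q ∉ W₁)
    (hq2 : q ∉ W₂) (hall : ∀ a, a = p ∨ a = q ∨ a ∈ W₁ ∨ a ∈ W₂)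
    (hsw : ∃ τ : E ≃ₐ[K] E, ∀ ω, τ (r ω) = r (Equiv.swap p q ω))
    (ht1 : ∀ a ∈ W₁, ∀ b ∈ W₁, ∃ τ : E ≃ₐ[K] E, ∃ π : Equiv.Perm Ω, (∀ ω, τ (r ω) = r (π ω)) ∧
      (π p = p ∨ π p = q) ∧ (∀ w ∈ W₁, π w ∈ W₁) ∧ (∀ w ∈ W₂, π w ∈ W₂) ∧ π a = b)
    (ht2 : ∀ a ∈ W₂, ∀ b ∈ W₂, ∃ τ : E ≃ₐ[K] E, ∃ π : Equiv.Perm Ω, (∀ ω, τ (r ω) = r (π ω)) ∧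
      (π p = p ∨ π p = q) ∧ (∀ w ∈ W₁, π w ∈ W₁) ∧ (∀ w ∈ W₂, π w ∈ W₂) ∧ π a = b)
    (hm : 0 < W₁.card) (hml : W₁.card < W₂.card)
    (h1 : ¬ (2 + W₁.card) ∣ Fintype.card Ω)
    (h2 : Even (Fintype.card Ω) → Odd W₁.card) (n : ℕ) (hn : Fintype.card Ω = n) :
    FullGal n P := by
  obtain ⟨x, hx, hPL, htrans, htr⟩ := gal_transfer P r hr hP hirr
  let G : Subgroup (Equiv.Perm Ω) :=
    { carrier := {π | ∃ γ : P.SplittingField ≃ₐ[K] P.SplittingField, ∀ ω, γ (x ω) = x (π ω)}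
      mul_mem' := by
        rintro a b ⟨γ, hγ⟩ ⟨δ, hδ⟩
        refine ⟨γ * δ, fun ω => ?_⟩
        rw [AlgEquiv.mul_apply, hδ, hγ]; rfl
      one_mem' := ⟨1, fun ω => rfl⟩
      inv_mem' := by
        rintro a ⟨γ, hγ⟩
        refine ⟨γ⁻¹, fun ω => ?_⟩
        apply γ.injective
        rw [hγ]
        have e1 : a (a⁻¹ ω) = ω := Equiv.apply_symm_apply a ω
        rw [e1]
        exact AlgEquiv.apply_symm_apply γ _ }
  have hG : G = ⊤ := by
    apply swap_group G ?_ p q hpq ?_ W₁ W₂ hdisj hp1 hp2 hq1 hq2 hall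
      {π | (∃ τ : E ≃ₐ[K] E, (∀ ω, τ (r ω) = r (π ω))) ∧
        (π p = p ∨ π p = q) ∧ (∀ w ∈ W₁, π w ∈ W₁) ∧ (∀ w ∈ W₂, π w ∈ W₂)} ?_ ?_ ?_ ?_ ?_ ?_ hm hml
        h1 h2
    · intro a b
      obtain ⟨γ, hγ⟩ := htr a b
      obtain ⟨π, hπ⟩ := gal_perm P x hx hPL γ
      exact ⟨π, ⟨γ, hπ⟩, hx (by rw [← hπ, hγ])⟩
    · obtain ⟨τ, hτ⟩ := hsw
      exact htrans τ _ hτ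
    · rintro g ⟨⟨τ, hτ⟩, _⟩
      exact htrans τ _ hτ
    · rintro g ⟨_, h, _⟩; exact h
    · rintro g ⟨_, _, h, _⟩; exact h
    · rintro g ⟨_, _, _, h⟩; exact h
    · intro a ha b hb
      obtain ⟨τ, π, h3, h4, h5, h6, h7⟩ := ht1 a ha b hb
      exact ⟨π, ⟨⟨τ, h3⟩, h4, h5, h6⟩, h7⟩
    · intro a ha b hb
      obtain ⟨τ, π, h3, h4, h5, h6, h7⟩ := ht2 a ha b hb
      exact ⟨π, ⟨⟨τ, h3⟩, h4, h5, h6⟩, h7⟩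
  let e : Fin n ≃ Ω := (Fintype.equivFinOfCardEq hn).symm
  refine ⟨x ∘ e, hx.comp e.injective, ?_, ?_⟩
  · rw [hPL]
    exact (Equiv.prod_comp e (fun ω => (X - C (x ω)))).symm
  · intro π
    have : (e.symm.trans (π.trans e) : Equiv.Perm Ω) ∈ G := by rw [hG]; trivial
    obtain ⟨γ, hγ⟩ := this
    refine ⟨γ, fun i => ?_⟩
    have := hγ (e i)
    simpa using this

end GaloisCount

namespace GaloisCount

/-- The direction polynomial of our pencils. -/
noncomputable def vpoly (m l : ℕ) : ℤ[X] := (X ^ m - C 2) * (X ^ l - C 3)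

lemma vpoly_monic (m l : ℕ) (hm : m ≠ 0) (hl : l ≠ 0) : (vpoly m l).Monic :=
  (monic_X_pow_sub_C _ hm).mul (monic_X_pow_sub_C _ hl)

lemma vpoly_natDegree (m l : ℕ) (hm : m ≠ 0) (hl : l ≠ 0) : (vpoly m l).natDegree = m + l := by
  rw [vpoly, (monic_X_pow_sub_C _ hm).natDegree_mul (monic_X_pow_sub_C _ hl),
    natDegree_X_pow_sub_C, natDegree_X_pow_sub_C]

lemma pow_two_three {k : Type*} [Field k] [CharZero k] (m l : ℕ) (hm : m ≠ 0) (hl : l ≠ 0) (w : k)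
    (h2 : w ^ m = 2) (h3 : w ^ l = 3) : False := by
  have h : (2 : k) ^ l = 3 ^ m := by
    rw [← h2, ← h3, ← pow_mul, ← pow_mul, mul_comm]
  have h' : (2 : ℕ) ^ l = 3 ^ m := by exact_mod_cast h
  have e1 : Even ((2 : ℕ) ^ l) := (Nat.even_pow' hl).2 even_two
  have e2 : Odd ((3 : ℕ) ^ m) := Odd.pow (by decide)
  rw [h'] at e1
  exact (Nat.not_even_iff_odd.2 e2) e1

lemma vpoly_separable {k : Type*} [Field k] [CharZero k] [IsAlgClosed k] (m l : ℕ) (hm : m ≠ 0)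
    (hl : l ≠ 0) : ((vpoly m l).map (Int.castRingHom k)).Separable := by
  have e : (vpoly m l).map (Int.castRingHom k) = (X ^ m - C 2) * (X ^ l - C 3) := by
    simp only [vpoly, Polynomial.map_mul, Polynomial.map_sub, Polynomial.map_pow, map_X, map_C]
    simp
  rw [e]
  refine Separable.mul ?_ ?_ ?_
  · exact separable_X_pow_sub_C 2 (by exact_mod_cast hm) two_ne_zero
  · exact separable_X_pow_sub_C 3 (by exact_mod_cast hl) three_ne_zero
  · rw [Polynomial.isCoprime_iff_aeval_ne_zero_of_isAlgClosed k k]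
    intro a
    by_contra! h
    apply pow_two_three m l hm hl a
    · have := h.1
      simpa [sub_eq_zero] using this
    · have := h.2
      simpa [sub_eq_zero] using this

lemma irreducible_X_pow_sub_prime (m : ℕ) (hm : m ≠ 0) (p : ℕ) (hp : p.Prime) :
    Irreducible (X ^ m - C (p : ℚ) : ℚ[X]) := by
  have hpp : Prime (p : ℤ) := Nat.prime_iff_prime_int.1 hp
  have hmon : (X ^ m - C (p : ℤ) : ℤ[X]).Monic := monic_X_pow_sub_C _ hm
  have h1 : Irreducible (X ^ m - C (p : ℤ) : ℤ[X]) := by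
    have hE : (X ^ m - C (p : ℤ) : ℤ[X]).IsEisensteinAt (Ideal.span {(p : ℤ)}) := by
      refine ⟨?_, ?_, ?_⟩
      · rw [hmon.leadingCoeff, Ideal.mem_span_singleton]
        exact fun h => hpp.not_isUnit (isUnit_of_dvd_one h)
      · intro i hi
        rw [natDegree_X_pow_sub_C] at hi
        rw [coeff_sub, coeff_X_pow, if_neg hi.ne, coeff_C, zero_sub]
        split_ifs
        · exact neg_mem (Ideal.mem_span_singleton_self _)
        · simp
      · rw [coeff_sub, coeff_X_pow, if_neg (Ne.symm hm), coeff_C_zero, zero_sub,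
          Ideal.span_singleton_pow, Ideal.mem_span_singleton, dvd_neg]
        intro h
        rw [sq] at h
        have := (mul_dvd_mul_iff_left hpp.ne_zero).1 (h.trans (dvd_of_eq (mul_one _).symm))
        exact hpp.not_isUnit (isUnit_of_dvd_one this)
    refine hE.irreducible ((Ideal.span_singleton_prime hpp.ne_zero).2 hpp) hmon.isPrimitive ?_
    rw [natDegree_X_pow_sub_C]
    omega
  have := (hmon.irreducible_iff_irreducible_map_fraction_map (K := ℚ)).1 h1
  simpa using this

lemma gal_trans_roots {k : Type*} [Field k] [Algebra ℚ k] [IsAlgClosure ℚ k] (m : ℕ) (hm : m ≠ 0) (p : ℕ) (hp : p.Prime) (a b : k)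
    (ha : a ^ m = p) (hb : b ^ m = p) : ∃ σ : k ≃ₐ[ℚ] k, σ a = b := by
  have hirr := irreducible_X_pow_sub_prime m hm p hp
  have hmon : (X ^ m - C (p : ℚ) : ℚ[X]).Monic := monic_X_pow_sub_C _ hm
  have key : ∀ c : k, c ^ m = p → minpoly ℚ c = X ^ m - C (p : ℚ) := by
    intro c hc
    refine (minpoly.eq_of_irreducible_of_monic hirr ?_ hmon).symm
    simp [hc]
  have h : IsConjRoot ℚ b a := by
    unfold IsConjRoot
    rw [key a ha, key b hb]
  haveI : Normal ℚ k := IsAlgClosure.normal ℚ k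
  obtain ⟨σ, hσ⟩ := h.exists_algEquiv
  first
    | exact ⟨σ, hσ⟩
    | exact ⟨σ.symm, by rw [← hσ]; simp⟩

/-- irreducibility of the generic member -/
lemma generic_irreducible (f v : ℤ[X]) (hf : f.Monic) (hirr : Irreducible f) (hv : v ≠ 0)
    (hdeg : v.natDegree < f.natDegree) :
    (f.map C + C X * v.map C : ℤ[X][X]).Monic ∧
    Irreducible ((f.map C + C X * v.map C : ℤ[X][X]).map (algebraMap ℤ[X] (FractionRing ℤ[X]))) := by
  have hmon : (f.map C + C X * v.map C : ℤ[X][X]).Monic := by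
    refine (hf.map C).add_of_left ?_
    rw [degree_map_eq_of_injective C_injective, degree_mul, degree_map_eq_of_injective C_injective]
    rw [degree_C X_ne_zero, zero_add]
    exact degree_lt_degree hdeg
  refine ⟨hmon, ?_⟩
  rw [← hmon.irreducible_iff_irreducible_map_fraction_map]
  have e : (Polynomial.Bivariate.swap (R := ℤ)) (f.map C + C X * v.map C : ℤ[X][X]) = C v * X + C f := by
    rw [map_add, map_mul, Bivariate.swap_map_C, Bivariate.swap_map_C]
    simp only [Bivariate.swap_C, map_X]
    ring
  rw [← MulEquiv.irreducible_iff (Polynomial.Bivariate.swap (R := ℤ)), e]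
  apply irreducible_C_mul_X_add_C hv
  have : IsRelPrime f v := by
    rw [hirr.isRelPrime_iff_not_dvd]
    intro h
    exact absurd (natDegree_le_of_dvd h hv) (by omega)
  exact this.symm

end GaloisCount

namespace GaloisCount

section emb
variable (k : Type*) [Field k] [CharZero k]

lemma psX_ne : algebraMap (PowerSeries k) (FractionRing (PowerSeries k)) PowerSeries.X ≠ 0 := by
  rw [Ne, FaithfulSMul.algebraMap_eq_zero_iff]
  exact PowerSeries.X_ne_zero

/-- `T ↦ u⁻²` on polynomials. -/
noncomputable def emb0 : ℤ[X] →+* FractionRing (PowerSeries k) :=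
  eval₂RingHom (Int.castRingHom _)
    ((algebraMap (PowerSeries k) (FractionRing (PowerSeries k)) PowerSeries.X ^ 2)⁻¹)

lemma emb0_injective : Function.Injective (emb0 k) := by
  rw [injective_iff_map_eq_zero]
  intro p hp
  by_contra hne
  have h1 : eval₂ (Int.castRingHom (FractionRing (PowerSeries k)))
    ((algebraMap (PowerSeries k) (FractionRing (PowerSeries k)) PowerSeries.X ^ 2)⁻¹) p = 0 := hp
  haveI : Invertible ((algebraMap (PowerSeries k) (FractionRing (PowerSeries k)) PowerSeries.X ^ 2)⁻¹) :=
    invertibleOfNonzero (inv_ne_zero (pow_ne_zero _ (psX_ne k)))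
  rw [← eval₂_reverse_eq_zero_iff, invOf_eq_inv, inv_inv] at h1
  have h2 : algebraMap (PowerSeries k) (FractionRing (PowerSeries k))
      (eval₂ (Int.castRingHom (PowerSeries k)) (PowerSeries.X ^ 2) (reverse p)) = 0 := by
    rw [hom_eval₂, map_pow, ← h1]
    congr 1
    exact RingHom.ext_int _ _
  rw [FaithfulSMul.algebraMap_eq_zero_iff] at h2
  have h3 := congrArg (PowerSeries.constantCoeff (R := k)) h2
  rw [hom_eval₂, map_pow, PowerSeries.constantCoeff_X, map_zero, zero_pow two_ne_zero, eval₂_at_zero,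
    coeff_zero_reverse] at h3
  rw [RingHom.ext_int (PowerSeries.constantCoeff.comp (Int.castRingHom (PowerSeries k))) (Int.castRingHom k)] at h3
  simp [hne] at h3

/-- The induced embedding of the rational function field. -/
noncomputable def emb : FractionRing ℤ[X] →+* FractionRing (PowerSeries k) :=
  IsFractionRing.lift (emb0_injective k)

lemma emb_algebraMap (p : ℤ[X]) : emb k (algebraMap ℤ[X] (FractionRing ℤ[X]) p) = emb0 k p :=
  IsFractionRing.lift_algebraMap _ _

variable {k}

lemma autE (ρ : PowerSeries k ≃+* PowerSeries k) (hρ : ρ (PowerSeries.X ^ 2) = PowerSeries.X ^ 2) :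
    letI := (emb k).toAlgebra
    ∃ τ : FractionRing (PowerSeries k) ≃ₐ[FractionRing ℤ[X]] FractionRing (PowerSeries k),
      ∀ a, τ (algebraMap (PowerSeries k) (FractionRing (PowerSeries k)) a) = algebraMap _ _ (ρ a) := by
  letI := (emb k).toAlgebra
  set τ0 : FractionRing (PowerSeries k) ≃+* FractionRing (PowerSeries k) :=
    IsFractionRing.ringEquivOfRingEquiv ρ with hτ0
  have h0 : ∀ a, τ0 (algebraMap (PowerSeries k) (FractionRing (PowerSeries k)) a)
      = algebraMap _ _ (ρ a) := fun a => IsFractionRing.ringEquivOfRingEquiv_algebraMap ρ a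
  have hcomm : (τ0 : FractionRing (PowerSeries k) →+* FractionRing (PowerSeries k)).comp (emb k) = emb k := by
    apply IsLocalization.ringHom_ext (nonZeroDivisors ℤ[X])
    apply Polynomial.ringHom_ext
    · intro a
      simp
    · simp only [RingHom.comp_apply, emb_algebraMap]
      have : emb0 k X = ((algebraMap (PowerSeries k) (FractionRing (PowerSeries k)) PowerSeries.X ^ 2)⁻¹) := by
        simp [emb0]
      rw [this, RingHom.coe_coe, map_inv₀, ← map_pow, h0, hρ]
  refine ⟨AlgEquiv.ofRingEquiv (f := τ0) ?_, h0⟩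
  intro r
  exact congrArg (fun g : _ →+* _ => g r) hcomm

end emb

lemma prod_eq_of_roots {E Ω : Type*} [Field E] [Fintype Ω] (P : E[X]) (hP : P.Monic) (r : Ω → E)
    (hr : Function.Injective r) (h0 : ∀ ω, P.eval (r ω) = 0) (hd : P.natDegree = Fintype.card Ω) :
    P = ∏ ω, (X - C (r ω)) := by
  classical
  have hdvd : ∏ ω, (X - C (r ω)) ∣ P := by
    apply Finset.prod_dvd_of_coprime
    · intro a _ b _ hab
      exact pairwise_coprime_X_sub_C hr hab
    · intro ω _
      exact dvd_iff_isRoot.2 (h0 ω)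
  refine (eq_of_monic_of_dvd_of_natDegree_le (monic_prod_X_sub_C r _) hP hdvd ?_)
  rw [natDegree_finsetProd_X_sub_C_eq_card, hd]
  rfl

end GaloisCount

namespace GaloisCount

lemma emb0_X (k : Type*) [Field k] [CharZero k] : emb0 k X =
    ((algebraMap (PowerSeries k) (FractionRing (PowerSeries k)) PowerSeries.X ^ 2)⁻¹) := by
  simp [emb0]

lemma psMapEquiv {k : Type*} [Field k] (σ : k ≃+* k) : ∃ ρ : PowerSeries k ≃+* PowerSeries k,
    ρ PowerSeries.X = PowerSeries.X ∧
    ∀ a, PowerSeries.constantCoeff (ρ a) = σ (PowerSeries.constantCoeff a) := by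
  refine ⟨RingEquiv.ofRingHom (PowerSeries.map (σ : k →+* k)) (PowerSeries.map (σ.symm : k →+* k))
    ?_ ?_, ?_, ?_⟩
  · ext a; simp
  · ext a; simp
  · exact PowerSeries.map_X (σ : k →+* k)
  · intro a
    change PowerSeries.constantCoeff (PowerSeries.map (σ : k →+* k) a) = _
    rw [← PowerSeries.coeff_zero_eq_constantCoeff_apply, PowerSeries.coeff_map,
      PowerSeries.coeff_zero_eq_constantCoeff_apply]
    rfl

lemma field_aux1 {E : Type*} [Field E] (a b : E) (hb : b ≠ 0) : a = b * (a / b) := by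
  field_simp

lemma field_aux2 {E : Type*} [Field E] (a b p q : E) (hb : b ≠ 0) :
    a * b * (p + b⁻¹ * q) = a * b * p + a * q := by
  field_simp

theorem fullGal_pencil_aux (k : Type) [Field k] [Algebra ℚ k] [IsAlgClosure ℚ k] (f : ℤ[X])
    (hf : f.Monic) (hirr : Irreducible f) (n m l : ℕ) (hn : f.natDegree = n) (hml : m + l + 2 = n)
    (hm : 0 < m) (hlt : m < l) (h1 : ¬ (2 + m) ∣ n) (h2 : Even n → Odd m) :
    FullGal n ((f.map C + C X * (vpoly m l).map C : ℤ[X][X]).map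
      (algebraMap ℤ[X] (FractionRing ℤ[X]))) := by
  classical
  haveI : CharZero k := algebraRat.charZero k
  haveI : IsAlgClosed k := IsAlgClosure.isAlgClosed ℚ
  set v := vpoly m l with hv
  have hvmon : v.Monic := vpoly_monic m l hm.ne' (by omega)
  have hvdeg : v.natDegree = m + l := vpoly_natDegree m l hm.ne' (by omega)
  obtain ⟨hPmon, hPirr⟩ := generic_irreducible f v hf hirr hvmon.ne_zero (by omega)
  set P : ℤ[X][X] := f.map C + C X * v.map C with hPdef
  -- roots of v
  set vk := v.map (Int.castRingHom k) with hvk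
  have hvsep : vk.Separable := vpoly_separable m l hm.ne' (by omega)
  have hvder : ∀ w, vk.eval w = 0 → (derivative vk).eval w ≠ 0 := by
    intro w hw
    have := hvsep.eval₂_derivative_ne_zero (RingHom.id k) (x := w) (by simpa [eval₂_id] using hw)
    simpa [eval₂_id] using this
  have hvkmon : vk.Monic := hvmon.map _
  have hvkdeg : vk.natDegree = m + l := by rw [hvk, hvmon.natDegree_map, hvdeg]
  have hvkeval : ∀ w, vk.eval w = (w ^ m - 2) * (w ^ l - 3) := by
    intro w
    rw [hvk, hv, vpoly]
    simp
  -- the power series polynomials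
  set Rk := PowerSeries k
  set E := FractionRing Rk with hE
  set ι := algebraMap Rk E with hι
  have hιinj : Function.Injective ι := FaithfulSMul.algebraMap_injective _ _
  set u : Rk := PowerSeries.X with hu
  have hu0 : ι u ≠ 0 := psX_ne k
  set Pu : Rk[X] := C (u ^ 2) * f.map (Int.castRingHom Rk) + v.map (Int.castRingHom Rk) with hPu
  set Q : Rk[X] := scaleRoots (f.map (Int.castRingHom Rk)) u + scaleRoots (v.map (Int.castRingHom Rk)) u
    with hQ
  have hcc : (PowerSeries.constantCoeff (R := k)).comp (Int.castRingHom Rk) = Int.castRingHom k :=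
    RingHom.ext_int _ _
  have hPucc : Pu.map PowerSeries.constantCoeff = vk := by
    rw [hPu, Polynomial.map_add, Polynomial.map_mul, map_C, map_pow, hu, PowerSeries.constantCoeff_X, map_map, map_map, hcc]
    simp [hvk]
  have hQcc : Q.map PowerSeries.constantCoeff = X ^ n + X ^ (m + l) := by
    have hfl : ∀ g : ℤ[X], g.Monic → (scaleRoots (g.map (Int.castRingHom Rk)) u).map
        PowerSeries.constantCoeff = X ^ g.natDegree := by
      intro g hg
      rw [map_scaleRoots, hu, PowerSeries.constantCoeff_X, scaleRoots_zero, map_map, hcc,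
        (hg.map _).leadingCoeff, one_smul, hg.natDegree_map]
      rw [(hg.map _).leadingCoeff]
      simp
    rw [hQ, Polynomial.map_add, hfl f hf, hfl v hvmon, hn, hvdeg]
  obtain ⟨i, hi⟩ := IsAlgClosed.exists_pow_nat_eq (-1 : k) (n := 2) (by norm_num)
  have hi0 : i ≠ 0 := by
    rintro rfl
    norm_num at hi
  set j : Bool → k := fun b => if b then i else -i with hj
  have hj2 : ∀ b, j b ^ 2 = -1 := by
    intro b; cases b <;> simp [hj, hi]
  have hj0 : ∀ b, j b ≠ 0 := by
    intro b; cases b <;> simp [hj, hi0]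
  have hjne : j true ≠ j false := by
    simp only [hj]
    intro h
    simp [self_eq_neg] at h
    exact hi0 h
  have hjinj : Function.Injective j := by
    intro a b h
    cases a <;> cases b <;> first | rfl | exact absurd h hjne | exact absurd h.symm hjne
  have hQ0 : ∀ b, (Q.map PowerSeries.constantCoeff).eval (j b) = 0 := by
    intro b
    rw [hQcc, eval_add, eval_pow, eval_X, eval_pow, eval_X, ← hml, pow_add _ (m + l), hj2]
    ring
  have hQ1 : ∀ b, (derivative (Q.map PowerSeries.constantCoeff)).eval (j b) ≠ 0 := by
    intro b
    have hp : (derivative (X ^ n + X ^ (m + l) : k[X])).eval (j b) = -2 * j b ^ (m + l - 1) := by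
      obtain ⟨N, hN⟩ : ∃ N, m + l = N + 1 := ⟨m + l - 1, by omega⟩
      have hN2 : n = N + 3 := by omega
      rw [hN2, hN]
      simp only [derivative_add, derivative_X_pow, eval_add, eval_mul, eval_pow, eval_X]
      simp only [Nat.add_sub_cancel, map_natCast, eval_natCast]
      have : j b ^ (N + 3 - 1) = - j b ^ N := by
        rw [show N + 3 - 1 = N + 2 by omega, pow_add, hj2]; ring
      rw [this]
      push_cast
      ring
    rw [hQcc, hp]
    exact mul_ne_zero (by norm_num) (pow_ne_zero _ (hj0 b))
  choose z hzc hz0 using fun b => ps_hensel Q (j b) (hQ0 b) (hQ1 b)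
  -- V
  set V : Finset k := vk.roots.toFinset with hV
  have hVmem : ∀ w, w ∈ V ↔ vk.eval w = 0 := by
    intro w
    rw [hV, Multiset.mem_toFinset, mem_roots hvkmon.ne_zero, IsRoot.def]
  have hVcard : V.card = m + l := by
    rw [hV, Multiset.toFinset_card_of_nodup (nodup_roots hvsep), ← hvkdeg]
    exact (splits_iff_card_roots.1 (IsAlgClosed.splits vk))
  have hy : ∀ w : V, ∃ a, PowerSeries.constantCoeff a = (w : k) ∧ Pu.eval a = 0 := by
    intro w
    have hw := (hVmem w).1 w.2
    apply ps_hensel Pu w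
    · rw [hPucc]; exact hw
    · rw [hPucc]; exact hvder _ hw
  choose y hyc hy0 using hy
  letI : Algebra (FractionRing ℤ[X]) E := (emb k).toAlgebra
  set r : Bool ⊕ V → E := Sum.elim (fun b => ι (z b) / ι u) (fun w => ι (y w)) with hr
  have hrinj : Function.Injective r := by
    have hzy : ∀ b w, ι (z b) / ι u ≠ ι (y w) := by
      intro b w h
      rw [div_eq_iff hu0, ← map_mul] at h
      have := congrArg (PowerSeries.constantCoeff (R := k)) (hιinj h)
      rw [hzc, map_mul, hu, PowerSeries.constantCoeff_X, mul_zero] at this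
      exact hj0 b this
    rintro (a | a) (b | b) h
    · simp only [hr, Sum.elim_inl] at h
      rw [div_left_inj' hu0] at h
      have := congrArg (PowerSeries.constantCoeff (R := k)) (hιinj h)
      rw [hzc, hzc] at this
      rw [hjinj this]
    · exact absurd h (hzy _ _)
    · exact absurd h.symm (hzy _ _)
    · have := congrArg (PowerSeries.constantCoeff (R := k)) (hιinj h)
      rw [hyc, hyc] at this
      rw [Subtype.ext this]
  have hcardΩ : Fintype.card (Bool ⊕ V) = n := by
    rw [Fintype.card_sum, Fintype.card_bool, Fintype.card_coe, hVcard]; omega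
  set PK := P.map (algebraMap ℤ[X] (FractionRing ℤ[X])) with hPK
  have hPdeg : P.natDegree = n := by
    rw [hPdef, natDegree_add_eq_left_of_natDegree_lt, natDegree_map_eq_of_injective C_injective, hn]
    rw [natDegree_map_eq_of_injective C_injective, hn]
    refine lt_of_le_of_lt (natDegree_C_mul_le _ _) ?_
    rw [natDegree_map_eq_of_injective C_injective]
    omega
  have hPE : PK.map (algebraMap (FractionRing ℤ[X]) E)
      = f.map (Int.castRingHom E) + C ((ι u ^ 2)⁻¹) * v.map (Int.castRingHom E) := by
    rw [hPK, map_map, hPdef, Polynomial.map_add, Polynomial.map_mul, map_C, map_map, map_map]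
    have e1 : ((algebraMap (FractionRing ℤ[X]) E).comp (algebraMap ℤ[X] (FractionRing ℤ[X]))) X
        = (ι u ^ 2)⁻¹ := by
      have : ((algebraMap (FractionRing ℤ[X]) E).comp (algebraMap ℤ[X] (FractionRing ℤ[X]))) X
        = emb0 k X := emb_algebraMap k X
      rw [this]
      exact emb0_X k
    rw [e1]
    congr 2
    · exact RingHom.ext_int _ _
    · congr 1
      exact RingHom.ext_int _ _
  have hιcomp : ι.comp (Int.castRingHom Rk) = Int.castRingHom E := RingHom.ext_int _ _
  have hroots : ∀ ω, (PK.map (algebraMap (FractionRing ℤ[X]) E)).eval (r ω) = 0 := by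
    rintro (b | w)
    · rw [hPE]
      have hh := congrArg ι (hz0 b)
      rw [map_zero, ← eval₂_at_apply, hQ, eval₂_add] at hh
      have hz' : ι (z b) = ι u * (ι (z b) / ι u) := field_aux1 _ _ hu0
      rw [hz', scaleRoots_eval₂_mul, scaleRoots_eval₂_mul, hf.natDegree_map, hvmon.natDegree_map, hn, hvdeg,
        eval₂_map, eval₂_map, hιcomp, ← hml, pow_add _ (m + l)] at hh
      simp only [hr, Sum.elim_inl, eval_add, eval_mul, eval_C, eval_map]
      have hne : ι u ^ (m + l) * ι u ^ 2 ≠ 0 := mul_ne_zero (pow_ne_zero _ hu0) (pow_ne_zero _ hu0)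
      apply mul_left_cancel₀ hne
      rw [mul_zero, ← hh]
      exact field_aux2 _ _ _ _ (pow_ne_zero _ hu0)
    · rw [hPE]
      have hh := congrArg ι (hy0 w)
      rw [map_zero, ← eval₂_at_apply, hPu, eval₂_add, eval₂_mul, eval₂_C, eval₂_map, eval₂_map, hιcomp, map_pow] at hh
      simp only [hr, Sum.elim_inr, eval_add, eval_mul, eval_C, eval_map]
      have hne : ι u ^ 2 ≠ 0 := pow_ne_zero _ hu0
      apply mul_left_cancel₀ hne
      rw [mul_zero, ← hh]
      have := field_aux2 1 (ι u ^ 2) (eval₂ (Int.castRingHom E) (ι (y w)) f)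
        (eval₂ (Int.castRingHom E) (ι (y w)) v) hne
      rwa [one_mul, one_mul] at this
  have hprod : PK.map (algebraMap (FractionRing ℤ[X]) E) = ∏ ω, (X - C (r ω)) := by
    apply prod_eq_of_roots _ ((hPmon.map _).map _) r hrinj hroots
    rw [(hPmon.map _).natDegree_map, hPmon.natDegree_map, hPdeg, hcardΩ]
  -- action on y
  have hyact : ∀ (ρ : Rk ≃+* Rk) (hρ : ρ (u ^ 2) = u ^ 2) (w w' : V),
      PowerSeries.constantCoeff (ρ (y w)) = (w' : k) → ρ (y w) = y w' := by
    intro ρ hρ w w' hcw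
    have hw := (hVmem w').1 w'.2
    apply ps_unique Pu w' (by rw [hPucc]; exact hvder _ hw) _ _ hcw (hyc w') _ (hy0 w')
    have hh := congrArg (ρ : Rk →+* Rk) (hy0 w)
    rw [map_zero, ← eval₂_at_apply] at hh
    rw [← hh, ← eval_map]
    congr 1
    rw [hPu, Polynomial.map_add, Polynomial.map_mul, map_C, map_map, map_map]
    rw [RingHom.ext_int ((ρ : Rk →+* Rk).comp (Int.castRingHom Rk)) (Int.castRingHom Rk)]
    rw [RingHom.coe_coe, hρ]
  -- automorphisms fix the two parts
  have hmain : ∀ (ρ : Rk ≃+* Rk) (hρ : ρ (u ^ 2) = u ^ 2) (s : k ≃+* k)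
      (hs : ∀ a, PowerSeries.constantCoeff (ρ a) = s (PowerSeries.constantCoeff a)),
      ∃ τ : E ≃ₐ[FractionRing ℤ[X]] E, ∃ π : Equiv.Perm (Bool ⊕ V), (∀ a, τ (ι a) = ι (ρ a)) ∧
        (∀ ω, τ (r ω) = r (π ω)) ∧ (∀ w : V, ∃ w' : V, (w' : k) = s w ∧ π (Sum.inr w) = Sum.inr w') ∧
        (∀ b, ∃ b', π (Sum.inl b) = Sum.inl b') := by
    intro ρ hρ s hs
    obtain ⟨τ, hτ⟩ := autE ρ hρ
    obtain ⟨π, hπ⟩ := gal_perm PK r hrinj hprod τ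
    have hsV : ∀ w, w ∈ V → s w ∈ V := by
      intro w hw
      rw [hVmem, hvkeval] at hw ⊢
      have := congrArg s hw
      have e2 : s 2 = 2 := map_ofNat s 2
      have e3 : s 3 = 3 := map_ofNat s 3
      rwa [map_mul, map_sub, map_sub, map_pow, map_pow, e2, e3, map_zero] at this
    have hinr : ∀ w : V, π (Sum.inr w) = Sum.inr ⟨s w, hsV w w.2⟩ := by
      intro w
      apply hrinj
      rw [← hπ]
      have e1 : r (Sum.inr w) = ι (y w) := rfl
      have e2 : r (Sum.inr ⟨s w, hsV w w.2⟩) = ι (y ⟨s w, hsV w w.2⟩) := rfl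
      rw [e1, e2, hτ]
      congr 1
      apply hyact ρ hρ
      rw [hs, hyc]
    refine ⟨τ, π, hτ, hπ, fun w => ⟨_, rfl, hinr w⟩, ?_⟩
    intro b
    rcases hb : π (Sum.inl b) with b' | w'
    · exact ⟨b', rfl⟩
    · exfalso
      have hinj : Function.Injective (fun w : V => (⟨s w, hsV w w.2⟩ : V)) := by
        intro a b hab
        exact Subtype.ext (s.injective (congrArg Subtype.val hab))
      obtain ⟨w, hw⟩ := (Finite.injective_iff_surjective.1 hinj) w'
      have := hinr w
      simp only at hw
      rw [hw, ← hb] at this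
      exact absurd (π.injective this) (by simp)
  -- the swap
  have hswap : ∃ τ : E ≃ₐ[FractionRing ℤ[X]] E, ∀ ω, τ (r ω) = r (Equiv.swap (Sum.inl true) (Sum.inl false) ω) := by
    have hinv : ∀ a : Rk, PowerSeries.rescale (-1 : k) (PowerSeries.rescale (-1 : k) a) = a := by
      intro a
      rw [PowerSeries.rescale_rescale]
      simp
    set ρ : Rk ≃+* Rk := RingEquiv.ofRingHom (PowerSeries.rescale (-1 : k)) (PowerSeries.rescale (-1 : k))
      (RingHom.ext hinv) (RingHom.ext hinv) with hρ
    have hρu : ρ u = -u := PowerSeries.rescale_neg_one_X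
    have hcc' : ∀ a, PowerSeries.constantCoeff (ρ a) = PowerSeries.constantCoeff a := by
      intro a
      have : PowerSeries.constantCoeff (PowerSeries.rescale (-1 : k) a) = PowerSeries.constantCoeff a := by
        rw [← PowerSeries.coeff_zero_eq_constantCoeff_apply, PowerSeries.coeff_rescale]
        simp
      exact this
    obtain ⟨τ, π, hτ, hπ, hπw, hπb⟩ := hmain ρ (by rw [map_pow, hρu, neg_sq]) (RingEquiv.refl k)
      (by intro a; rw [hcc']; rfl)
    have hfix : ∀ w : V, π (Sum.inr w) = Sum.inr w := by
      intro w
      obtain ⟨w', hw', h⟩ := hπw w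
      rw [h, Subtype.ext hw']
    have hmove : ∀ b, π (Sum.inl b) ≠ Sum.inl b := by
      intro b hb
      have h := hπ (Sum.inl b)
      rw [hb] at h
      have e1 : r (Sum.inl b) = ι (z b) / ι u := rfl
      rw [e1, map_div₀, hτ, hτ, hρu, map_neg, div_neg, ← neg_div, div_left_inj' hu0, ← map_neg] at h
      have := congrArg (PowerSeries.constantCoeff (R := k)) (hιinj h)
      rw [map_neg, hcc', hzc, neg_eq_self] at this
      exact hj0 b this
    refine ⟨τ, fun ω => ?_⟩
    rw [hπ]
    congr 1
    have hb' : ∀ b, π (Sum.inl b) = Sum.inl (!b) := by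
      intro b
      obtain ⟨b', hb'⟩ := hπb b
      have := hmove b
      rw [hb'] at this ⊢
      cases b <;> cases b' <;> simp at this ⊢
    rcases ω with (_ | _) | w
    · rw [hb', Equiv.swap_apply_right]; rfl
    · rw [hb', Equiv.swap_apply_left]; rfl
    · rw [hfix, Equiv.swap_apply_of_ne_of_ne (by simp) (by simp)]
  have hgal : ∀ σ : k ≃ₐ[ℚ] k, ∃ τ : E ≃ₐ[FractionRing ℤ[X]] E, ∃ π : Equiv.Perm (Bool ⊕ V),
        (∀ ω, τ (r ω) = r (π ω)) ∧ (∀ w : V, ∃ w' : V, (w' : k) = σ w ∧ π (Sum.inr w) = Sum.inr w') ∧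
        (∀ b, ∃ b', π (Sum.inl b) = Sum.inl b') := by
    intro σ
    obtain ⟨ρ, hρu, hcc'⟩ := psMapEquiv (σ : k ≃+* k)
    obtain ⟨τ, π, hτ, hπ, hπw, hπb⟩ := hmain ρ (by rw [map_pow, hρu]) (σ : k ≃+* k) hcc'
    exact ⟨τ, π, hπ, hπw, hπb⟩
  -- the two parts
  set W : ℕ → k → Finset (Bool ⊕ V) := fun N c =>
    (Finset.univ.filter (fun w : V => (w : k) ^ N = c)).map ⟨Sum.inr, Sum.inr_injective⟩ with hW
  have hWinr : ∀ N c (w : V), Sum.inr w ∈ W N c ↔ (w : k) ^ N = c := by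
    intro N c w
    simp only [hW, Finset.mem_map, Finset.mem_filter, Finset.mem_univ, true_and,
      Function.Embedding.coeFn_mk]
    constructor
    · rintro ⟨a, ha, h⟩
      rw [← Sum.inr_injective h]; exact ha
    · intro h
      exact ⟨w, h, rfl⟩
  have hWinl : ∀ N c b, Sum.inl b ∉ W N c := by
    intro N c b
    simp [hW]
  have hWmem : ∀ N c ω, ω ∈ W N c → ∃ w : V, ω = Sum.inr w := by
    rintro N c (b | w) h
    · exact absurd h (hWinl _ _ _)
    · exact ⟨w, rfl⟩
  have hWcard : ∀ N (c : k), N ≠ 0 → c ≠ 0 → (∀ w : k, w ^ N = c → vk.eval w = 0) → (W N c).card = N := by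
    intro N c hN hc hroot
    have hsep : (X ^ N - C c : k[X]).Separable := separable_X_pow_sub_C c (by exact_mod_cast hN) hc
    have hcard : (X ^ N - C c : k[X]).roots.toFinset.card = N := by
      rw [Multiset.toFinset_card_of_nodup (nodup_roots hsep),
        splits_iff_card_roots.1 (IsAlgClosed.splits (X ^ N - C c)), natDegree_X_pow_sub_C]
    refine Eq.trans ?_ hcard
    rw [hW, Finset.card_map, ← Finset.card_map (Function.Embedding.subtype _)]
    congr 1
    ext w
    simp only [Finset.mem_map, Finset.mem_filter, Finset.mem_univ, true_and,
      Function.Embedding.coe_subtype, Multiset.mem_toFinset,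
      mem_roots (monic_X_pow_sub_C c hN).ne_zero, IsRoot.def, eval_sub, eval_pow, eval_X, eval_C,
      sub_eq_zero]
    constructor
    · rintro ⟨a, ha, rfl⟩
      exact ha
    · intro h
      exact ⟨⟨w, (hVmem w).2 (hroot w h)⟩, h, rfl⟩
  have hWstab : ∀ (σ : k ≃ₐ[ℚ] k) (π : Equiv.Perm (Bool ⊕ V))
      (_ : ∀ w : V, ∃ w' : V, (w' : k) = σ w ∧ π (Sum.inr w) = Sum.inr w') N (p : ℕ),
      ∀ w ∈ W N (p : k), π w ∈ W N (p : k) := by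
    intro σ π hπ N p ω hω
    obtain ⟨w, rfl⟩ := hWmem _ _ _ hω
    obtain ⟨w', hw', h⟩ := hπ w
    rw [h, hWinr, hw', ← map_pow, (hWinr _ _ _).1 hω, map_natCast]
  have htrans : ∀ N (p : ℕ), N ≠ 0 → p.Prime → ∀ a ∈ W N (p : k), ∀ b ∈ W N (p : k),
      ∃ τ : E ≃ₐ[FractionRing ℤ[X]] E, ∃ π : Equiv.Perm (Bool ⊕ V), (∀ ω, τ (r ω) = r (π ω)) ∧
        (π (Sum.inl true) = Sum.inl true ∨ π (Sum.inl true) = Sum.inl false) ∧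
        (∀ w ∈ W m (2 : ℕ), π w ∈ W m (2 : ℕ)) ∧ (∀ w ∈ W l (3 : ℕ), π w ∈ W l (3 : ℕ)) ∧ π a = b := by
    intro N p hN hp a ha b hb
    obtain ⟨w, rfl⟩ := hWmem _ _ _ ha
    obtain ⟨w', rfl⟩ := hWmem _ _ _ hb
    obtain ⟨σ, hσ⟩ := gal_trans_roots N hN p hp (w : k) (w' : k) ((hWinr _ _ _).1 ha) ((hWinr _ _ _).1 hb)
    obtain ⟨τ, π, hπ, hπw, hπb⟩ := hgal σ
    refine ⟨τ, π, hπ, ?_, hWstab σ π hπw m 2, hWstab σ π hπw l 3, ?_⟩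
    · obtain ⟨b', hb'⟩ := hπb true
      cases b'
      · exact Or.inr hb'
      · exact Or.inl hb'
    · obtain ⟨w'', hw'', h⟩ := hπw w
      rw [h]
      congr 1
      exact Subtype.ext (hw''.trans hσ)
  have hc1 : (W m (2 : ℕ)).card = m := by
    apply hWcard m _ hm.ne' (by norm_num)
    intro w hw
    rw [hvkeval, hw]
    simp
  have hc2 : (W l (3 : ℕ)).card = l := by
    apply hWcard l _ (by omega) (by norm_num)
    intro w hw
    rw [hvkeval, hw]
    simp
  refine fullGal_of PK r hrinj hprod hPirr (Sum.inl true) (Sum.inl false) (by simp) (W m (2 : ℕ)) (W l (3 : ℕ))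
    ?_ (hWinl _ _ _) (hWinl _ _ _) (hWinl _ _ _) (hWinl _ _ _) ?_ hswap
    (htrans m 2 hm.ne' Nat.prime_two) (htrans l 3 (by omega) Nat.prime_three) ?_ ?_ ?_ ?_ n hcardΩ
  · rw [Finset.disjoint_left]
    intro ω h h'
    obtain ⟨w, rfl⟩ := hWmem _ _ _ h
    exact pow_two_three m l hm.ne' (by omega) (w : k) (by simpa using (hWinr _ _ _).1 h)
      (by simpa using (hWinr _ _ _).1 h')
  · rintro ((_ | _) | w)
    · exact Or.inr (Or.inl rfl)
    · exact Or.inl rfl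
    · right; right
      have := (hVmem w).1 w.2
      rw [hvkeval, mul_eq_zero, sub_eq_zero, sub_eq_zero] at this
      rw [hWinr, hWinr]
      simpa using this
  · rw [hc1]; exact hm
  · rw [hc1, hc2]; exact hlt
  · rw [hc1, hcardΩ]; exact h1
  · rw [hc1, hcardΩ]; exact h2

lemma isAlgClosure_aux (K : Type*) [Field K] : IsAlgClosure K (AlgebraicClosure K) := inferInstance

theorem fullGal_pencil (f : ℤ[X])
    (hf : f.Monic) (hirr : Irreducible f) (n m l : ℕ) (hn : f.natDegree = n) (hml : m + l + 2 = n)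
    (hm : 0 < m) (hlt : m < l) (h1 : ¬ (2 + m) ∣ n) (h2 : Even n → Odd m) :
    FullGal n ((f.map C + C X * (vpoly m l).map C : ℤ[X][X]).map
      (algebraMap ℤ[X] (FractionRing ℤ[X]))) :=
  @fullGal_pencil_aux (AlgebraicClosure ℚ) _ _ (isAlgClosure_aux ℚ) f hf hirr n m l hn hml hm hlt h1 h2

theorem exists_ml (n : ℕ) (hn : 9 ≤ n) : ∃ m l : ℕ, m + l + 2 = n ∧ 0 < m ∧ m < l ∧
    ¬ (2 + m) ∣ n ∧ (Even n → Odd m) := by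
  rcases Nat.even_or_odd' n with ⟨c, rfl | rfl⟩
  · -- n = 2c
    rcases Nat.even_or_odd' c with ⟨d, rfl | rfl⟩
    · -- c = 2d, q = 2d-1, m = 2d-3
      refine ⟨2 * d - 3, 2 * d + 1, by omega, by omega, by omega, ?_, fun _ => ⟨d - 2, by omega⟩⟩
      rw [show 2 + (2 * d - 3) = 2 * d - 1 by omega]
      intro h
      have h' : 2 * d - 1 ∣ 2 := by
        have := Nat.dvd_sub h (Dvd.intro_left 2 rfl : 2 * d - 1 ∣ 2 * (2 * d - 1))
        rwa [show 2 * (2 * d) - 2 * (2 * d - 1) = 2 by omega] at this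
      have := Nat.le_of_dvd (by norm_num) h'
      omega
    · -- c = 2d+1, q = 2d-1, m = 2d-3
      refine ⟨2 * d - 3, 2 * d + 3, by omega, by omega, by omega, ?_, fun _ => ⟨d - 2, by omega⟩⟩
      rw [show 2 + (2 * d - 3) = 2 * d - 1 by omega]
      intro h
      have h' : 2 * d - 1 ∣ 4 := by
        have := Nat.dvd_sub h (Dvd.intro_left 2 rfl : 2 * d - 1 ∣ 2 * (2 * d - 1))
        rwa [show 2 * (2 * d + 1) - 2 * (2 * d - 1) = 4 by omega] at this
      have hle := Nat.le_of_dvd (by norm_num) h'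
      have hd2 : d = 2 := by omega
      subst hd2
      revert h'
      decide
  · refine ⟨2, 2 * c - 3, by omega, by omega, by omega, ?_, ?_⟩
    · intro h
      have h' : 4 ∣ 2 * c + 1 := h
      omega
    · intro h
      exact absurd h (by simp)

end GaloisCount

namespace GaloisCount

lemma exists_nat_avoid {L ι : Type*} [Field L] [CharZero L] [Fintype ι] (p : ι → L[X]) (D : ℕ)
    (h0 : ∀ i, p i ≠ 0) (hD : ∀ i, (p i).natDegree ≤ D) :
    ∃ M ∈ Finset.range (Fintype.card ι * D + 1), ∀ i, (p i).eval (M : L) ≠ 0 := by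
  classical
  by_contra! h
  have hz : (∏ i, p i) = 0 := by
    refine eq_zero_of_natDegree_lt_card_of_eval_eq_zero' _
      ((Finset.range (Fintype.card ι * D + 1)).map ⟨(Nat.cast : ℕ → L), Nat.cast_injective⟩) ?_ ?_
    · intro a ha
      rw [Finset.mem_map] at ha
      obtain ⟨M, hM, rfl⟩ := ha
      obtain ⟨i, hi⟩ := h M hM
      rw [eval_prod]
      exact Finset.prod_eq_zero (Finset.mem_univ i) hi
    · rw [Finset.card_map, Finset.card_range, Nat.lt_succ_iff]
      refine (natDegree_prod_le _ _).trans ?_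
      refine (Finset.sum_le_card_nsmul _ _ D (fun i _ => hD i)).trans ?_
      simp
  rw [Finset.prod_eq_zero_iff] at hz
  obtain ⟨i, _, hi⟩ := hz
  exact h0 i hi

section theta
variable {n : ℕ}

/-- The linear form. -/
noncomputable def ell (n M y : ℕ) : MvPolynomial (Fin n) ℤ :=
  MvPolynomial.C (y : ℤ) - ∑ i : Fin n, MvPolynomial.C ((M : ℤ) ^ (i : ℕ)) * MvPolynomial.X i

open Classical in
/-- The invariant of a subgroup. -/
noncomputable def theta (G0 : Subgroup (Equiv.Perm (Fin n))) (M y : ℕ) : MvPolynomial (Fin n) ℤ :=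
  ∏ g : G0, MvPolynomial.rename (g : Equiv.Perm (Fin n)) (ell n M y)

lemma rename_perm_mul (σ τ : Equiv.Perm (Fin n)) (p : MvPolynomial (Fin n) ℤ) :
    MvPolynomial.rename σ (MvPolynomial.rename τ p) = MvPolynomial.rename (σ * τ : Equiv.Perm (Fin n)) p := by
  rw [MvPolynomial.rename_rename]; rfl

lemma rename_theta (G0 : Subgroup (Equiv.Perm (Fin n))) (M y : ℕ) (h : Equiv.Perm (Fin n)) (hh : h ∈ G0) :
    MvPolynomial.rename h (theta G0 M y) = theta G0 M y := by
  classical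
  rw [theta, map_prod]
  simp only [rename_perm_mul]
  exact Fintype.prod_equiv (Equiv.mulLeft (⟨h, hh⟩ : G0)) _ _ (fun g => rfl)

lemma rename_theta_coset (G0 : Subgroup (Equiv.Perm (Fin n))) (M y : ℕ) (σ τ : Equiv.Perm (Fin n))
    (h : σ⁻¹ * τ ∈ G0) :
    MvPolynomial.rename σ (theta G0 M y) = MvPolynomial.rename τ (theta G0 M y) := by
  have := rename_perm_mul σ (σ⁻¹ * τ) (theta G0 M y)
  rw [rename_theta _ _ _ _ h, mul_inv_cancel_left] at this
  exact this

lemma theta_sep {L : Type*} [Field L] [CharZero L] (G0 : Subgroup (Equiv.Perm (Fin n))) (x : Fin n → L)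
    (hx : Function.Injective x) :
    ∃ M ∈ Finset.range (Fintype.card (Equiv.Perm (Fin n) × Equiv.Perm (Fin n)) * n + 1),
    ∃ y ∈ Finset.range (Fintype.card (Equiv.Perm (Fin n) × Equiv.Perm (Fin n)) * Fintype.card (Equiv.Perm (Fin n)) + 1),
      ∀ σ τ : Equiv.Perm (Fin n),
      MvPolynomial.aeval (x ∘ σ) (theta G0 M y) = MvPolynomial.aeval (x ∘ τ) (theta G0 M y) → σ⁻¹ * τ ∈ G0 := by
  classical
  set lin : Equiv.Perm (Fin n) → L[X] := fun σ => ∑ i : Fin n, C (x (σ i)) * X ^ (i : ℕ) with hlin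
  have hlinc : ∀ σ (i : Fin n), (lin σ).coeff i = x (σ i) := by
    intro σ i
    simp only [hlin, finsetSum_coeff, coeff_C_mul, coeff_X_pow]
    rw [Finset.sum_eq_single i]
    · simp
    · intro b _ hb
      rw [if_neg (fun h => hb (Fin.ext h.symm)), mul_zero]
    · simp
  have hlininj : Function.Injective lin := by
    intro σ τ h
    ext i : 1
    apply hx
    rw [← hlinc, ← hlinc, h]
  have hlindeg : ∀ σ, (lin σ).natDegree ≤ n := by
    intro σ
    refine natDegree_sum_le_of_forall_le _ _ (fun i _ => ?_)
    exact (natDegree_C_mul_X_pow_le _ _).trans i.2.le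
  obtain ⟨M, hM, hM'⟩ := exists_nat_avoid
    (fun q : Equiv.Perm (Fin n) × Equiv.Perm (Fin n) => if q.1 = q.2 then 1 else lin q.1 - lin q.2) n
    (by
      intro q
      split_ifs with h
      · exact one_ne_zero
      · rw [sub_ne_zero]
        exact fun h' => h (hlininj h'))
    (by
      intro q
      split_ifs with h
      · simp
      · exact (natDegree_sub_le _ _).trans (max_le (hlindeg _) (hlindeg _)))
  set e : Equiv.Perm (Fin n) → L := fun σ => (lin σ).eval (M : L) with he
  have heinj : Function.Injective e := by
    intro σ τ h
    by_contra hne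
    have := hM' (σ, τ)
    simp only [if_neg hne, eval_sub] at this
    exact this (sub_eq_zero.2 h)
  set B : Equiv.Perm (Fin n) → L[X] := fun σ => ∏ g : G0, (X - C (e (σ * g))) with hB
  have hBroot : ∀ σ τ, (B σ).eval (e τ) = 0 ↔ σ⁻¹ * τ ∈ G0 := by
    intro σ τ
    simp only [hB, eval_prod, Finset.prod_eq_zero_iff, Finset.mem_univ, true_and, eval_sub, eval_X, eval_C,
      sub_eq_zero]
    constructor
    · rintro ⟨g, hg⟩
      rw [heinj hg]
      simp
    · intro h
      exact ⟨⟨_, h⟩, by simp⟩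
  have hBdeg : ∀ σ, (B σ).natDegree ≤ Fintype.card (Equiv.Perm (Fin n)) := by
    intro σ
    simp only [hB]
    rw [natDegree_finsetProd_X_sub_C_eq_card]
    exact Fintype.card_subtype_le _
  obtain ⟨y, hy, hy'⟩ := exists_nat_avoid
    (fun q : Equiv.Perm (Fin n) × Equiv.Perm (Fin n) => if q.1⁻¹ * q.2 ∈ G0 then 1 else B q.1 - B q.2)
    (Fintype.card (Equiv.Perm (Fin n)))
    (by
      intro q
      split_ifs with h
      · exact one_ne_zero
      · rw [sub_ne_zero]
        intro h'
        apply h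
        rw [← hBroot, h', hBroot]
        simp)
    (by
      intro q
      split_ifs with h
      · simp
      · exact (natDegree_sub_le _ _).trans (max_le (hBdeg _) (hBdeg _)))
  refine ⟨M, hM, y, hy, ?_⟩
  have hth : ∀ σ : Equiv.Perm (Fin n), MvPolynomial.aeval (x ∘ σ) (theta G0 M y) = (B σ).eval (y : L) := by
    intro σ
    have e1 : (B σ).eval (y : L) = ∏ g : G0, ((y : L) - e (σ * g)) := by
      simp only [hB, eval_prod, eval_sub, eval_X, eval_C]
    rw [e1, theta, map_prod]
    refine Finset.prod_congr (by congr!) (fun g _ => ?_)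
    rw [MvPolynomial.aeval_rename, ell, map_sub, map_sum, MvPolynomial.aeval_C]
    simp only [he, hlin, eval_finsetSum]
    congr 1
    · simp
    · refine Finset.sum_congr rfl (fun i _ => ?_)
      rw [map_mul, MvPolynomial.aeval_X, MvPolynomial.aeval_C, eval_mul, eval_C, eval_pow, eval_X, mul_comm]
      simp
  intro σ τ h
  rw [hth, hth] at h
  by_contra hne
  have := hy' (σ, τ)
  simp only [if_neg hne, eval_sub] at this
  exact this (sub_eq_zero.2 h)

end theta

end GaloisCount

namespace GaloisCount

/-- signed coefficients -/
def coefSym (n : ℕ) {A : Type*} [CommRing A] (f : A[X]) : Fin n → A :=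
  fun i => (-1) ^ ((i : ℕ) + 1) * f.coeff (n - 1 - i)

/-- Specialization of a universal polynomial at the coefficients of `f`. -/
noncomputable def specz {n : ℕ} {A : Type*} [CommRing A] (Φ : (MvPolynomial (Fin n) ℤ)[X]) (f : A[X]) : A[X] :=
  Φ.map (MvPolynomial.aeval (R := ℤ) (coefSym n f) : MvPolynomial (Fin n) ℤ →+* A)

lemma specz_map {n : ℕ} {A B : Type*} [CommRing A] [CommRing B] (Φ : (MvPolynomial (Fin n) ℤ)[X]) (f : A[X])
    (φ : A →+* B) : (specz Φ f).map φ = specz Φ (f.map φ) := by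
  rw [specz, specz, map_map]
  congr 1
  apply MvPolynomial.ringHom_ext
  · intro r; simp
  · intro i; simp [coefSym]

lemma specz_coeff {n : ℕ} {A : Type*} [CommRing A] (Φ : (MvPolynomial (Fin n) ℤ)[X]) (f : A[X]) (k : ℕ) :
    (specz Φ f).coeff k = MvPolynomial.aeval (coefSym n f) (Φ.coeff k) := by
  rw [specz, coeff_map]; rfl

lemma coefSym_prod {n : ℕ} {A : Type*} [CommRing A] (x : Fin n → A) (i : Fin n) :
    coefSym n (∏ i, (X - C (x i))) i
      = MvPolynomial.aeval x (MvPolynomial.esymm (Fin n) ℤ ((i : ℕ) + 1)) := by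
  have hc : Multiset.card (Multiset.map x Finset.univ.val) = n := by simp
  have hi := i.2
  have e : (∏ i, (X - C (x i)) : A[X]) = (Multiset.map (fun t => X - C t) (Multiset.map x Finset.univ.val)).prod := by
    rw [Multiset.map_map]; rfl
  rw [coefSym, e, Multiset.prod_X_sub_C_coeff _ (by rw [hc]; omega), hc,
    MvPolynomial.aeval_esymm_eq_multiset_esymm, show n - (n - 1 - (i : ℕ)) = i + 1 by omega, ← mul_assoc,
    ← mul_pow]
  simp

theorem exists_resolvent {n : ℕ} (G0 : Subgroup (Equiv.Perm (Fin n))) (M y : ℕ) :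
    ∃ Φ : (MvPolynomial (Fin n) ℤ)[X], Φ.Monic ∧ Φ.natDegree = G0.index ∧
      ∀ (L : Type) [Field L] (x : Fin n → L),
        specz Φ (∏ i, (X - C (x i))) = ∏ᶠ q : Equiv.Perm (Fin n) ⧸ G0,
          (X - C (MvPolynomial.aeval (x ∘ q.out) (theta G0 M y))) := by
  classical
  letI : Fintype (Equiv.Perm (Fin n) ⧸ G0) := Fintype.ofFinite _
  set Ψ : (MvPolynomial (Fin n) ℤ)[X] := ∏ q : Equiv.Perm (Fin n) ⧸ G0,
    (X - C (MvPolynomial.rename q.out (theta G0 M y))) with hΨ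
  have hΨmon : Ψ.Monic := monic_prod_X_sub_C _ _
  have hΨdeg : Ψ.natDegree = G0.index := by
    rw [hΨ, natDegree_finsetProd_X_sub_C_eq_card, Subgroup.index, Nat.card_eq_fintype_card]
    rfl
  have hsym : ∀ σ : Equiv.Perm (Fin n),
      Ψ.map (MvPolynomial.rename σ : MvPolynomial (Fin n) ℤ →ₐ[ℤ] _).toRingHom = Ψ := by
    intro σ
    rw [hΨ, Polynomial.map_prod]
    refine Fintype.prod_equiv (MulAction.toPerm σ) _ _ (fun q => ?_)
    rw [Polynomial.map_sub, map_X, map_C]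
    congr 2
    change MvPolynomial.rename σ (MvPolynomial.rename q.out (theta G0 M y)) = _
    rw [rename_perm_mul]
    apply rename_theta_coset
    rw [← QuotientGroup.eq]
    have h1 : ((Quotient.out ((MulAction.toPerm σ : Equiv.Perm (Equiv.Perm (Fin n) ⧸ G0)) q) : Equiv.Perm (Fin n)) : Equiv.Perm (Fin n) ⧸ G0) = σ • q :=
      Quotient.out_eq' _
    have h2 : ((σ * q.out : Equiv.Perm (Fin n)) : Equiv.Perm (Fin n) ⧸ G0) = σ • q := by
      conv_rhs => rw [← Quotient.out_eq' q]
      rfl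
    rw [h1, h2]
  have hlift : Ψ ∈ lifts (MvPolynomial.aeval (R := ℤ) (fun i : Fin n => MvPolynomial.esymm (Fin n) ℤ ((i : ℕ) + 1)) :
      MvPolynomial (Fin n) ℤ →+* MvPolynomial (Fin n) ℤ) := by
    rw [lifts_iff_coeff_lifts]
    intro k
    have hs : (Ψ.coeff k).IsSymmetric := by
      intro σ
      conv_rhs => rw [← hsym σ, coeff_map]
      rfl
    obtain ⟨p, hp⟩ := (MvPolynomial.esymmAlgEquiv (σ := Fin n) (R := ℤ) (n := n) (by simp)).surjective ⟨Ψ.coeff k, hs⟩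
    refine ⟨p, ?_⟩
    have := congrArg Subtype.val hp
    refine Eq.trans ?_ this
    exact (MvPolynomial.esymmAlgHom_apply (σ := Fin n) (R := ℤ) (n := n) p).symm
  obtain ⟨Φ, hΦ, hdeg, hmon⟩ := lifts_and_natDegree_eq_and_monic hlift hΨmon
  refine ⟨Φ, hmon, hdeg.trans hΨdeg, ?_⟩
  intro L _ x
  rw [finprod_eq_prod_of_fintype]
  have e1 : specz Φ (∏ i, (X - C (x i))) = Ψ.map (MvPolynomial.aeval (R := ℤ) x : MvPolynomial (Fin n) ℤ →+* L) := by
    rw [specz, ← hΦ, map_map]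
    congr 1
    apply MvPolynomial.ringHom_ext
    · intro r; simp
    · intro i
      simp only [RingHom.comp_apply, RingHom.coe_coe, MvPolynomial.aeval_X]
      exact coefSym_prod x i
  rw [e1, hΨ, Polynomial.map_prod]
  refine Finset.prod_congr rfl (fun q _ => ?_)
  rw [Polynomial.map_sub, map_X, map_C]
  congr 2
  exact MvPolynomial.aeval_rename _ _ _

end GaloisCount

namespace GaloisCount

/-- `Φ` is a resolvent polynomial for the invariant `theta G0 M y`. -/
def IsResolvent {n : ℕ} (G0 : Subgroup (Equiv.Perm (Fin n))) (M y : ℕ) (Φ : (MvPolynomial (Fin n) ℤ)[X]) : Prop :=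
  Φ.Monic ∧ Φ.natDegree = G0.index ∧
      ∀ (L : Type) [Field L] (x : Fin n → L),
        specz Φ (∏ i, (X - C (x i))) = ∏ᶠ q : Equiv.Perm (Fin n) ⧸ G0,
          (X - C (MvPolynomial.aeval (x ∘ q.out) (theta G0 M y)))

lemma specz_monic {n : ℕ} {A : Type*} [CommRing A] {Φ : (MvPolynomial (Fin n) ℤ)[X]} (h : Φ.Monic) (f : A[X]) :
    (specz Φ f).Monic := h.map _

lemma specz_natDegree {n : ℕ} {A : Type*} [CommRing A] [Nontrivial A] {Φ : (MvPolynomial (Fin n) ℤ)[X]} (h : Φ.Monic) (f : A[X]) :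
    (specz Φ f).natDegree = Φ.natDegree := h.natDegree_map _

lemma resolvent_root {n : ℕ} {G0 : Subgroup (Equiv.Perm (Fin n))} {M y : ℕ} {Φ : (MvPolynomial (Fin n) ℤ)[X]}
    (hΦ : IsResolvent G0 M y Φ) (L : Type) [Field L] (x : Fin n → L) :
    (specz Φ (∏ i, (X - C (x i)))).eval (MvPolynomial.aeval x (theta G0 M y)) = 0 := by
  classical
  letI : Fintype (Equiv.Perm (Fin n) ⧸ G0) := Fintype.ofFinite _
  rw [hΦ.2.2 L x, finprod_eq_prod_of_fintype, eval_prod]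
  refine Finset.prod_eq_zero (Finset.mem_univ ((1 : Equiv.Perm (Fin n)) : Equiv.Perm (Fin n) ⧸ G0)) ?_
  rw [eval_sub, eval_X, eval_C, sub_eq_zero]
  have h := rename_theta_coset G0 M y 1 (Quotient.out ((1 : Equiv.Perm (Fin n)) : Equiv.Perm (Fin n) ⧸ G0)) (by
    rw [← QuotientGroup.eq]
    exact (Quotient.out_eq' _).symm)
  have h' := congrArg (MvPolynomial.aeval x) h
  rw [MvPolynomial.aeval_rename, MvPolynomial.aeval_rename] at h'
  exact h'

lemma specz_irreducible_aux {n : ℕ} (K L : Type) [Field K] [CharZero K] [Field L] [Algebra K L] (P : K[X])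
    (x : Fin n → L) (hx : Function.Injective x) (hP : P.map (algebraMap K L) = ∏ i, (X - C (x i)))
    (hγ : ∀ π : Equiv.Perm (Fin n), ∃ γ : L ≃ₐ[K] L, ∀ i, γ (x i) = x (π i))
    (G0 : Subgroup (Equiv.Perm (Fin n))) :
    ∃ M ∈ Finset.range (Fintype.card (Equiv.Perm (Fin n) × Equiv.Perm (Fin n)) * n + 1),
    ∃ y ∈ Finset.range (Fintype.card (Equiv.Perm (Fin n) × Equiv.Perm (Fin n)) * Fintype.card (Equiv.Perm (Fin n)) + 1),
      ∀ Φ : (MvPolynomial (Fin n) ℤ)[X], IsResolvent G0 M y Φ → Irreducible (specz Φ P) := by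
  classical
  letI : Fintype (Equiv.Perm (Fin n) ⧸ G0) := Fintype.ofFinite _
  haveI : CharZero L := charZero_of_injective_algebraMap (algebraMap K _).injective
  obtain ⟨M, hM, y, hy, hsep⟩ := theta_sep G0 x hx
  refine ⟨M, hM, y, hy, fun Φ hΦ => ?_⟩
  set α := MvPolynomial.aeval x (theta G0 M y) with hα
  have hmapF : (specz Φ P).map (algebraMap K L) = ∏ q : Equiv.Perm (Fin n) ⧸ G0,
      (X - C (MvPolynomial.aeval (x ∘ q.out) (theta G0 M y))) := by
    rw [specz_map, hP, hΦ.2.2, finprod_eq_prod_of_fintype]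
  have hroot : aeval α (specz Φ P) = 0 := by
    rw [← eval_map_algebraMap, specz_map, hP]
    exact resolvent_root hΦ _ x
  have hmon : (specz Φ P).Monic := specz_monic hΦ.1 _
  have hint : IsIntegral K α := ⟨specz Φ P, hmon, by rw [← aeval_def]; exact hroot⟩
  have hdvd : minpoly K α ∣ specz Φ P := minpoly.dvd K α hroot
  have hge : (specz Φ P).map (algebraMap K L) ∣ (minpoly K α).map (algebraMap K L) := by
    rw [hmapF]
    apply Finset.prod_dvd_of_coprime
    · intro a _ b _ hab
      refine pairwise_coprime_X_sub_C (s := fun q : Equiv.Perm (Fin n) ⧸ G0 =>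
        MvPolynomial.aeval (x ∘ q.out) (theta G0 M y)) ?_ hab
      intro q q' h
      have := hsep _ _ h
      rw [← QuotientGroup.eq] at this
      have h1 := Quotient.out_eq' q
      have h2 := Quotient.out_eq' q'
      rw [← h1, ← h2]
      exact this
    · intro q _
      rw [dvd_iff_isRoot, IsRoot.def, eval_map_algebraMap]
      obtain ⟨γ, hγ'⟩ := hγ q.out
      have e : MvPolynomial.aeval (x ∘ q.out) (theta G0 M y) = γ α := by
        have h1 : γ α = MvPolynomial.aeval (fun i => γ (x i)) (theta G0 M y) := by
          rw [hα]
          have := MvPolynomial.map_aeval (R := ℤ) x (γ : L →+* L) (theta G0 M y)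
          rw [RingHom.coe_coe] at this
          rw [this, MvPolynomial.aeval_def, MvPolynomial.coe_eval₂Hom]
          congr 1
          exact RingHom.ext_int _ _
        rw [h1]
        congr 2
        funext i
        rw [hγ' i]; rfl
      rw [e, ← AlgEquiv.coe_toAlgHom, aeval_algHom_apply, minpoly.aeval, map_zero]
  have heq : minpoly K α = specz Φ P := by
    refine (eq_of_monic_of_dvd_of_natDegree_le (minpoly.monic hint) hmon hdvd ?_).symm
    have := natDegree_le_of_dvd hge ((minpoly.monic hint).map _).ne_zero
    rwa [natDegree_map, natDegree_map] at this
  rw [← heq]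
  exact minpoly.irreducible hint

lemma specz_irreducible {n : ℕ} (K : Type) [Field K] [CharZero K] (P : K[X]) (hfull : FullGal n P)
    (G0 : Subgroup (Equiv.Perm (Fin n))) :
    ∃ M ∈ Finset.range (Fintype.card (Equiv.Perm (Fin n) × Equiv.Perm (Fin n)) * n + 1),
    ∃ y ∈ Finset.range (Fintype.card (Equiv.Perm (Fin n) × Equiv.Perm (Fin n)) * Fintype.card (Equiv.Perm (Fin n)) + 1),
      ∀ Φ : (MvPolynomial (Fin n) ℤ)[X], IsResolvent G0 M y Φ → Irreducible (specz Φ P) := by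
  obtain ⟨x, hx, hP, hγ⟩ := hfull
  exact specz_irreducible_aux K P.SplittingField P x hx hP hγ G0

lemma integer_root {n : ℕ} {G0 : Subgroup (Equiv.Perm (Fin n))} {M y : ℕ} {Φ : (MvPolynomial (Fin n) ℤ)[X]}
    (hΦ : IsResolvent G0 M y Φ) (L : Type) [Field L] [Algebra ℚ L] [FiniteDimensional ℚ L] [IsGalois ℚ L]
    (f : ℤ[X]) (x : Fin n → L)
    (hf : (f.map (Int.castRingHom ℚ)).map (algebraMap ℚ L) = ∏ i, (X - C (x i)))
    (hγ : ∀ γ : L ≃ₐ[ℚ] L, ∃ π ∈ G0, ∀ i, γ (x i) = x (π i)) :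
    ∃ z : ℤ, (specz Φ f).eval z = 0 := by
  set α := MvPolynomial.aeval x (theta G0 M y) with hα
  have hfix : ∀ γ : L ≃ₐ[ℚ] L, γ α = α := by
    intro γ
    obtain ⟨π, hπ, h⟩ := hγ γ
    have h1 : γ α = MvPolynomial.aeval (fun i => γ (x i)) (theta G0 M y) := by
      rw [hα]
      have := MvPolynomial.map_aeval (R := ℤ) x (γ : L →+* L) (theta G0 M y)
      rw [RingHom.coe_coe] at this
      rw [this, MvPolynomial.aeval_def, MvPolynomial.coe_eval₂Hom]
      congr 1
      exact RingHom.ext_int _ _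
    have h2 : (fun i => γ (x i)) = x ∘ π := by
      funext i; rw [h i]; rfl
    rw [h1, h2, ← MvPolynomial.aeval_rename, rename_theta _ _ _ _ hπ]
  obtain ⟨r, hr⟩ := (IsGalois.mem_range_algebraMap_iff_fixed α).2 hfix
  have hroot : ((specz Φ f).map (Int.castRingHom ℚ)).eval r = 0 := by
    apply (algebraMap ℚ L).injective
    rw [map_zero, ← eval₂_at_apply, ← eval_map, hr, specz_map, specz_map, hf]
    exact resolvent_root hΦ L x
  have hint : IsIntegral ℤ r := ⟨specz Φ f, specz_monic hΦ.1 _, by rw [← eval_map]; exact hroot⟩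
  obtain ⟨z, hz⟩ := IsIntegrallyClosed.isIntegral_iff.1 hint
  refine ⟨z, ?_⟩
  rw [← hz] at hroot
  have : ((Int.castRingHom ℚ) ((specz Φ f).eval z)) = 0 := by
    rw [← eval₂_at_apply, ← eval_map]; exact hroot
  simpa using this

lemma mv_bound {n : ℕ} (p : MvPolynomial (Fin n) ℤ) : ∃ D N : ℕ, ∀ (c : Fin n → ℤ) (B : ℝ), 1 ≤ B →
    (∀ i, |(c i : ℝ)| ≤ B) → |((MvPolynomial.aeval c p : ℤ) : ℝ)| ≤ D * B ^ N := by
  induction p using MvPolynomial.induction_on with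
  | C a =>
    refine ⟨a.natAbs, 0, fun c B hB hc => ?_⟩
    simp [Nat.cast_natAbs]
  | add p q hp hq =>
    obtain ⟨D1, N1, h1⟩ := hp
    obtain ⟨D2, N2, h2⟩ := hq
    refine ⟨D1 + D2, N1 + N2, fun c B hB hc => ?_⟩
    rw [map_add]
    push_cast
    refine (abs_add_le _ _).trans ((add_le_add (h1 c B hB hc) (h2 c B hB hc)).trans ?_)
    rw [add_mul]
    gcongr <;> first | exact hB | omega
  | mul_X p i hp =>
    obtain ⟨D1, N1, h1⟩ := hp
    refine ⟨D1, N1 + 1, fun c B hB hc => ?_⟩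
    rw [map_mul, MvPolynomial.aeval_X]
    push_cast
    rw [abs_mul, pow_succ, ← mul_assoc]
    exact mul_le_mul (h1 c B hB hc) (hc i) (abs_nonneg _) (by positivity)

lemma coefs_bound {n : ℕ} (Φ : (MvPolynomial (Fin n) ℤ)[X]) : ∃ D N : ℕ, ∀ (f : ℤ[X]) (B : ℝ), 1 ≤ B →
    (∀ i : Fin n, |(f.coeff (n - 1 - i) : ℝ)| ≤ B) → ∀ k, |((specz Φ f).coeff k : ℝ)| ≤ D * B ^ N := by
  choose D N h using fun k => mv_bound (Φ.coeff k)
  refine ⟨∑ k ∈ Finset.range (Φ.natDegree + 1), D k, ∑ k ∈ Finset.range (Φ.natDegree + 1), N k, ?_⟩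
  intro f B hB hf k
  by_cases hk : k ∈ Finset.range (Φ.natDegree + 1)
  · rw [specz_coeff]
    refine (h k (coefSym n f) B hB ?_).trans ?_
    · intro i
      rw [coefSym]
      push_cast
      rw [abs_mul, abs_pow, abs_neg, abs_one, one_pow, one_mul]
      exact hf i
    · have h1 : D k ≤ ∑ k ∈ Finset.range (Φ.natDegree + 1), D k :=
        Finset.single_le_sum (f := D) (fun _ _ => Nat.zero_le _) hk
      have h2 : N k ≤ ∑ k ∈ Finset.range (Φ.natDegree + 1), N k :=
        Finset.single_le_sum (f := N) (fun _ _ => Nat.zero_le _) hk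
      have h1' : (D k : ℝ) ≤ (∑ k ∈ Finset.range (Φ.natDegree + 1), D k : ℕ) := by exact_mod_cast h1
      exact mul_le_mul h1' (pow_le_pow_right₀ hB h2) (by positivity) (by positivity)
  · rw [specz_coeff, coeff_eq_zero_of_natDegree_lt (by simpa using hk), map_zero]
    simp only [Int.cast_zero, abs_zero]
    positivity

lemma root_bound {n : ℕ} (Φ : (MvPolynomial (Fin n) ℤ)[X]) (hΦ : Φ.Monic) : ∃ c : ℕ, 1 ≤ c ∧
    ∀ (f : ℤ[X]) (B : ℝ), 1 ≤ B →
    (∀ i : Fin n, |(f.coeff (n - 1 - i) : ℝ)| ≤ B) → ∀ z : ℤ, (specz Φ f).eval z = 0 →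
      |(z : ℝ)| ≤ c * B ^ c ∧ |(((derivative (specz Φ f)).eval z : ℤ) : ℝ)| ≤ c * B ^ c := by
  obtain ⟨D, N, h⟩ := coefs_bound Φ
  set d := Φ.natDegree with hd
  -- |z| ≤ Z := (D+1) B^N
  have key : ∀ (f : ℤ[X]) (B : ℝ), 1 ≤ B →
    (∀ i : Fin n, |(f.coeff (n - 1 - i) : ℝ)| ≤ B) → ∀ z : ℤ, (specz Φ f).eval z = 0 →
      |(z : ℝ)| ≤ (D + 1) * B ^ N := by
    intro f B hB hf z hz
    have hb := h f B hB hf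
    set g := (specz Φ f).map (Int.castRingHom ℝ) with hg
    have hgm : g.Monic := (specz_monic hΦ f).map _
    have hroot : g.IsRoot (z : ℝ) := by
      rw [IsRoot.def, hg]
      have := eval₂_at_apply (Int.castRingHom ℝ) (p := specz Φ f) z
      rw [hz, map_zero, ← eval_map] at this
      exact this
    have h1 := hroot.norm_lt_cauchyBound hgm.ne_zero
    replace h1 := NNReal.coe_lt_coe.2 h1
    rw [coe_nnnorm, Real.norm_eq_abs] at h1
    refine h1.le.trans ?_
    have hnn : (0 : ℝ) ≤ D * B ^ N := by positivity
    have h2 : cauchyBound g ≤ (NNReal.mk (D * B ^ N) hnn) + 1 := by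
      rw [cauchyBound, hgm.leadingCoeff, nnnorm_one, div_one]
      gcongr
      apply Finset.sup_le
      intro k _
      rw [← NNReal.coe_le_coe, coe_nnnorm, Real.norm_eq_abs, hg, coeff_map]
      exact hb k
    have h3 : (cauchyBound g : ℝ) ≤ D * B ^ N + 1 := by exact_mod_cast h2
    have h4 : 1 ≤ B ^ N := one_le_pow₀ hB
    linarith
  refine ⟨(d + 1) * (d + 1) * (D + 1) ^ (d + 1) + N * (d + 1) + 1, by omega, ?_⟩
  intro f B hB hf z hz
  have hz' := key f B hB hf z hz
  have hb := h f B hB hf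
  set Z : ℝ := (D + 1) * B ^ N with hZ
  have hZ1 : 1 ≤ Z := by
    have h4 : 1 ≤ B ^ N := one_le_pow₀ hB
    have : (0 : ℝ) ≤ D := by positivity
    nlinarith
  set c : ℕ := (d + 1) * (d + 1) * (D + 1) ^ (d + 1) + N * (d + 1) + 1 with hc
  have hfin : (d + 1) * (d + 1) * Z ^ (d + 1) ≤ c * B ^ c := by
    have e : ((d : ℝ) + 1) * (d + 1) * Z ^ (d + 1) = ((d + 1) * (d + 1) * (D + 1) ^ (d + 1)) * B ^ (N * (d + 1)) := by
      rw [hZ, mul_pow, pow_mul]; ring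
    rw [e]
    have h1 : ((d + 1) * (d + 1) * (D + 1) ^ (d + 1) : ℝ) ≤ (c : ℝ) := by
      have : (d + 1) * (d + 1) * (D + 1) ^ (d + 1) ≤ c := by omega
      exact_mod_cast this
    exact mul_le_mul h1 (pow_le_pow_right₀ hB (by omega)) (by positivity) (by positivity)
  constructor
  · refine hz'.trans (le_trans ?_ hfin)
    have h5 : Z ≤ Z ^ (d + 1) := le_self_pow₀ hZ1 (Nat.succ_ne_zero d)
    have h6 : (0 : ℝ) ≤ d := by positivity
    nlinarith [mul_nonneg h6 h6, mul_nonneg h6 (by linarith : 0 ≤ Z ^ (d+1)), mul_nonneg (mul_nonneg h6 h6) (by linarith : 0 ≤ Z ^ (d+1))]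
  · refine le_trans ?_ hfin
    have hdeg : (derivative (specz Φ f)).natDegree < d + 1 := by
      refine Nat.lt_succ_of_le ((natDegree_derivative_le _).trans ?_)
      rw [specz_natDegree hΦ]; omega
    rw [eval_eq_sum_range' hdeg]
    push_cast
    refine (Finset.abs_sum_le_sum_abs _ _).trans ?_
    have : ∀ k ∈ Finset.range (d + 1), |(((derivative (specz Φ f)).coeff k : ℤ) : ℝ) * (z : ℝ) ^ k| ≤ (d + 1) * Z ^ (d + 1) := by
      intro k hk
      rw [Finset.mem_range] at hk
      rw [coeff_derivative]
      push_cast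
      rw [abs_mul, abs_mul, abs_pow]
      have hD : |((specz Φ f).coeff (k + 1) : ℝ)| ≤ Z := (hb (k + 1)).trans (by
        rw [hZ]
        have : 0 ≤ B ^ N := by positivity
        nlinarith)
      have hk1 : |(k : ℝ) + 1| ≤ d + 1 := by
        rw [abs_of_nonneg (by positivity)]
        have : (k : ℝ) ≤ d := by exact_mod_cast (Nat.lt_succ_iff.1 hk)
        linarith
      have hzk : |(z : ℝ)| ^ k ≤ Z ^ d := (pow_le_pow_left₀ (abs_nonneg _) hz' k).trans
        (pow_le_pow_right₀ hZ1 (Nat.lt_succ_iff.1 hk))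
      calc |((specz Φ f).coeff (k + 1) : ℝ)| * |(k : ℝ) + 1| * |(z : ℝ)| ^ k ≤ Z * (d + 1) * Z ^ d := by
            gcongr
        _ = (d + 1) * Z ^ (d + 1) := by ring
    refine (Finset.sum_le_card_nsmul _ _ _ this).trans ?_
    rw [Finset.card_range, nsmul_eq_mul]
    push_cast
    apply le_of_eq
    ring

end GaloisCount

namespace GaloisCount

lemma bad_group_aux (n : ℕ) (hn : 9 ≤ n) (f : ℤ[X]) (hf : f.Monic) (hdeg : f.natDegree = n) (hirr : Irreducible f)
    (L : Type) [Field L] [Algebra ℚ L] [IsSplittingField ℚ L (f.map (Int.castRingHom ℚ))]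
    (hS : ¬ Nonempty ((L ≃ₐ[ℚ] L) ≃* Equiv.Perm (Fin n)))
    (hA : ¬ Nonempty ((L ≃ₐ[ℚ] L) ≃* alternatingGroup (Fin n))) :
    ∃ G0 : Subgroup (Equiv.Perm (Fin n)), n.choose (n / 2) ≤ 2 * G0.index ∧
      ∀ M y Φ, IsResolvent G0 M y Φ → ∃ z : ℤ, (specz Φ f).eval z = 0 := by
  classical
  set Q := f.map (Int.castRingHom ℚ) with hQ
  have hQm : Q.Monic := hf.map _
  have hQi : Irreducible Q := (IsPrimitive.Int.irreducible_iff_irreducible_map_cast hf.isPrimitive).1 hirr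
  have hQd : Q.natDegree = n := by rw [hQ, hf.natDegree_map, hdeg]
  have hsep : Q.Separable := hQi.separable
  have hspl : (Q.map (algebraMap ℚ L)).Splits := IsSplittingField.splits L Q
  haveI : FiniteDimensional ℚ L := IsSplittingField.finiteDimensional L Q
  haveI : IsGalois ℚ L := IsGalois.of_separable_splitting_field (p := Q) hsep
  have hcard : Fintype.card (Q.rootSet L) = Fintype.card (Fin n) := by
    rw [card_rootSet_eq_natDegree hsep hspl, hQd, Fintype.card_fin]
  let e : Fin n ≃ Q.rootSet L := (Fintype.equivOfCardEq hcard).symm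
  let x : Fin n → L := fun i => (e i : L)
  have hx : Function.Injective x := Subtype.val_injective.comp e.injective
  have hroot : ∀ i, aeval (x i) Q = 0 := fun i => aeval_eq_zero_of_mem_rootSet (e i).2
  have hprod : Q.map (algebraMap ℚ L) = ∏ i, (X - C (x i)) := by
    apply prod_eq_of_roots _ (hQm.map _) x hx
    · intro i
      rw [eval_map_algebraMap]; exact hroot i
    · rw [hQm.natDegree_map, hQd, Fintype.card_fin]
  choose p hp using fun γ : L ≃ₐ[ℚ] L => gal_perm Q x hx hprod γ
  have huniq : ∀ (γ : L ≃ₐ[ℚ] L) (π : Equiv.Perm (Fin n)), (∀ i, γ (x i) = x (π i)) → p γ = π := by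
    intro γ π h
    ext1 i
    apply hx
    rw [← hp, h]
  let φ : (L ≃ₐ[ℚ] L) →* Equiv.Perm (Fin n) := MonoidHom.mk' p (by
    intro a b
    apply huniq
    intro i
    rw [AlgEquiv.mul_apply, hp, hp]; rfl)
  have hφ : Function.Injective φ := by
    rw [injective_iff_map_eq_one]
    intro γ h1
    have h2 : (γ : L →ₐ[ℚ] L) = AlgHom.id ℚ L := by
      refine AlgHom.ext_of_adjoin_eq_top (IsSplittingField.adjoin_rootSet L Q) ?_
      intro r hr
      have hr' : r = x (e.symm ⟨r, hr⟩) := by simp [x]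
      have h3 := hp γ (e.symm ⟨r, hr⟩)
      change p γ = 1 at h1
      rw [h1, Equiv.Perm.one_apply, ← hr'] at h3
      exact h3
    ext r
    exact DFunLike.congr_fun h2 r
  set G0 := φ.range with hG0
  let eG : (L ≃ₐ[ℚ] L) ≃* G0 := MonoidHom.ofInjective hφ
  haveI : Nontrivial (Fin n) := Fin.nontrivial_iff_two_le.2 (by omega)
  have hnA : ¬ alternatingGroup (Fin n) ≤ G0 := by
    intro hle
    have hd := Subgroup.index_dvd_of_le hle
    rw [alternatingGroup.index_eq_two] at hd
    rcases (Nat.dvd_prime Nat.prime_two).1 hd with h | h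
    · rw [Subgroup.index_eq_one] at h
      exact hS ⟨eG.trans ((MulEquiv.subgroupCongr h).trans Subgroup.topEquiv)⟩
    · have h := Equiv.Perm.eq_alternatingGroup_of_index_eq_two h
      exact hA ⟨eG.trans (MulEquiv.subgroupCongr h)⟩
  haveI : MulAction.IsPretransitive G0 (Fin n) := by
    refine ⟨fun a b => ?_⟩
    have hc : IsConjRoot ℚ (x a) (x b) := by
      rw [IsConjRoot, ← minpoly.eq_of_irreducible hQi (hroot a),
        ← minpoly.eq_of_irreducible hQi (hroot b)]
    obtain ⟨σ, hσ⟩ := hc.symm.exists_algEquiv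
    refine ⟨⟨φ σ, σ, rfl⟩, ?_⟩
    apply hx
    rw [← hσ]
    exact (hp σ a).symm
  refine ⟨G0, index_bound n hn G0 hnA, fun M y Φ hΦ => ?_⟩
  exact integer_root hΦ L f x hprod (fun γ => ⟨φ γ, ⟨γ, rfl⟩, hp γ⟩)

lemma bad_group (n : ℕ) (hn : 9 ≤ n) (f : ℤ[X]) (hf : f.Monic) (hdeg : f.natDegree = n) (hirr : Irreducible f)
    (hS : ¬ Nonempty ((f.map (Int.castRingHom ℚ)).Gal ≃* Equiv.Perm (Fin n)))
    (hA : ¬ Nonempty ((f.map (Int.castRingHom ℚ)).Gal ≃* alternatingGroup (Fin n))) :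
    ∃ G0 : Subgroup (Equiv.Perm (Fin n)), n.choose (n / 2) ≤ 2 * G0.index ∧
      ∀ M y Φ, IsResolvent G0 M y Φ → ∃ z : ℤ, (specz Φ f).eval z = 0 :=
  bad_group_aux n hn f hf hdeg hirr (f.map (Int.castRingHom ℚ)).SplittingField hS hA

end GaloisCount

namespace GaloisCount

lemma pencil_eval (f v : ℤ[X]) (t : ℤ) :
    (f.map C + C X * v.map C : ℤ[X][X]).map (evalRingHom t) = f + C t * v := by
  have h : ∀ g : ℤ[X], (g.map C).map (evalRingHom t) = g := by
    intro g
    rw [map_map]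
    have : (evalRingHom t).comp C = RingHom.id ℤ := by ext; simp
    rw [this, map_id]
  rw [Polynomial.map_add, Polynomial.map_mul, h, h, map_C]
  simp

lemma specz_pencil_natDegree {n : ℕ} (Φ : (MvPolynomial (Fin n) ℤ)[X]) : ∃ D : ℕ, ∀ f v : ℤ[X], ∀ k,
    ((specz Φ (f.map C + C X * v.map C : ℤ[X][X])).coeff k).natDegree ≤ D := by
  refine ⟨∑ k ∈ Finset.range (Φ.natDegree + 1), (Φ.coeff k).totalDegree, fun f v k => ?_⟩
  rw [specz_coeff]
  by_cases hk : k ∈ Finset.range (Φ.natDegree + 1)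
  · have h1 : (Φ.coeff k).totalDegree ≤ ∑ k ∈ Finset.range (Φ.natDegree + 1), (Φ.coeff k).totalDegree :=
      Finset.single_le_sum (f := fun k => (Φ.coeff k).totalDegree) (fun _ _ => Nat.zero_le _) hk
    refine (MvPolynomial.aeval_natDegree_le (Φ.coeff k) h1 (n := 1) _ ?_).trans (by rw [mul_one])
    intro i
    rw [coefSym, coeff_add, coeff_C_mul, coeff_map, coeff_map]
    have e : ((-1 : ℤ[X]) ^ ((i : ℕ) + 1)) = C ((-1) ^ ((i : ℕ) + 1)) := by simp
    rw [e]
    refine (natDegree_C_mul_le _ _).trans ?_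
    refine natDegree_add_le_of_degree_le ?_ ?_
    · simp
    · exact (natDegree_mul_le).trans (by simp)
  · rw [coeff_eq_zero_of_natDegree_lt (by simpa using hk), map_zero, natDegree_zero]
    exact Nat.zero_le _

lemma line_count_one {n : ℕ} (v : ℤ[X]) (Φ : (MvPolynomial (Fin n) ℤ)[X]) (hΦ : Φ.Monic) (hd : 1 ≤ Φ.natDegree)
    (ε : ℝ) (hε : 0 < ε) : ∃ K : ℝ, ∀ H : ℝ, 1 ≤ H → ∀ f : ℤ[X],
      Irreducible ((specz Φ (f.map C + C X * v.map C : ℤ[X][X])).map (algebraMap ℤ[X] (FractionRing ℤ[X]))) →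
      ∀ S : Finset ℤ, (∀ t ∈ S, |(t : ℝ)| ≤ H ∧ (∀ k, |((f + C t * v).coeff k : ℝ)| ≤ H) ∧
        ∃ z : ℤ, (specz Φ (f + C t * v)).eval z = 0) → (S.card : ℝ) ≤ K * H ^ ((1 : ℝ) / Φ.natDegree + ε) := by
  obtain ⟨D, hD⟩ := specz_pencil_natDegree Φ
  obtain ⟨c, hc, hcb⟩ := root_bound Φ hΦ
  obtain ⟨K, hK⟩ := curve_count Φ.natDegree D c hd hc ε hε
  refine ⟨K, fun H hH f hirr S hS => ?_⟩
  refine hK H hH _ (specz_monic hΦ _) (specz_natDegree hΦ _) (hD f v) hirr S ?_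
  intro t ht
  obtain ⟨h1, h2, z, hz⟩ := hS t ht
  obtain ⟨h3, h4⟩ := hcb _ H hH (fun i => h2 _) z hz
  refine ⟨h1, z, h3, ?_, ?_⟩
  · rw [evalEval_eq_eval, specz_map, pencil_eval]; exact hz
  · rw [evalEval_eq_eval, ← derivative_map, specz_map, pencil_eval]; exact h4

/-- A monic polynomial whose resolvent with respect to a group of large index always has an integer root. -/
def BadPoly (n : ℕ) (g : ℤ[X]) : Prop :=
  ∃ G0 : Subgroup (Equiv.Perm (Fin n)), n.choose (n / 2) ≤ 2 * G0.index ∧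
      ∀ M y Φ, IsResolvent G0 M y Φ → ∃ z : ℤ, (specz Φ g).eval z = 0

lemma line_count (n : ℕ) (v : ℤ[X])
    (hfull : ∀ f : ℤ[X], f.Monic → Irreducible f → f.natDegree = n →
      FullGal n ((f.map C + C X * v.map C : ℤ[X][X]).map (algebraMap ℤ[X] (FractionRing ℤ[X]))))
    (ε : ℝ) (hε : 0 < ε) : ∃ K : ℝ, 0 ≤ K ∧ ∀ H : ℝ, 1 ≤ H → ∀ f : ℤ[X], f.Monic → Irreducible f → f.natDegree = n →
      ∀ S : Finset ℤ, (∀ t ∈ S, |(t : ℝ)| ≤ H ∧ (∀ k, |((f + C t * v).coeff k : ℝ)| ≤ H) ∧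
        BadPoly n (f + C t * v)) → (S.card : ℝ) ≤ K * H ^ ((2 : ℝ) / n.choose (n / 2) + ε) := by
  classical
  letI : Fintype (Subgroup (Equiv.Perm (Fin n))) := Fintype.ofFinite _
  have hres : ∀ (G0 : Subgroup (Equiv.Perm (Fin n))) (M y : ℕ), ∃ Φ, IsResolvent G0 M y Φ :=
    fun G0 M y => exists_resolvent G0 M y
  choose Φ hΦ using hres
  have hidx : ∀ G0 : Subgroup (Equiv.Perm (Fin n)), 1 ≤ G0.index := fun G0 =>
    Nat.one_le_iff_ne_zero.2 Subgroup.FiniteIndex.index_ne_zero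
  choose K hK using fun (G0 : Subgroup (Equiv.Perm (Fin n))) (M y : ℕ) =>
    line_count_one v (Φ G0 M y) (hΦ G0 M y).1 (by rw [(hΦ G0 M y).2.1]; exact hidx G0) ε hε
  set RM := Finset.range (Fintype.card (Equiv.Perm (Fin n) × Equiv.Perm (Fin n)) * n + 1) with hRM
  set RY := Finset.range (Fintype.card (Equiv.Perm (Fin n) × Equiv.Perm (Fin n)) * Fintype.card (Equiv.Perm (Fin n)) + 1) with hRY
  set KG : Subgroup (Equiv.Perm (Fin n)) → ℝ := fun G0 => ∑ M ∈ RM, ∑ y ∈ RY, max (K G0 M y) 0 with hKG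
  refine ⟨∑ G0, KG G0, ?_, ?_⟩
  · exact Finset.sum_nonneg fun _ _ => Finset.sum_nonneg fun _ _ => Finset.sum_nonneg fun _ _ => le_max_right _ _
  intro H hH f hf hirr hdeg S hS
  set SG : Subgroup (Equiv.Perm (Fin n)) → Finset ℤ := fun G0 => S.filter fun t =>
    n.choose (n / 2) ≤ 2 * G0.index ∧ ∀ M y Φ, IsResolvent G0 M y Φ → ∃ z : ℤ, (specz Φ (f + C t * v)).eval z = 0 with hSG
  have hbin : (0 : ℝ) < n.choose (n / 2) := by
    exact_mod_cast Nat.choose_pos (Nat.div_le_self n 2)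
  have hone : ∀ G0, ((SG G0).card : ℝ) ≤ KG G0 * H ^ ((2 : ℝ) / n.choose (n / 2) + ε) := by
    intro G0
    by_cases hb : n.choose (n / 2) ≤ 2 * G0.index
    · obtain ⟨M, hM, y, hy, hI⟩ := specz_irreducible _ _ (hfull f hf hirr hdeg) G0
      have h1 := hK G0 M y H hH f (by rw [specz_map]; exact hI _ (hΦ G0 M y)) (SG G0) (by
        intro t ht
        rw [hSG, Finset.mem_filter] at ht
        exact ⟨(hS t ht.1).1, (hS t ht.1).2.1, ht.2.2 M y _ (hΦ G0 M y)⟩)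
      rw [(hΦ G0 M y).2.1] at h1
      refine h1.trans ?_
      have h2 : K G0 M y ≤ KG G0 := by
        refine (le_max_left _ (0 : ℝ)).trans ?_
        refine (Finset.single_le_sum (f := fun y => max (K G0 M y) 0) (fun _ _ => le_max_right _ _) hy).trans ?_
        exact Finset.single_le_sum (f := fun M => ∑ y ∈ RY, max (K G0 M y) 0)
          (fun _ _ => Finset.sum_nonneg fun _ _ => le_max_right _ _) hM
      have h0 : 0 ≤ KG G0 := Finset.sum_nonneg fun _ _ => Finset.sum_nonneg fun _ _ => le_max_right _ _
      have hi : (0 : ℝ) < G0.index := by exact_mod_cast hidx G0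
      have hb' : (n.choose (n / 2) : ℝ) ≤ 2 * G0.index := by exact_mod_cast hb
      have h3 : H ^ ((1 : ℝ) / G0.index + ε) ≤ H ^ ((2 : ℝ) / n.choose (n / 2) + ε) := by
        apply Real.rpow_le_rpow_of_exponent_le hH
        gcongr 1
        rw [div_le_div_iff₀ hi hbin]
        linarith
      exact mul_le_mul h2 h3 (by positivity) h0
    · have : SG G0 = ∅ := by
        rw [hSG]
        apply Finset.filter_eq_empty_iff.2
        intro t _ h
        exact hb h.1
      rw [this, Finset.card_empty, Nat.cast_zero]
      have h0 : 0 ≤ KG G0 := Finset.sum_nonneg fun _ _ => Finset.sum_nonneg fun _ _ => le_max_right _ _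
      positivity
  have hsub : S ⊆ Finset.univ.biUnion SG := by
    intro t ht
    obtain ⟨G0, h⟩ := (hS t ht).2.2
    rw [Finset.mem_biUnion]
    exact ⟨G0, Finset.mem_univ _, Finset.mem_filter.2 ⟨ht, h⟩⟩
  have h5 : S.card ≤ ∑ G0, (SG G0).card := (Finset.card_le_card hsub).trans Finset.card_biUnion_le
  have h6 : (S.card : ℝ) ≤ ∑ G0, ((SG G0).card : ℝ) := by exact_mod_cast h5
  rw [Finset.sum_mul]
  exact h6.trans (Finset.sum_le_sum fun G0 _ => hone G0)

end GaloisCount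

namespace GaloisCount

lemma fpoly_line (n : ℕ) (v : ℤ[X]) (hv : v.natDegree < n) (a b : Fin n → ℤ) (t : ℤ)
    (h : ∀ i : Fin n, a i = b i + t * v.coeff (n - 1 - i)) : fpoly n a = fpoly n b + C t * v := by
  ext k
  rw [coeff_add, coeff_C_mul]
  rcases lt_trichotomy k n with hk | hk | hk
  · have e : n - 1 - (n - 1 - k) = k := by omega
    have h1 := fpoly_coeff n a ⟨n - 1 - k, by omega⟩
    have h2 := fpoly_coeff n b ⟨n - 1 - k, by omega⟩
    have h3 := h ⟨n - 1 - k, by omega⟩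
    simp only [e] at h1 h2 h3
    rw [h1, h2, h3]
  · have h1 := (fpoly_monic n a).coeff_natDegree
    have h2 := (fpoly_monic n b).coeff_natDegree
    rw [fpoly_natDegree] at h1 h2
    rw [hk, h1, h2, coeff_eq_zero_of_natDegree_lt hv]; ring
  · rw [coeff_eq_zero_of_natDegree_lt (by rw [fpoly_natDegree]; exact hk),
      coeff_eq_zero_of_natDegree_lt (by rw [fpoly_natDegree]; exact hk),
      coeff_eq_zero_of_natDegree_lt (hv.trans hk)]; ring

lemma Icc_floor_card (R : ℝ) (hR : 1 ≤ R) : ((Finset.Icc (-⌊R⌋) ⌊R⌋).card : ℝ) ≤ 3 * R := by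
  rw [Int.card_Icc]
  have hf : (⌊R⌋ : ℝ) ≤ R := Int.floor_le R
  have h0 : 0 ≤ ⌊R⌋ := Int.floor_nonneg.2 (by linarith)
  have : (((⌊R⌋ + 1 - -⌊R⌋).toNat : ℤ) : ℝ) = 2 * ⌊R⌋ + 1 := by
    rw [Int.toNat_of_nonneg (by omega)]; push_cast; ring
  have h3 : (((⌊R⌋ + 1 - -⌊R⌋).toNat : ℕ) : ℝ) = 2 * ⌊R⌋ + 1 := by exact_mod_cast this
  rw [h3]; linarith

lemma mem_Icc_floor {R : ℝ} {a : ℤ} : a ∈ Finset.Icc (-⌊R⌋) ⌊R⌋ ↔ |(a : ℝ)| ≤ R := by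
  rw [Finset.mem_Icc, abs_le, neg_le, Int.le_floor, Int.le_floor]
  push_cast
  constructor
  · rintro ⟨h1, h2⟩; exact ⟨by linarith, h2⟩
  · rintro ⟨h1, h2⟩; exact ⟨by linarith, h2⟩

/-- The number of irreducible bad polynomials. -/
theorem irreducible_count (n : ℕ) (hn : 9 ≤ n) (ε : ℝ) (hε : 0 < ε) :
    ∃ K : ℝ, ∀ H : ℝ, 1 ≤ H →
      ((Set.ncard {a : Fin n → ℤ | (∀ i, |(a i : ℝ)| ≤ H) ∧ Irreducible (fpoly n a) ∧ BadPoly n (fpoly n a)} : ℕ) : ℝ)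
        ≤ K * H ^ ((n : ℝ) - 1 + 2 / (n.choose (n / 2) : ℝ) + ε) := by
  classical
  obtain ⟨m, l, hml, hm, hlt, h1, h2⟩ := exists_ml n hn
  set v := vpoly m l with hv
  have hvm : v.Monic := vpoly_monic m l hm.ne' (by omega)
  have hvd : v.natDegree = n - 2 := by
    rw [hv, vpoly_natDegree m l hm.ne' (by omega)]; omega
  have hvn : v.natDegree < n := by omega
  obtain ⟨K, hK0, hK⟩ := line_count n v
    (fun f hf hirr hdeg => fullGal_pencil f hf hirr n m l hdeg hml hm hlt h1 h2) ε hε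
  set V : ℕ := ∑ k ∈ Finset.range n, (v.coeff k).natAbs with hVdef
  have hV : ∀ i : Fin n, |(v.coeff (n - 1 - i) : ℝ)| ≤ V := by
    intro i
    have : (v.coeff (n - 1 - i)).natAbs ≤ V :=
      Finset.single_le_sum (f := fun k => (v.coeff k).natAbs) (fun _ _ => Nat.zero_le _)
        (Finset.mem_range.2 (by have := i.2; omega))
    have h3 : (((v.coeff (n - 1 - i)).natAbs : ℕ) : ℝ) ≤ V := by exact_mod_cast this
    rwa [Nat.cast_natAbs, Int.cast_abs] at h3
  let i1 : Fin n := ⟨1, by omega⟩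
  have hvi1 : v.coeff (n - 1 - (i1 : ℕ)) = 1 := by
    have : n - 1 - (i1 : ℕ) = v.natDegree := by rw [hvd]; change n - 1 - 1 = _; omega
    rw [this]; exact hvm
  set e : ℝ := 2 / (n.choose (n / 2) : ℝ) + ε with he
  refine ⟨K * 2 ^ e * (3 * (V + 1)) ^ (n - 1), fun H hH => ?_⟩
  set box : Finset (Fin n → ℤ) := Fintype.piFinset fun _ => Finset.Icc (-⌊H⌋) ⌊H⌋ with hbox
  set I : Finset (Fin n → ℤ) := box.filter fun a => Irreducible (fpoly n a) ∧ BadPoly n (fpoly n a) with hI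
  have hset : {a : Fin n → ℤ | (∀ i, |(a i : ℝ)| ≤ H) ∧ Irreducible (fpoly n a) ∧ BadPoly n (fpoly n a)} = (I : Set (Fin n → ℤ)) := by
    ext a
    simp only [hI, hbox, Finset.coe_filter, Fintype.mem_piFinset, mem_Icc_floor, Set.mem_ofPred_eq]
  have hmemI : ∀ a ∈ I, (∀ i, |(a i : ℝ)| ≤ H) ∧ Irreducible (fpoly n a) ∧ BadPoly n (fpoly n a) := by
    intro a ha
    have : a ∈ (I : Set (Fin n → ℤ)) := ha
    rw [← hset] at this
    exact this
  rw [hset, Set.ncard_coe_finset]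
  set lam : (Fin n → ℤ) → (Fin n → ℤ) := fun a i => a i - a i1 * v.coeff (n - 1 - i) with hlam
  set R : ℝ := (V + 1) * H with hR
  have hR1 : 1 ≤ R := by
    have : (0 : ℝ) ≤ V := by positivity
    nlinarith
  set T : Finset (Fin n → ℤ) := Fintype.piFinset fun i => if i = i1 then {0} else Finset.Icc (-⌊R⌋) ⌊R⌋ with hT
  have hTcard : (T.card : ℝ) ≤ (3 * R) ^ (n - 1) := by
    rw [hT, Fintype.card_piFinset, ← Finset.mul_prod_erase _ _ (Finset.mem_univ i1), if_pos rfl, Finset.card_singleton,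
      one_mul]
    push_cast
    have hc : (Finset.univ.erase i1).card = n - 1 := by simp
    rw [← hc]
    rw [← Finset.prod_const]
    refine Finset.prod_le_prod (fun _ _ => by positivity) (fun i hi => ?_)
    rw [if_neg (Finset.ne_of_mem_erase hi)]
    exact Icc_floor_card R hR1
  have hmaps : ∀ a ∈ I, lam a ∈ T := by
    intro a ha
    rw [hT, Fintype.mem_piFinset]
    intro i
    split_ifs with h
    · rw [h, Finset.mem_singleton, hlam]
      simp only
      rw [hvi1]; ring
    · rw [mem_Icc_floor, hlam]
      push_cast
      have hb := (hmemI a ha).1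
      refine (abs_sub _ _).trans ?_
      rw [abs_mul, hR]
      have := mul_le_mul (hb i1) (hV i) (abs_nonneg _) (by linarith)
      have := hb i
      linarith
  have hfib : ∀ b ∈ T, (I.filter fun a => lam a = b).card ≤ ⌊K * (2 * H) ^ e⌋₊ := by
    intro b _
    apply Nat.le_floor
    rcases (I.filter fun a => lam a = b).eq_empty_or_nonempty with h | ⟨a0, ha0⟩
    · rw [h, Finset.card_empty, Nat.cast_zero]; positivity
    rw [Finset.mem_filter] at ha0
    have hline : ∀ a, lam a = b → ∀ i, a i = a0 i + (a i1 - a0 i1) * v.coeff (n - 1 - i) := by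
      intro a ha i
      have h3 := congrFun (ha.trans ha0.2.symm) i
      simp only [hlam] at h3
      linarith
    set S : Finset ℤ := (I.filter fun a => lam a = b).image fun a => a i1 - a0 i1 with hS
    have hcard : S.card = (I.filter fun a => lam a = b).card := by
      apply Finset.card_image_of_injOn
      intro a ha a' ha' haa
      have hA := hline a (Finset.mem_filter.1 ha).2
      have hA' := hline a' (Finset.mem_filter.1 ha').2
      funext i
      simp only at haa
      rw [hA, hA', haa]
    rw [← hcard]
    refine hK (2 * H) (by linarith) (fpoly n a0) (fpoly_monic n a0) (hmemI a0 ha0.1).2.1 (fpoly_natDegree n a0) S ?_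
    intro t ht
    rw [hS, Finset.mem_image] at ht
    obtain ⟨a, ha, rfl⟩ := ht
    rw [Finset.mem_filter] at ha
    have hfa := fpoly_line n v hvn a a0 _ (hline a ha.2)
    have hb := hmemI a ha.1
    have hb0 := hmemI a0 ha0.1
    refine ⟨?_, ?_, ?_⟩
    · push_cast
      have := abs_sub (a i1 : ℝ) (a0 i1)
      linarith [hb.1 i1, hb0.1 i1]
    · intro k
      rw [← hfa]
      linarith [fpoly_coeff_le n a H hH hb.1 k]
    · rw [← hfa]; exact hb.2.2
  have hfinal := Finset.card_le_mul_card_image_of_maps_to hmaps _ hfib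
  have hHp : 0 < H := by linarith
  calc (I.card : ℝ) ≤ (⌊K * (2 * H) ^ e⌋₊ : ℝ) * T.card := by exact_mod_cast hfinal
    _ ≤ (K * (2 * H) ^ e) * (3 * R) ^ (n - 1) := by
        gcongr
        exact Nat.floor_le (by positivity)
    _ = K * 2 ^ e * (3 * (V + 1)) ^ (n - 1) * H ^ ((n : ℝ) - 1 + 2 / (n.choose (n / 2) : ℝ) + ε) := by
        have e1 : ((n : ℝ) - 1 + 2 / (n.choose (n / 2) : ℝ) + ε) = ((n - 1 : ℕ) : ℝ) + e := by
          rw [he, Nat.cast_sub (by omega)]; push_cast; ring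
        rw [e1, Real.rpow_add hHp, Real.rpow_natCast, Real.mul_rpow (by norm_num) hHp.le, hR, ← mul_assoc 3 ((V : ℝ) + 1) H,
          mul_pow (3 * ((V : ℝ) + 1)) H]
        ring

theorem main_count (n : ℕ) (hn : 9 ≤ n) (ε : ℝ) (hε : 0 < ε) :
    ∃ C : ℝ, ∀ H : ℝ, 1 ≤ H → ((Set.ncard {a : Fin n → ℤ | (∀ i, |(a i : ℝ)| ≤ H) ∧
          ¬ Nonempty (((fpoly n a).map (Int.castRingHom ℚ)).Gal ≃* Equiv.Perm (Fin n)) ∧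
          ¬ Nonempty (((fpoly n a).map (Int.castRingHom ℚ)).Gal ≃* alternatingGroup (Fin n))} : ℕ) : ℝ)
        ≤ C * H ^ ((n : ℝ) - 1 + 2 / (n.choose (n / 2) : ℝ) + ε) := by
  obtain ⟨K1, h1⟩ := irreducible_count n hn ε hε
  obtain ⟨K2, h2⟩ := reducible_count n (by omega) ε hε
  refine ⟨K1 + max K2 0, fun H hH => ?_⟩
  have hboxfin : {a : Fin n → ℤ | ∀ i, |(a i : ℝ)| ≤ H}.Finite := by
    refine ((Fintype.piFinset fun _ : Fin n => Finset.Icc (-⌊H⌋) ⌊H⌋).finite_toSet).subset ?_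
    intro a ha
    rw [Finset.mem_coe, Fintype.mem_piFinset]
    exact fun i => mem_Icc_floor.2 (ha i)
  have hsub : {a : Fin n → ℤ | (∀ i, |(a i : ℝ)| ≤ H) ∧
          ¬ Nonempty (((fpoly n a).map (Int.castRingHom ℚ)).Gal ≃* Equiv.Perm (Fin n)) ∧
          ¬ Nonempty (((fpoly n a).map (Int.castRingHom ℚ)).Gal ≃* alternatingGroup (Fin n))} ⊆
      {a : Fin n → ℤ | (∀ i, |(a i : ℝ)| ≤ H) ∧ Irreducible (fpoly n a) ∧ BadPoly n (fpoly n a)} ∪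
      {a : Fin n → ℤ | (∀ i, |(a i : ℝ)| ≤ H) ∧ ¬ Irreducible (fpoly n a)} := by
    rintro a ⟨ha, hS, hA⟩
    by_cases hirr : Irreducible (fpoly n a)
    · exact Or.inl ⟨ha, hirr, bad_group n hn _ (fpoly_monic n a) (fpoly_natDegree n a) hirr hS hA⟩
    · exact Or.inr ⟨ha, hirr⟩
  have hle := (Set.ncard_le_ncard hsub ((hboxfin.subset fun a ha => ha.1).union (hboxfin.subset fun a ha => ha.1))).trans
    (Set.ncard_union_le _ _)
  have hle' := (Nat.cast_le (α := ℝ)).2 hle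
  rw [Nat.cast_add] at hle'
  refine hle'.trans ?_
  rw [add_mul]
  refine add_le_add (h1 H hH) ((h2 H hH).trans ?_)
  have h3 : H ^ ((n : ℝ) - 1 + ε) ≤ H ^ ((n : ℝ) - 1 + 2 / (n.choose (n / 2) : ℝ) + ε) := by
    apply Real.rpow_le_rpow_of_exponent_le hH
    have : (0 : ℝ) ≤ 2 / (n.choose (n / 2) : ℝ) := by positivity
    linarith
  exact mul_le_mul (le_max_left _ _) h3 (by positivity) (le_max_right _ _)

end GaloisCount


/-- For `n ≥ 9`, there are at most `O_{n,ε}(H^(n-1+e(n)+ε))` monic integer polynomials of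
degree `n` and height at most `H` whose splitting field over `ℚ` has Galois group isomorphic
neither to `Sₙ` nor to the alternating group `Aₙ`, where `e(n) = 2/binom(n, ⌊n/2⌋)`. -/
theorem count_polynomials_not_symmetric_nor_alternating (n : ℕ) (hn : 9 ≤ n)
    (ε : ℝ) (hε : 0 < ε) :
    ∃ C : ℝ, ∀ H : ℝ, 1 ≤ H →
      (Set.ncard {a : Fin n → ℤ |
          (∀ i, (|a i| : ℝ) ≤ H) ∧
          ¬ Nonempty ((X ^ n + ∑ i : Fin n, Polynomial.C ((a i : ℚ)) * X ^ (n - 1 - (i : ℕ)) :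
              Polynomial ℚ).Gal ≃* Equiv.Perm (Fin n)) ∧
          ¬ Nonempty ((X ^ n + ∑ i : Fin n, Polynomial.C ((a i : ℚ)) * X ^ (n - 1 - (i : ℕ)) :
              Polynomial ℚ).Gal ≃* alternatingGroup (Fin n))} : ℝ)
        ≤ C * H ^ ((n : ℝ) - 1 + 2 / (n.choose (n / 2) : ℝ) + ε) := by
  obtain ⟨K, hK⟩ := GaloisCount.main_count n hn ε hε
  refine ⟨K, fun H hH => ?_⟩
  refine le_trans (le_of_eq ?_) (hK H hH)
  congr 2
  ext a
  change _ ↔ ((∀ i, |(a i : ℝ)| ≤ H) ∧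
    ¬ Nonempty (((GaloisCount.fpoly n a).map (Int.castRingHom ℚ)).Gal ≃* Equiv.Perm (Fin n)) ∧
    ¬ Nonempty (((GaloisCount.fpoly n a).map (Int.castRingHom ℚ)).Gal ≃* alternatingGroup (Fin n)))
  rw [GaloisCount.fpoly_map]
  exact Iff.rfl
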